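/- arXiv:0803.0134 — 4 statements merged into one kernel-verified Lean document; each statement's English description precedes it below -/
import Mathlib

section
/- Let G₀ be a connected cubic pseudo-graph, and let G be obtained from G₀ by subdividing each edge e exactly k(e) times, where k(e) ≥ 1 for every loop e and k(e) ≥ 2 for every non-loop edge e. Then ν₂(G) ≥ (5/6)·|V(G)|. -/
structure Multigraph where
  V : Type
  E : Type
  fintypeV : Fintype V
  decEqV : DecidableEq V
  fintypeE : Fintype E
  decEqE : DecidableEq E
  ends : E → Sym2 V

attribute [instance] Multigraph.fintypeV Multigraph.decEqV Multigraph.fintypeE Multigraph.decEqE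

namespace Multigraph

/-- `e` is a loop if both of its endpoints coincide. -/
def IsLoop (G : Multigraph) (e : G.E) : Prop := (G.ends e).IsDiag

/-- A loopless multigraph. -/
def Loopless (G : Multigraph) : Prop := ∀ e, ¬ G.IsLoop e

/-- Degree of a vertex: loops count twice. -/
def deg (G : Multigraph) (v : G.V) : ℕ :=
  ∑ e : G.E, (if G.ends e = Sym2.diag v then 2 else if v ∈ G.ends e then 1 else 0)

/-- Adjacency via some edge. -/
def Adj (G : Multigraph) (u v : G.V) : Prop := ∃ e, G.ends e = s(u, v)

/-- Connectivity. -/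
def Connected (G : Multigraph) : Prop := ∀ u v : G.V, Relation.ReflTransGen G.Adj u v

/-- A matching: a set of non-loop edges no two of which share an endpoint. -/
def IsMatching (G : Multigraph) (M : Finset G.E) : Prop :=
  (∀ e ∈ M, ¬ G.IsLoop e) ∧
  ∀ e ∈ M, ∀ f ∈ M, e ≠ f → ∀ v : G.V, v ∈ G.ends e → v ∉ G.ends f

/-- A maximum matching. -/
def IsMaximumMatching (G : Multigraph) (M : Finset G.E) : Prop :=
  G.IsMatching M ∧ ∀ M' : Finset G.E, G.IsMatching M' → M'.card ≤ M.card

/-- `v` is saturated by `M`. -/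
def Saturated (G : Multigraph) (M : Finset G.E) (v : G.V) : Prop :=
  ∃ e ∈ M, v ∈ G.ends e

/-- Size of a maximum matching. -/
noncomputable def nu1 (G : Multigraph) : ℕ :=
  sSup {m | ∃ M : Finset G.E, G.IsMatching M ∧ M.card = m}

/-- Max number of edges coverable by two disjoint matchings. -/
noncomputable def nu2 (G : Multigraph) : ℕ :=
  sSup {m | ∃ H H' : Finset G.E, G.IsMatching H ∧ G.IsMatching H' ∧
    Disjoint H H' ∧ H.card + H'.card = m}

/-- Max number of edges coverable by three pairwise disjoint matchings. -/
noncomputable def nu3 (G : Multigraph) : ℕ :=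
  sSup {m | ∃ H₁ H₂ H₃ : Finset G.E, G.IsMatching H₁ ∧ G.IsMatching H₂ ∧ G.IsMatching H₃ ∧
    Disjoint H₁ H₂ ∧ Disjoint H₁ H₃ ∧ Disjoint H₂ H₃ ∧ H₁.card + H₂.card + H₃.card = m}

/-- Subdividing the edge `e`, with endpoints `u`, `v`, once: replace it by a path `u - w - v`
through a new vertex `w`. -/
def subdivideOnce (G : Multigraph) (e : G.E) (u v : G.V) : Multigraph where
  V := G.V ⊕ Unit
  E := {f : G.E // f ≠ e} ⊕ Bool
  fintypeV := inferInstance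
  decEqV := inferInstance
  fintypeE := inferInstance
  decEqE := inferInstance
  ends := fun f =>
    match f with
    | Sum.inl ⟨f, _⟩ => (G.ends f).map Sum.inl
    | Sum.inr true => s(Sum.inl u, Sum.inr ())
    | Sum.inr false => s(Sum.inl v, Sum.inr ())

/-- Subdividing every edge `e` exactly `k e` times, where `fst`/`snd` pick out the endpoints
of every edge. The edge `e` is replaced by the path
`fst e, (e,0), (e,1), …, (e, k e - 1), snd e` of length `k e + 1`. -/
def subdivide (G : Multigraph) (fst snd : G.E → G.V) (k : G.E → ℕ) : Multigraph where
  V := G.V ⊕ (Σ e : G.E, Fin (k e))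
  E := Σ e : G.E, Fin (k e + 1)
  fintypeV := inferInstance
  decEqV := inferInstance
  fintypeE := inferInstance
  decEqE := inferInstance
  ends := fun f =>
    s( if h : f.2.val = 0 then Sum.inl (fst f.1)
       else Sum.inr ⟨f.1, ⟨f.2.val - 1, by omega⟩⟩,
       if h : f.2.val = k f.1 then Sum.inl (snd f.1)
       else Sum.inr ⟨f.1, ⟨f.2.val, by have := f.2.isLt; omega⟩⟩ )



section Aux

set_option linter.unusedSectionVars false

variable {V E : Type} [DecidableEq V] [DecidableEq E]

/-- The opposite half-edge. -/
def hopp (h : E × Bool) : E × Bool := (h.1, !h.2)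

lemma hopp_hopp (h : E × Bool) : hopp (hopp h) = h := by simp [hopp]

lemma hopp_ne (h : E × Bool) : hopp h ≠ h := by
  intro H
  have := congrArg Prod.snd H
  simp [hopp] at this

/-- Every vertex carries exactly three half-edges. -/
def HCubic (base : E × Bool → V) : Prop :=
  ∀ v, ∃ h1 h2 h3 : E × Bool, h1 ≠ h2 ∧ h1 ≠ h3 ∧ h2 ≠ h3 ∧
    ∀ h, base h = v ↔ (h = h1 ∨ h = h2 ∨ h = h3)

/-- Half-edge colourings that are valid on the vertices in `S`. -/
def HGood (base : E × Bool → V) (p : E → Bool) (S : Finset V)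
    (c : E × Bool → Option Bool) : Prop :=
  (∀ h h', base h ∈ S → base h = base h' → c h = c h' → h = h') ∧
  (∀ h, base h ∈ S → base (hopp h) ∈ S → ∀ a b, c h = some a → c (hopp h) = some b →
    b = xor a (p h.1))

lemma HCubic.split {base : E × Bool → V} (hc : HCubic base) (h1 : E × Bool) :
    ∃ h2 h3 : E × Bool, h1 ≠ h2 ∧ h1 ≠ h3 ∧ h2 ≠ h3 ∧ hopp h1 ≠ h3 ∧
    ∀ h, base h = base h1 ↔ (h = h1 ∨ h = h2 ∨ h = h3) := by
  have key : ∃ h2 h3 : E × Bool, h1 ≠ h2 ∧ h1 ≠ h3 ∧ h2 ≠ h3 ∧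
    ∀ h, base h = base h1 ↔ (h = h1 ∨ h = h2 ∨ h = h3) := by
    obtain ⟨a, b, d, hab, had, hbd, H⟩ := hc (base h1)
    rcases (H h1).1 rfl with rfl | rfl | rfl
    · exact ⟨b, d, hab, had, hbd, H⟩
    · exact ⟨a, d, hab.symm, hbd, had, fun h => by rw [H]; tauto⟩
    · exact ⟨a, b, had.symm, hbd.symm, hab, fun h => by rw [H]; tauto⟩
  obtain ⟨h2, h3, h12, h13, h23, H⟩ := key
  by_cases h : hopp h1 = h3
  · exact ⟨h3, h2, h13, h12, h23.symm, fun hh => h23 (hh.symm.trans h), fun h => by rw [H]; tauto⟩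
  · exact ⟨h2, h3, h12, h13, h23, h, H⟩

lemma HGood.extend {base : E × Bool → V} (hc : HCubic base) {p : E → Bool} {S : Finset V}
    {c : E × Bool → Option Bool} (hg : HGood base p S c) (h1 : E × Bool) (hv : base h1 ∉ S)
    (hfree : base (hopp h1) ∉ S ∨ c (hopp h1) = none) :
    ∃ c', HGood base p (insert (base h1) S) c' ∧ ∀ h, base h ∈ S → c' h = c h := by
  obtain ⟨h2, h3, h12, h13, h23, ho, H⟩ := hc.split h1
  obtain ⟨d, hd⟩ : ∃ d : Bool, ∀ a, c (hopp h3) = some a → a = xor d (p h3.1) := by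
    cases hh : c (hopp h3) with
    | none => exact ⟨true, by simp⟩
    | some a => exact ⟨xor a (p h3.1), by simp⟩
  have b2 : base h2 = base h1 := (H h2).2 (by tauto)
  have b3 : base h3 = base h1 := (H h3).2 (by tauto)
  let c' : E × Bool → Option Bool := fun h =>
    if h = h2 then none else if h = h3 then some d else if h = h1 then some (!d) else c h
  have e1 : c' h1 = some (!d) := by simp [c', h12, h13]
  have e2 : c' h2 = none := by simp [c']
  have e3 : c' h3 = some d := by simp [c', h23.symm]
  have e4 : ∀ h, base h ≠ base h1 → c' h = c h := by
    intro h hh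
    rw [ne_eq, H] at hh
    push Not at hh
    simp [c', hh.1, hh.2.1, hh.2.2]
  have e5 : ∀ h, base h ∈ S → c' h = c h := fun h hh => e4 h (fun h' => hv (h' ▸ hh))
  have sym : ∀ h, (∀ a b, c' h = some a → c' (hopp h) = some b → b = xor a (p h.1)) →
      (∀ a b, c' (hopp h) = some a → c' h = some b → b = xor a (p h.1)) := by
    intro h H' a b ha hb
    have := H' b a hb ha
    subst this
    simp
  have k1 : base (hopp h1) ∈ insert (base h1) S →
      ∀ a b, c' h1 = some a → c' (hopp h1) = some b → b = xor a (p h1.1) := by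
    intro hm a b ha hb
    exfalso
    rcases Finset.mem_insert.1 hm with hm | hm
    · rcases (H _).1 hm with h | h | h
      · exact hopp_ne _ h
      · rw [h, e2] at hb; simp at hb
      · exact ho h
    · rw [e5 _ hm] at hb
      rcases hfree with h | h
      · exact h hm
      · rw [h] at hb; simp at hb
  have k2 : ∀ a b, c' h2 = some a → c' (hopp h2) = some b → b = xor a (p h2.1) := by
    intro a b ha; rw [e2] at ha; simp at ha
  have k3 : base (hopp h3) ∈ insert (base h1) S →
      ∀ a b, c' h3 = some a → c' (hopp h3) = some b → b = xor a (p h3.1) := by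
    intro hm a b ha hb
    rcases Finset.mem_insert.1 hm with hm | hm
    · exfalso
      rcases (H _).1 hm with h | h | h
      · exact ho (by rw [← h, hopp_hopp])
      · rw [h, e2] at hb; simp at hb
      · exact hopp_ne _ h
    · rw [e5 _ hm] at hb
      rw [e3] at ha
      obtain rfl := Option.some.inj ha
      exact hd _ hb
  have K : ∀ h, base h = base h1 → base (hopp h) ∈ insert (base h1) S →
      ∀ a b, c' h = some a → c' (hopp h) = some b → b = xor a (p h.1) := by
    intro h hb
    rcases (H h).1 hb with rfl | rfl | rfl
    · exact k1
    · exact fun _ => k2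
    · exact k3
  refine ⟨c', ⟨?_, ?_⟩, e5⟩
  · intro h h' hm hbb hcc
    rcases Finset.mem_insert.1 hm with hm | hm
    · rcases (H h).1 hm with rfl | rfl | rfl <;>
        rcases (H h').1 (hbb.symm.trans hm) with rfl | rfl | rfl <;>
        first | rfl | (simp [e1, e2, e3] at hcc)
    · rw [e5 _ hm, e5 _ (hbb ▸ hm)] at hcc
      exact hg.1 h h' hm hbb hcc
  · intro h hm hm'
    rcases Finset.mem_insert.1 hm with hb | hb
    · exact K h hb hm'
    · rcases Finset.mem_insert.1 hm' with hb' | hb'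
      · have := sym (hopp h) (K (hopp h) hb' (by rwa [hopp_hopp]))
        rw [hopp_hopp] at this
        exact this
      · rw [e5 _ hb, e5 _ hb']
        exact hg.2 h hb hb'

lemma HGood.extend_order {base : E × Bool → V} (hc : HCubic base) {p : E → Bool} {S : Finset V}
    {c : E × Bool → Option Bool} (hg : HGood base p S c) (ρ : V → ℕ) (T : Finset V)
    (hT : ∀ v ∈ T, v ∉ S ∧ ∃ h, base h = v ∧ base (hopp h) ∉ S ∧ ρ (base (hopp h)) < ρ v) :
    ∃ c', HGood base p (S ∪ T) c' ∧ ∀ h, base h ∈ S → c' h = c h := by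
  induction T using Finset.induction_on_max_value (fun v => OrderDual.toDual (ρ v)) with
  | empty => exact ⟨c, by simpa using hg, fun _ _ => rfl⟩
  | insert a s has hmax ih =>
    obtain ⟨c1, hg1, h1⟩ := ih (fun v hv => hT v (Finset.mem_insert_of_mem hv))
    obtain ⟨haS, h, rfl, hS, hlt⟩ := hT a (Finset.mem_insert_self _ _)
    obtain ⟨c2, hg2, h2⟩ := hg1.extend hc h (by simp [haS, has]) (Or.inl (by
      intro hm
      rcases Finset.mem_union.1 hm with hm | hm
      · exact hS hm
      · have := hmax _ hm
        rw [OrderDual.toDual_le_toDual] at this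
        omega))
    refine ⟨c2, by rwa [Finset.union_insert], fun h' hh' => ?_⟩
    rw [h2 _ (Finset.mem_union_left _ hh'), h1 _ hh']

lemma exists_closer {Γ : SimpleGraph V} (hΓ : Γ.Connected) (r v : V) (hv : v ≠ r) :
    ∃ w, Γ.Adj v w ∧ Γ.dist w r < Γ.dist v r := by
  obtain ⟨q, hq⟩ := (hΓ.preconnected v r).exists_walk_length_eq_dist
  cases q with
  | nil => exact absurd rfl hv
  | cons h q' =>
    refine ⟨_, h, ?_⟩
    have := SimpleGraph.dist_le q'
    simp at hq
    omega

/-- Underlying simple graph. -/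
def HGraph (base : E × Bool → V) : SimpleGraph V where
  Adj u v := u ≠ v ∧ ∃ h, base h = u ∧ base (hopp h) = v
  symm := ⟨by
    rintro u v ⟨hne, h, hu, hv⟩
    exact ⟨hne.symm, hopp h, hv, by rwa [hopp_hopp]⟩⟩
  loopless := ⟨fun u h => h.1 rfl⟩

lemma exists_hgood [Fintype V] {base : E × Bool → V} (hc : HCubic base) (p : E → Bool)
    (hconn : (HGraph base).Connected) : ∃ c, HGood base p Finset.univ c := by
  by_cases hl : ∃ h, base (hopp h) = base h
  · obtain ⟨h0, hh0⟩ := hl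
    have g0 : HGood base p ∅ (fun _ => none) := ⟨by simp, by simp⟩
    obtain ⟨c1, g1, -⟩ := g0.extend_order hc (fun v => (HGraph base).dist v (base h0))
      (Finset.univ.erase (base h0)) (by
        intro v hv
        obtain ⟨w, ⟨_, h, hb, rfl⟩, hlt⟩ := exists_closer hconn (base h0) v (Finset.ne_of_mem_erase hv)
        exact ⟨by simp, h, hb, by simp, hlt⟩)
    obtain ⟨c2, g2, -⟩ := g1.extend hc h0 (by simp) (Or.inl (by simp [hh0]))
    refine ⟨c2, ?_⟩
    convert g2
    ext v
    simp
  · push Not at hl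
    obtain ⟨v0⟩ := hconn.nonempty
    obtain ⟨x0, -⟩ := hc v0
    have hne : Nontrivial V := ⟨⟨_, _, hl x0⟩⟩
    obtain ⟨v1, hv1⟩ := hconn.exists_connected_induce_compl_singleton_of_finite_nontrivial
    obtain ⟨h1, _, _, _, _, _, hh1⟩ := hc v1
    have hb1 : base h1 = v1 := (hh1 h1).2 (Or.inl rfl)
    clear hh1
    subst hb1
    obtain ⟨h2, h3, h12, h13, h23, ho, H⟩ := hc.split h1
    have g0 : HGood base p {base h1}
        (fun h => if h = h1 then none else if h = h2 then some true else some false) := by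
      constructor
      · intro h h' hm hbb hcc
        rw [Finset.mem_singleton] at hm
        rcases (H h).1 hm with rfl | rfl | rfl <;>
          rcases (H h').1 (hbb.symm.trans hm) with rfl | rfl | rfl <;>
          first | rfl | (simp [h12, h13, h23, h12.symm, h13.symm, h23.symm] at hcc)
      · intro h hm hm'
        rw [Finset.mem_singleton] at hm hm'
        exact absurd (hm'.trans hm.symm) (hl h)
    have hr : base (hopp h1) ≠ base h1 := hl h1
    let Γ := (HGraph base).induce ({base h1}ᶜ : Set V)
    let r : ({base h1}ᶜ : Set V) := ⟨base (hopp h1), hr⟩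
    obtain ⟨c1, g1, e1⟩ := g0.extend_order hc
      (fun v => if h : v ≠ base h1 then Γ.dist ⟨v, h⟩ r else 0)
      ((Finset.univ.erase (base h1)).erase (base (hopp h1))) (by
        intro v hv
        simp only [Finset.mem_erase, Finset.mem_univ, and_true] at hv
        obtain ⟨w, hadj, hlt⟩ := exists_closer hv1 r ⟨v, hv.2⟩ (by
          intro h; exact hv.1 (congrArg Subtype.val h))
        obtain ⟨w, hw⟩ := w
        obtain ⟨_, h, hb, rfl⟩ := hadj
        have hw' : base (hopp h) ≠ base h1 := hw
        refine ⟨by simp [hv.2], h, hb, by simpa using hw', ?_⟩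
        simp only [dif_pos hw', dif_pos hv.2]
        exact hlt)
    obtain ⟨c2, g2, -⟩ := g1.extend hc (hopp h1) (by simp [hr]) (Or.inr (by
      rw [hopp_hopp, e1 _ (by simp)]; simp))
    refine ⟨c2, ?_⟩
    convert g2
    ext v
    simp
    tauto

end Aux

/-- Base vertex of a half-edge. -/
def hbase {V E : Type} (fst snd : E → V) (h : E × Bool) : V := if h.2 then fst h.1 else snd h.1

lemma card_hbase (G₀ : Multigraph) (fst snd : G₀.E → G₀.V)
    (hends : ∀ e : G₀.E, G₀.ends e = s(fst e, snd e)) (hcubic : ∀ v : G₀.V, G₀.deg v = 3)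
    (v : G₀.V) :
    (Finset.univ.filter (fun h : G₀.E × Bool => hbase fst snd h = v)).card = 3 := by
  rw [← hcubic v, Finset.card_filter, Fintype.sum_prod_type]
  unfold deg
  refine Finset.sum_congr rfl fun e _ => ?_
  rw [Fintype.sum_bool, hends]
  simp only [hbase, Sym2.diag, Sym2.mem_iff, Sym2.eq_iff]
  by_cases h1 : fst e = v <;> by_cases h2 : snd e = v <;>
    simp [h1, h2, eq_comm (a := v)]

lemma hcubic_hbase (G₀ : Multigraph) (fst snd : G₀.E → G₀.V)
    (hends : ∀ e : G₀.E, G₀.ends e = s(fst e, snd e)) (hcubic : ∀ v : G₀.V, G₀.deg v = 3) :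
    HCubic (hbase fst snd) := by
  intro v
  obtain ⟨a, b, d, hab, had, hbd, H⟩ := Finset.card_eq_three.1 (card_hbase G₀ fst snd hends hcubic v)
  refine ⟨a, b, d, hab, had, hbd, fun h => ?_⟩
  have : h ∈ Finset.univ.filter (fun h : G₀.E × Bool => hbase fst snd h = v) ↔
    h ∈ ({a, b, d} : Finset _) := by rw [H]
  simpa using this

lemma hgraph_connected (G₀ : Multigraph) (fst snd : G₀.E → G₀.V)
    (hends : ∀ e : G₀.E, G₀.ends e = s(fst e, snd e))
    (hconn : G₀.Connected) [Nonempty G₀.V] : (HGraph (hbase fst snd)).Connected := by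
  refine ⟨fun u v => ?_⟩
  induction hconn u v with
  | refl => exact SimpleGraph.Reachable.refl _
  | @tail b d _ h ih =>
    refine ih.trans ?_
    obtain ⟨e, he⟩ := h
    by_cases hbd : b = d
    · rw [hbd]
    · apply SimpleGraph.Adj.reachable
      rw [hends, Sym2.eq_iff] at he
      rcases he with ⟨h1, h2⟩ | ⟨h1, h2⟩
      · exact ⟨hbd, (e, true), by simp [hbase, h1], by simp [hbase, hopp, h2]⟩
      · exact ⟨hbd, (e, false), by simp [hbase, h2], by simp [hbase, hopp, h1]⟩

/-- The end edge of the subdivided graph corresponding to a half-edge. -/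
def hpos {E : Type} (k : E → ℕ) (h : E × Bool) : Σ e : E, Fin (k e + 1) :=
  ⟨h.1, if h.2 then 0 else Fin.last _⟩

lemma inl_mem_ends (G₀ : Multigraph) (fst snd : G₀.E → G₀.V) (k : G₀.E → ℕ)
    (x : Σ e : G₀.E, Fin (k e + 1)) (w : G₀.V)
    (h : (Sum.inl w : G₀.V ⊕ (Σ e : G₀.E, Fin (k e))) ∈ (G₀.subdivide fst snd k).ends x) :
    ∃ h, hpos k h = x ∧ hbase fst snd h = w := by
  obtain ⟨e, i⟩ := x
  simp only [subdivide] at h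
  rcases Sym2.mem_iff.1 h with h | h
  · split_ifs at h with h0
    · refine ⟨(e, true), ?_, ?_⟩
      · simp only [hpos, if_true]
        congr 1
        exact Fin.ext (by simpa using h0.symm)
      · simpa [hbase] using (Sum.inl.inj h).symm
  · split_ifs at h with h0
    · refine ⟨(e, false), ?_, ?_⟩
      · simp only [hpos]
        congr 1
        exact Fin.ext (by simpa using h0.symm)
      · simpa [hbase] using (Sum.inl.inj h).symm

lemma inr_mem_ends (G₀ : Multigraph) (fst snd : G₀.E → G₀.V) (k : G₀.E → ℕ)
    (x : Σ e : G₀.E, Fin (k e + 1)) (w : Σ e : G₀.E, Fin (k e))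
    (h : (Sum.inr w : G₀.V ⊕ (Σ e : G₀.E, Fin (k e))) ∈ (G₀.subdivide fst snd k).ends x) :
    w.1 = x.1 ∧ (x.2.val = w.2.val + 1 ∨ x.2.val = w.2.val) := by
  obtain ⟨e, i⟩ := x
  simp only [subdivide] at h
  rcases Sym2.mem_iff.1 h with h | h
  · split_ifs at h with h0
    obtain rfl := Sum.inr.inj h
    refine ⟨rfl, Or.inl ?_⟩
    change i.val ≠ 0 at h0
    change i.val = i.val - 1 + 1
    omega
  · split_ifs at h with h0
    obtain rfl := Sum.inr.inj h
    exact ⟨rfl, Or.inr rfl⟩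

lemma subdivide_not_loop (G₀ : Multigraph) (fst snd : G₀.E → G₀.V) (k : G₀.E → ℕ)
    (hk : ∀ e, 1 ≤ k e) (x : Σ e : G₀.E, Fin (k e + 1)) :
    ¬ (G₀.subdivide fst snd k).IsLoop x := by
  obtain ⟨e, i⟩ := x
  intro h
  simp only [IsLoop, subdivide, Sym2.mk_isDiag_iff] at h
  have := hk e
  split_ifs at h with h1 h2 h2
  · omega
  · have h3 := Sum.inr.inj h
    simp only [Sigma.mk.injEq, heq_eq_eq, true_and, Fin.mk.injEq] at h3
    omega

lemma nu2_ge (G₀ : Multigraph) (fst snd : G₀.E → G₀.V) (k : G₀.E → ℕ)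
    (hk : ∀ e, 1 ≤ k e) (c : G₀.E × Bool → Option Bool)
    (hc : HGood (hbase fst snd) (fun e => (k e).bodd) Finset.univ c) :
    ∑ e, (k e + 1) ≤ (G₀.subdivide fst snd k).nu2 + Fintype.card G₀.V := by
  classical
  let N : Finset (G₀.E × Bool) := Finset.univ.filter (fun h => c h = none)
  have hN : N.card ≤ Fintype.card G₀.V := by
    refine Finset.card_le_card_of_injOn (hbase fst snd) (fun _ _ => Finset.mem_univ _) ?_
    intro h hh h' hh' hb
    simp only [N, Finset.coe_filter, Finset.mem_univ, true_and, Set.mem_ofPred_eq] at hh hh'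
    exact hc.1 h h' (Finset.mem_univ _) hb (hh.trans hh'.symm)
  let R : Finset (Σ e : G₀.E, Fin (k e + 1)) := N.image (hpos k)
  have hR : R.card ≤ Fintype.card G₀.V := Finset.card_image_le.trans hN
  have hβ : ∀ e, ∃ β : Bool, (∀ a, c (e, true) = some a → β = a) ∧
      (∀ a, c (e, false) = some a → xor β (k e).bodd = a) := by
    intro e
    have h2 := hc.2 (e, true) (Finset.mem_univ _) (Finset.mem_univ _)
    simp only [hopp, Bool.not_true] at h2
    cases ht : c (e, true) with
    | some a => exact ⟨a, by simp, fun b hb => (h2 a b ht hb).symm⟩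
    | none =>
      cases hf : c (e, false) with
      | some b => exact ⟨xor b (k e).bodd, by simp, by simp⟩
      | none => exact ⟨true, by simp, by simp⟩
  choose β hβ1 hβ2 using hβ
  let clr : (Σ e : G₀.E, Fin (k e + 1)) → Bool := fun x => xor (β x.1) (x.2.val.bodd)
  have hclr : ∀ h a, c h = some a → clr (hpos k h) = a := by
    rintro ⟨e, b⟩ a ha
    cases b with
    | true => simpa [clr, hpos] using hβ1 e a ha
    | false => simpa [clr, hpos] using hβ2 e a ha
  have hmatch : ∀ b : Bool, (G₀.subdivide fst snd k).IsMatching (Rᶜ.filter (fun x => clr x = b)) := by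
    intro b
    refine ⟨fun x _ => subdivide_not_loop G₀ fst snd k hk x, ?_⟩
    intro x hx y hy hxy v hvx hvy
    replace hx := Finset.mem_filter.1 hx
    replace hy := Finset.mem_filter.1 hy
    replace hx : x ∉ R ∧ clr x = b := ⟨Finset.mem_compl.1 hx.1, hx.2⟩
    replace hy : y ∉ R ∧ clr y = b := ⟨Finset.mem_compl.1 hy.1, hy.2⟩
    apply hxy
    rcases v with w | w
    · obtain ⟨h, rfl, hb⟩ := inl_mem_ends G₀ fst snd k x w hvx
      obtain ⟨h', rfl, hb'⟩ := inl_mem_ends G₀ fst snd k y w hvy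
      have key : ∀ h, hpos k h ∉ R → clr (hpos k h) = b → c h = some b := by
        intro h h1 h2
        cases hh : c h with
        | none => exact absurd (Finset.mem_image_of_mem _ (by simp [N, hh])) h1
        | some a => rw [← h2, hclr h a hh]
      rw [hc.1 h h' (Finset.mem_univ _) (hb.trans hb'.symm)
        ((key h hx.1 hx.2).trans (key h' hy.1 hy.2).symm)]
    · obtain ⟨h1, h2⟩ := inr_mem_ends G₀ fst snd k x w hvx
      obtain ⟨h3, h4⟩ := inr_mem_ends G₀ fst snd k y w hvy
      obtain ⟨e, i⟩ := x
      obtain ⟨e', j⟩ := y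
      obtain ⟨e'', l⟩ := w
      simp only at h1 h2 h3 h4
      subst h1
      subst h3
      have hcl := hx.2.trans hy.2.symm
      simp only [clr] at hcl
      have : i = j := by
        apply Fin.ext
        rcases h2 with h2 | h2 <;> rcases h4 with h4 | h4 <;> rw [h2, h4] <;>
          rw [h2, h4] at hcl <;> simp at hcl
      rw [this]
  have hcard : (Rᶜ.filter (fun x => clr x = true)).card + (Rᶜ.filter (fun x => clr x = false)).card
      = Rᶜ.card := by
    rw [← Finset.card_filter_add_card_filter_not (s := Rᶜ) (fun x => clr x = true)]
    simp
  have hle : Rᶜ.card ≤ (G₀.subdivide fst snd k).nu2 := by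
    unfold nu2
    apply le_csSup
    · refine ⟨Fintype.card (G₀.subdivide fst snd k).E + Fintype.card (G₀.subdivide fst snd k).E, ?_⟩
      rintro m ⟨H, H', -, -, -, rfl⟩
      exact Nat.add_le_add (Finset.card_le_univ _) (Finset.card_le_univ _)
    · refine ⟨_, _, hmatch true, hmatch false, ?_, hcard⟩
      rw [Finset.disjoint_left]
      intro x hx hy
      have hx' := (Finset.mem_filter.1 hx).2
      have hy' := (Finset.mem_filter.1 hy).2
      rw [hx'] at hy'
      simp at hy'
  have htot : Rᶜ.card + R.card = ∑ e, (k e + 1) := by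
    rw [Finset.card_compl_add_card, Fintype.card_sigma]
    simp
  omega

/-- If G is obtained from a connected cubic pseudo-graph G₀ by subdividing
each edge e exactly k(e) times, with k(e) ≥ 1 for loops and k(e) ≥ 2 for non-loop edges,
then ν₂(G) ≥ (5/6)·|V(G)|. -/
theorem nu2_subdivide_ge_five_sixths
    (G₀ : Multigraph) (fst snd : G₀.E → G₀.V)
    (hends : ∀ e : G₀.E, G₀.ends e = s(fst e, snd e))
    (hconn : G₀.Connected) (hcubic : ∀ v : G₀.V, G₀.deg v = 3)
    (k : G₀.E → ℕ)
    (hkloop : ∀ e : G₀.E, G₀.IsLoop e → 1 ≤ k e)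
    (hknonloop : ∀ e : G₀.E, ¬ G₀.IsLoop e → 2 ≤ k e) :
    6 * (G₀.subdivide fst snd k).nu2 ≥ 5 * Fintype.card (G₀.subdivide fst snd k).V := by
  have hcub := hcubic_hbase G₀ fst snd hends hcubic
  have hk : ∀ e, 1 ≤ k e := by
    intro e
    by_cases h : G₀.IsLoop e
    · exact hkloop e h
    · exact (by norm_num : 1 ≤ 2).trans (hknonloop e h)
  obtain ⟨c, hc⟩ : ∃ c, HGood (hbase fst snd) (fun e => (k e).bodd) Finset.univ c := by
    rcases isEmpty_or_nonempty G₀.V with hE | hE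
    · exact ⟨fun _ => none, fun h => isEmptyElim (hbase fst snd h),
        fun h => isEmptyElim (hbase fst snd h)⟩
    · exact exists_hgood hcub _ (hgraph_connected G₀ fst snd hends hconn)
  have h1 := nu2_ge G₀ fst snd k hk c hc
  have h2 : 2 * Fintype.card G₀.E = 3 * Fintype.card G₀.V := by
    have := Finset.card_eq_sum_card_fiberwise (s := (Finset.univ : Finset (G₀.E × Bool)))
      (t := Finset.univ) (f := hbase fst snd) (fun _ _ => Finset.mem_univ _)
    rw [Finset.sum_congr rfl (fun v _ => card_hbase G₀ fst snd hends hcubic v)] at this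
    simp at this
    omega
  classical
  have h3 : (Finset.univ.filter (fun e => G₀.IsLoop e)).card ≤ Fintype.card G₀.V := by
    refine Finset.card_le_card_of_injOn fst (fun _ _ => Finset.mem_univ _) ?_
    intro e he f hf hef
    simp only [Finset.coe_filter, Finset.mem_univ, true_and, Set.mem_ofPred_eq, IsLoop, hends,
      Sym2.mk_isDiag_iff] at he hf
    by_contra hne
    have hsub : ({(e, true), (e, false), (f, true), (f, false)} : Finset (G₀.E × Bool)) ⊆
        Finset.univ.filter (fun h : G₀.E × Bool => hbase fst snd h = fst e) := by
      intro h hh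
      simp only [Finset.mem_insert, Finset.mem_singleton] at hh
      rcases hh with rfl | rfl | rfl | rfl <;> simp [hbase, ← he, ← hf, hef]
    have := Finset.card_le_card hsub
    rw [card_hbase G₀ fst snd hends hcubic, Finset.card_insert_of_notMem (by simp [hne]),
      Finset.card_insert_of_notMem (by simp [hne]),
      Finset.card_insert_of_notMem (by simp), Finset.card_singleton] at this
    omega
  have h4 : 2 * Fintype.card G₀.E ≤ ∑ e, k e + (Finset.univ.filter (fun e => G₀.IsLoop e)).card := by
    rw [Finset.card_filter, ← Finset.sum_add_distrib]
    have : 2 * Fintype.card G₀.E = ∑ e : G₀.E, 2 := by simp [mul_comm]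
    rw [this]
    refine Finset.sum_le_sum fun e _ => ?_
    split_ifs with h
    · have := hkloop e h; omega
    · have := hknonloop e h; omega
  have h5 : Fintype.card (G₀.subdivide fst snd k).V = Fintype.card G₀.V + ∑ e, k e := by
    change Fintype.card (G₀.V ⊕ (Σ e : G₀.E, Fin (k e))) = _
    simp
  have h6 : ∑ e, (k e + 1) = ∑ e, k e + Fintype.card G₀.E := by
    simp [Finset.sum_add_distrib]
  omega

end Multigraph
end

section
/- Let G₀ be a connected cubic pseudo-graph, and let G be obtained from G₀ by subdividing each edge e exactly k(e) times, with k(e) ≥ 1 for loops and k(e) ≥ 2 for non-loop edges. Then the maximum matching of G satisfies ν₁(G) ≥ (3/7)·|V(G)|. -/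
namespace SubdivAux

theorem exists_max {N : Type} [Fintype N] [DecidableEq N] (Adj : N → N → Prop)
    (hs : ∀ x y, Adj x y → Adj y x) (hi : ∀ x, ¬ Adj x x) :
    ∃ p : N → N, (∀ x, p (p x) = x) ∧ (∀ x, p x ≠ x → Adj x (p x)) ∧
      (∀ x y, p x = x → p y = y → ¬ Adj x y) ∧
      (∀ w x y, p w ≠ w → p x = x → p y = y → Adj x w → Adj y (p w) → x = y) := by
  classical
  let S : Finset (N → N) := Finset.univ.filter
    (fun p => (∀ x, p (p x) = x) ∧ (∀ x, p x ≠ x → Adj x (p x)))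
  have hS : S.Nonempty := ⟨id, by simp [S]⟩
  obtain ⟨p, hp, hmin⟩ := Finset.exists_min_image S
    (fun p => (Finset.univ.filter (fun x => p x = x)).card) hS
  simp only [S, Finset.mem_filter, Finset.mem_univ, true_and] at hp hmin
  obtain ⟨h1, h2⟩ := hp
  refine ⟨p, h1, h2, ?_, ?_⟩
  · intro x y hx hy hxy
    have hne : x ≠ y := by rintro rfl; exact hi _ hxy
    let q : N → N := fun z => if z = x then y else if z = y then x else p z
    have hq := hmin q ⟨by
      intro z
      have : ∀ z, p z = x → z = x := fun z hz => by rw [← h1 z, hz, hx]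
      have : ∀ z, p z = y → z = y := fun z hz => by rw [← h1 z, hz, hy]
      simp only [q]; grind, by
      intro z hz
      simp only [q] at hz ⊢
      split_ifs with h h'
      · subst h; exact hxy
      · subst h'; exact hs _ _ hxy
      · apply h2; simpa [h, h'] using hz⟩
    have : (Finset.univ.filter (fun z => q z = z)) ⊂ (Finset.univ.filter (fun z => p z = z)) := by
      rw [Finset.ssubset_iff_of_subset]
      · exact ⟨x, by simp [hx], by simp [q, hne.symm]⟩
      · intro z; simp only [Finset.mem_filter, Finset.mem_univ, true_and, q]; grind
    have := Finset.card_lt_card this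
    omega
  · intro w x y hw hx hy hxw hyw
    by_contra hne
    have hxw' : x ≠ w := by rintro rfl; exact hw hx
    have hyw' : y ≠ w := by rintro rfl; exact hw hy
    have h3 : p (p w) ≠ p w := by rw [h1]; exact hw.symm
    have hxw2 : x ≠ p w := by rintro h; rw [← h] at h3; exact h3 hx
    have hyw2 : y ≠ p w := by rintro h; rw [← h] at h3; exact h3 hy
    let q : N → N := fun z => if z = x then w else if z = w then x else
      if z = p w then y else if z = y then p w else p z
    have hq := hmin q ⟨by
      intro z
      have a1 : ∀ z, p z = x → z = x := fun z hz => by rw [← h1 z, hz, hx]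
      have a2 : ∀ z, p z = y → z = y := fun z hz => by rw [← h1 z, hz, hy]
      have a3 : ∀ z, p z = w → z = p w := fun z hz => by rw [← h1 z, hz]
      have a4 : ∀ z, p z = p w → z = w := fun z hz => by rw [← h1 z, hz, h1]
      simp only [q]
      have := a1 z; have := a2 z; have := a3 z; have := a4 z; have := h1 z
      split_ifs <;> grind, by
      intro z hz
      simp only [q] at hz ⊢
      split_ifs with g1 g2 g3 g4
      · subst g1; exact hxw
      · subst g2; exact hs _ _ hxw
      · subst g3; exact hs _ _ hyw
      · subst g4; exact hyw
      · apply h2; simpa [g1, g2, g3, g4] using hz⟩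
    have : (Finset.univ.filter (fun z => q z = z)) ⊂ (Finset.univ.filter (fun z => p z = z)) := by
      rw [Finset.ssubset_iff_of_subset]
      · exact ⟨x, by simp [hx], by simp [q, hxw'.symm]⟩
      · intro z; simp only [Finset.mem_filter, Finset.mem_univ, true_and, q]; grind
    have := Finset.card_lt_card this
    omega

theorem card_path (k : ℕ) (a b : Bool) (hk : 1 ≤ k) :
    (Finset.univ.filter (fun i : Fin (k+1) =>
      (i.val % 2 = if a then 0 else 1) ∧ (b = true ∨ i.val ≠ k))).card
      = (k + a.toNat + b.toNat) / 2 := by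
  have key : ∀ m : ℕ, ∀ r : ℕ, r < 2 →
      ((Finset.range m).filter (fun i => i % 2 = r)).card = (m + 1 - r) / 2 := by
    intro m r hr
    induction m with
    | zero => simp; omega
    | succ m ih =>
      rw [Finset.range_add_one, Finset.filter_insert]
      split_ifs with h
      · rw [Finset.card_insert_of_notMem (by simp), ih]; omega
      · rw [ih]; omega
  have e1 : (Finset.univ.filter (fun i : Fin (k+1) =>
      (i.val % 2 = if a then 0 else 1) ∧ (b = true ∨ i.val ≠ k))).card
      = ((Finset.range (if b then k+1 else k)).filter
        (fun i => i % 2 = if a then 0 else 1)).card := by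
    rw [← Finset.card_map Fin.valEmbedding]
    congr 1
    ext i
    simp only [Finset.mem_map, Finset.mem_filter, Finset.mem_univ, true_and, Fin.valEmbedding_apply,
      Finset.mem_range]
    constructor
    · rintro ⟨j, ⟨h1, h2⟩, rfl⟩
      have := j.isLt
      refine ⟨?_, h1⟩
      cases b <;> simp at * <;> omega
    · rintro ⟨h1, h2⟩
      refine ⟨⟨i, by split_ifs at h1 <;> omega⟩, ⟨h2, ?_⟩, rfl⟩
      cases b
      · right; simp only [Bool.false_eq_true, if_false] at h1; simp only [ne_eq]; omega
      · left; rfl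
  rw [e1]
  cases a <;> cases b <;> simp only [Bool.toNat_true, Bool.toNat_false, if_true, Bool.false_eq_true, if_false] <;> rw [key _ _ (by norm_num)] <;> omega

end SubdivAux

namespace SubdivAux

/-- there is a loop at `v` that is subdivided an odd number of times -/
def OL {V E : Type} (f s : E → V) (k : E → ℕ) (v : V) : Prop :=
  ∃ e, f e = s e ∧ f e = v ∧ k e % 2 = 1

/-- The reduced graph: vertices and odd nonloop edges are nodes. -/
def HAdj {V E : Type} (f s : E → V) (k : E → ℕ) : V ⊕ E → V ⊕ E → Prop
  | Sum.inl u, Sum.inl v => u ≠ v ∧ ¬ OL f s k u ∧ ¬ OL f s k v ∧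
      ∃ e, k e % 2 = 0 ∧ ((f e = u ∧ s e = v) ∨ (f e = v ∧ s e = u))
  | Sum.inl u, Sum.inr e => ¬ OL f s k u ∧ k e % 2 = 1 ∧ f e ≠ s e ∧ (f e = u ∨ s e = u)
  | Sum.inr e, Sum.inl u => ¬ OL f s k u ∧ k e % 2 = 1 ∧ f e ≠ s e ∧ (f e = u ∨ s e = u)
  | Sum.inr _, Sum.inr _ => False

theorem HAdj_symm {V E : Type} (f s : E → V) (k : E → ℕ) (x y : V ⊕ E)
    (h : HAdj f s k x y) : HAdj f s k y x := by
  rcases x with x | x <;> rcases y with y | y <;> simp only [HAdj] at h ⊢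
  · obtain ⟨h1, h2, h3, e, h4, h5⟩ := h
    exact ⟨h1.symm, h3, h2, e, h4, h5.symm⟩
  · exact h
  · exact h

theorem HAdj_irrefl {V E : Type} (f s : E → V) (k : E → ℕ) (x : V ⊕ E) :
    ¬ HAdj f s k x x := by
  rcases x with x | x <;> simp [HAdj]

/-- choose an edge for every matched pair of vertices -/
theorem exists_used {V E : Type} (f s : E → V) (k : E → ℕ) (p : V ⊕ E → V ⊕ E)
    (hinv : ∀ x, p (p x) = x)
    (hadj : ∀ x, p x ≠ x → HAdj f s k x (p x)) :
    ∃ U : E → Prop,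
      (∀ e, U e → k e % 2 = 0 ∧ f e ≠ s e ∧ p (Sum.inl (f e)) = Sum.inl (s e)) ∧
      (∀ u v, p (Sum.inl u) = Sum.inl v → u ≠ v →
        ∃ e, U e ∧ ((f e = u ∧ s e = v) ∨ (f e = v ∧ s e = u))) ∧
      (∀ e e', U e → U e' → s(f e, s e) = s(f e', s e') → e = e') := by
  classical
  have hc : ∀ z : Sym2 V, ∃ o : Option E, ∀ e', k e' % 2 = 0 → s(f e', s e') = z →
      (p (Sum.inl (f e')) = Sum.inl (s e')) →
      ∃ e, o = some e ∧ k e % 2 = 0 ∧ s(f e, s e) = z ∧ p (Sum.inl (f e)) = Sum.inl (s e) := by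
    intro z
    by_cases h : ∃ e', k e' % 2 = 0 ∧ s(f e', s e') = z ∧ p (Sum.inl (f e')) = Sum.inl (s e')
    · obtain ⟨e, h1, h2, h3⟩ := h
      exact ⟨some e, fun _ _ _ _ => ⟨e, rfl, h1, h2, h3⟩⟩
    · exact ⟨none, fun e' h1 h2 h3 => absurd ⟨e', h1, h2, h3⟩ h⟩
  choose c hc using hc
  refine ⟨fun e => k e % 2 = 0 ∧ f e ≠ s e ∧ p (Sum.inl (f e)) = Sum.inl (s e) ∧
    c s(f e, s e) = some e, fun e h => ⟨h.1, h.2.1, h.2.2.1⟩, ?_, ?_⟩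
  · intro u v hp hne
    have hp' : p (Sum.inl v) = Sum.inl u := by rw [← hp, hinv]
    have h := hadj (Sum.inl u) (by rw [hp]; intro h; exact hne (Sum.inl.inj h).symm)
    rw [hp] at h
    obtain ⟨-, -, -, e', h1, h2⟩ := h
    have h3 : p (Sum.inl (f e')) = Sum.inl (s e') := by
      rcases h2 with ⟨a, b⟩ | ⟨a, b⟩ <;> rw [a, b]
      exacts [hp, hp']
    have hz : s(f e', s e') = s(u, v) := Sym2.eq_iff.2 h2
    obtain ⟨e, g1, g2, g3, g4⟩ := hc s(u, v) e' h1 hz h3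
    have g5 := Sym2.eq_iff.1 g3
    refine ⟨e, ⟨g2, ?_, g4, by rw [g3]; exact g1⟩, g5⟩
    rcases g5 with ⟨a, b⟩ | ⟨a, b⟩ <;> rw [a, b]
    exacts [hne, hne.symm]
  · rintro e e' ⟨-, -, -, h⟩ ⟨-, -, -, h'⟩ heq
    rw [heq, h'] at h
    simpa using h.symm

set_option maxHeartbeats 8000000 in
theorem core {V E : Type} [Fintype V] [DecidableEq V] [Fintype E] [DecidableEq E]
    (f s : E → V) (k : E → ℕ)
    (hdeg : ∀ v, ∑ e, ((if f e = v then (1:ℤ) else 0) + (if s e = v then 1 else 0)) = 3)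
    (hk1 : ∀ e, 1 ≤ k e) (hk2 : ∀ e, f e ≠ s e → 2 ≤ k e) :
    ∃ a b : E → Bool,
      (∀ e e', a e = true → a e' = true → f e = f e' → e = e') ∧
      (∀ e e', b e = true → b e' = true → s e = s e' → e = e') ∧
      (∀ e e', a e = true → b e' = true → f e ≠ s e') ∧
      3 * (Fintype.card V + ∑ e, k e) ≤ 7 * ∑ e, (k e + (a e).toNat + (b e).toNat) / 2 := by
  classical
  obtain ⟨p, hinv, hadj, hmax1, hmax2⟩ := exists_max (HAdj f s k) (HAdj_symm f s k) (HAdj_irrefl f s k)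
  obtain ⟨U, hU1, hU2, hU3⟩ := exists_used f s k p hinv hadj
  -- loop counts
  obtain ⟨P, hP⟩ : ∃ P : V → ℤ, P = fun v => ∑ e, if f e = s e ∧ f e = v ∧ k e % 2 = 0 then 1 else 0 := ⟨_, rfl⟩
  obtain ⟨Q, hQ⟩ : ∃ Q : V → ℤ, Q = fun v => ∑ e, if f e = s e ∧ f e = v ∧ k e % 2 = 1 then 1 else 0 := ⟨_, rfl⟩
  obtain ⟨I, hI⟩ : ∃ I : E → V → ℤ, I = fun e v => if f e = s e then 0 else
    (if f e = v then (1:ℤ) else 0) + (if s e = v then 1 else 0) := ⟨_, rfl⟩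
  obtain ⟨nl, hnl⟩ : ∃ nl : V → ℤ, nl = fun v => ∑ e, I e v := ⟨_, rfl⟩
  have hP0 : ∀ v, 0 ≤ P v := by
    intro v; rw [hP]; exact Finset.sum_nonneg (fun e _ => by split_ifs <;> norm_num)
  have hQ0 : ∀ v, 0 ≤ Q v := by
    intro v; rw [hQ]; exact Finset.sum_nonneg (fun e _ => by split_ifs <;> norm_num)
  have hI0 : ∀ e v, 0 ≤ I e v := by
    intro e v; rw [hI]; dsimp only; split_ifs <;> norm_num
  have hnl0 : ∀ v, 0 ≤ nl v := by
    intro v; rw [hnl]; exact Finset.sum_nonneg (fun e _ => hI0 e v)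
  have hdeg' : ∀ v, nl v + 2 * P v + 2 * Q v = 3 := by
    intro v
    rw [← hdeg v, hnl, hP, hQ]
    simp only [Finset.mul_sum, ← Finset.sum_add_distrib]
    refine Finset.sum_congr rfl (fun e _ => ?_)
    rw [hI]; dsimp only
    by_cases hl : f e = s e
    · rw [if_pos hl, ← hl]
      by_cases hv : f e = v
      · rcases Nat.mod_two_eq_zero_or_one (k e) with h | h
        · rw [if_pos ⟨rfl, hv, h⟩, if_neg (fun h' => by omega), if_pos hv]; norm_num
        · rw [if_neg (fun h' => by omega), if_pos ⟨rfl, hv, h⟩, if_pos hv]; norm_num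
      · rw [if_neg (fun h' => hv h'.2.1), if_neg (fun h' => hv h'.2.1), if_neg hv]; norm_num
    · simp [hl]
  have hOLQ : ∀ v, OL f s k v → Q v = 1 ∧ P v = 0 ∧ nl v = 1 := by
    rintro v ⟨e, h1, h2, h3⟩
    have : 1 ≤ Q v := by
      rw [hQ]
      refine le_trans ?_ (Finset.single_le_sum (f := fun e => if f e = s e ∧ f e = v ∧ k e % 2 = 1 then (1:ℤ) else 0) (fun e _ => by split_ifs <;> norm_num) (Finset.mem_univ e))
      rw [if_pos ⟨h1, h2, h3⟩]
    have := hdeg' v; have := hP0 v; have := hnl0 v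
    omega
  have hnOL : ∀ v, ¬ OL f s k v → Q v = 0 ∧ ((P v = 0 ∧ nl v = 3) ∨ (P v = 1 ∧ nl v = 1)) := by
    intro v h
    have : Q v = 0 := by
      rw [hQ]
      refine Finset.sum_eq_zero (fun e _ => ?_)
      rw [if_neg (fun hh => h ⟨e, hh⟩)]
    have := hdeg' v; have := hP0 v; have := hnl0 v
    omega
  have hIpos : ∀ e v, f e ≠ s e → (f e = v ∨ s e = v) → I e v = 1 := by
    intro e v h1 h2
    rw [hI]; dsimp only; rw [if_neg h1]
    rcases h2 with h2 | h2
    · rw [if_pos h2, if_neg (fun h => h1 (h2.trans h.symm))]; rfl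
    · rw [if_pos h2, if_neg (fun h => h1 (h.trans h2.symm))]; rfl
  have huniq : ∀ z e e', P z = 1 → f e ≠ s e → f e' ≠ s e' → (f e = z ∨ s e = z) →
      (f e' = z ∨ s e' = z) → e = e' := by
    intro z e e' hz h1 h2 h3 h4
    by_contra hne
    have : ∑ x ∈ ({e, e'} : Finset E), I x z ≤ ∑ x, I x z :=
      Finset.sum_le_sum_of_subset_of_nonneg (Finset.subset_univ _) (fun x _ _ => hI0 x z)
    rw [Finset.sum_pair hne, hIpos e z h1 h3, hIpos e' z h2 h4] at this
    have h5 := hdeg' z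
    have h6 := hQ0 z
    simp only [hnl] at h5
    omega
  -- unmatched indicators
  obtain ⟨α, hα⟩ : ∃ α : V → ℤ, α = fun v => if p (Sum.inl v) = Sum.inl v ∧ ¬ OL f s k v then 1 else 0 := ⟨_, rfl⟩
  obtain ⟨β, hβ⟩ : ∃ β : E → ℤ, β = fun e => if p (Sum.inr e) = Sum.inr e ∧ k e % 2 = 1 ∧ f e ≠ s e then 1 else 0 := ⟨_, rfl⟩
  have hα01 : ∀ v, α v = 0 ∨ α v = 1 := by
    intro v; rw [hα]; dsimp only; split_ifs <;> simp
  have hβ01 : ∀ v, β v = 0 ∨ β v = 1 := by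
    intro v; rw [hβ]; dsimp only; split_ifs <;> simp
  have hα1 : ∀ v, α v = 1 ↔ (p (Sum.inl v) = Sum.inl v ∧ ¬ OL f s k v) := by
    intro v; rw [hα]; dsimp only; split_ifs with h <;> simp [h]
  have hβ1 : ∀ e, β e = 1 ↔ (p (Sum.inr e) = Sum.inr e ∧ k e % 2 = 1 ∧ f e ≠ s e) := by
    intro v; rw [hβ]; dsimp only; split_ifs with h
    · exact ⟨fun _ => h, fun _ => rfl⟩
    · exact ⟨fun h' => by norm_num at h', fun h' => absurd h' h⟩
  have hαP : ∀ v, α v = 0 ∨ (α v = 1 ∧ (P v = 0 ∨ P v = 1)) := by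
    intro v
    rcases hα01 v with h | h
    · exact Or.inl h
    · right; refine ⟨h, ?_⟩
      have := hnOL v ((hα1 v).1 h).2
      omega
  -- demands
  obtain ⟨δ, hδ⟩ : ∃ δ : E → V → ℤ, δ = fun e z => if f e = s e then 0 else
    if k e % 2 = 1 then 2 * β e else 2 * (α z * P z) := ⟨_, rfl⟩
  obtain ⟨T, hT⟩ : ∃ T : E → V → ℤ, T = fun e w => (if f e = w then δ e (s e) else 0) +
    (if s e = w then δ e (f e) else 0) := ⟨_, rfl⟩
  obtain ⟨D, hD⟩ : ∃ D : V → ℤ, D = fun w => ∑ e, T e w := ⟨_, rfl⟩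
  have hδ02 : ∀ e z, δ e z = 0 ∨ δ e z = 2 := by
    intro e z; rw [hδ]; dsimp only
    split_ifs
    · left; rfl
    · rcases hβ01 e with h | h <;> rw [h] <;> norm_num
    · rcases hαP z with h' | ⟨h', h'' | h''⟩
      · rw [h']; norm_num
      · rw [h', h'']; norm_num
      · rw [h', h'']; norm_num
  have hδl : ∀ e z, f e = s e → δ e z = 0 := by
    intro e z h; rw [hδ]; simp [h]
  have hTI : ∀ e w, 0 ≤ T e w ∧ T e w ≤ 2 * I e w := by
    intro e w
    rw [hT, hI]; dsimp only
    by_cases hl : f e = s e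
    · simp [hl, hδl e _ hl]
    · rcases hδ02 e (s e) with h | h <;> rcases hδ02 e (f e) with h' | h' <;> rw [h, h', if_neg hl] <;>
        split_ifs <;> norm_num
  have hTpos : ∀ e w, 0 < T e w → f e ≠ s e ∧
      ((k e % 2 = 1 ∧ β e = 1 ∧ (f e = w ∨ s e = w)) ∨
       (k e % 2 = 0 ∧ ∃ z, ((f e = w ∧ s e = z) ∨ (f e = z ∧ s e = w)) ∧ α z = 1 ∧ P z = 1)) := by
    intro e w h
    have hl : f e ≠ s e := by
      intro hl
      rw [hT] at h; dsimp only at h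
      simp [hδl e _ hl] at h
    have hpd : ∀ z, 0 < δ e z → (k e % 2 = 1 ∧ β e = 1) ∨ (k e % 2 = 0 ∧ α z = 1 ∧ P z = 1) := by
      intro z hz
      rw [hδ] at hz; dsimp only at hz
      rw [if_neg hl] at hz
      split_ifs at hz with hk
      · left; refine ⟨hk, ?_⟩
        rcases hβ01 e with h | h
        · rw [h] at hz; norm_num at hz
        · exact h
      · right; refine ⟨by omega, ?_⟩
        rcases hαP z with h' | ⟨h', h'' | h''⟩
        · rw [h'] at hz; norm_num at hz
        · rw [h''] at hz; norm_num at hz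
        · exact ⟨h', h''⟩
    refine ⟨hl, ?_⟩
    have h0 : (f e = w ∧ 0 < δ e (s e)) ∨ (s e = w ∧ 0 < δ e (f e)) := by
      by_contra hc
      push Not at hc
      have : T e w ≤ 0 := by
        rw [hT]; dsimp only
        have a1 : (if f e = w then δ e (s e) else 0) ≤ 0 := by
          split_ifs with h
          · exact hc.1 h
          · exact le_rfl
        have a2 : (if s e = w then δ e (f e) else 0) ≤ 0 := by
          split_ifs with h
          · exact hc.2 h
          · exact le_rfl
        omega
      omega
    rcases h0 with ⟨h1, h2⟩ | ⟨h1, h2⟩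
    · rcases hpd _ h2 with h3 | h3
      · exact Or.inl ⟨h3.1, h3.2, Or.inl h1⟩
      · exact Or.inr ⟨h3.1, _, Or.inl ⟨h1, rfl⟩, h3.2⟩
    · rcases hpd _ h2 with h3 | h3
      · exact Or.inl ⟨h3.1, h3.2, Or.inr h1⟩
      · exact Or.inr ⟨h3.1, _, Or.inr ⟨rfl, h1⟩, h3.2⟩
  -- a positive demand comes from an unmatched neighbour
  have hnb : ∀ e w, 0 < T e w → ¬ OL f s k w → ∃ t, p t = t ∧ HAdj f s k t (Sum.inl w) ∧
      f e ≠ s e ∧ (f e = w ∨ s e = w) ∧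
      (t = Sum.inr e ∨ ∃ z, t = Sum.inl z ∧ P z = 1 ∧ z ≠ w ∧ (f e = z ∨ s e = z)) := by
    intro e w h hw
    obtain ⟨hl, ⟨h1, h2, h3⟩ | ⟨h1, z, h2, h3, h4⟩⟩ := hTpos e w h
    · exact ⟨Sum.inr e, ((hβ1 e).1 h2).1, ⟨hw, h1, hl, h3⟩, hl, h3, Or.inl rfl⟩
    · have hzw : z ≠ w := by
        rintro rfl
        rcases h2 with h2 | h2 <;> exact hl (h2.1.trans h2.2.symm)
      refine ⟨Sum.inl z, ((hα1 z).1 h3).1, ⟨hzw, ((hα1 z).1 h3).2, hw, e, h1, h2.symm⟩, hl,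
        by tauto, Or.inr ⟨z, rfl, h4, hzw, by tauto⟩⟩
  have hDpos : ∀ w, D w ≠ 0 → ∃ e, 0 < T e w := by
    intro w h
    by_contra hc
    push Not at hc
    apply h
    rw [hD]
    exact Finset.sum_eq_zero (fun e _ => le_antisymm (hc e) (hTI e w).1)
  have hD0 : ∀ w, 0 ≤ D w := by
    intro w; rw [hD]; exact Finset.sum_nonneg (fun e _ => (hTI e w).1)
  have hB1 : ∀ w, D w ≤ 2 * nl w := by
    intro w; rw [hD, hnl]; dsimp only; rw [Finset.mul_sum]
    exact Finset.sum_le_sum (fun e _ => (hTI e w).2)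
  have hB2 : ∀ w e0, f e0 ≠ s e0 → (f e0 = w ∨ s e0 = w) → T e0 w = 0 → D w ≤ 2 * nl w - 2 := by
    intro w e0 h1 h2 h3
    have : D w ≤ ∑ e, (2 * I e w - if e = e0 then 2 else 0) := by
      rw [hD]
      refine Finset.sum_le_sum (fun e _ => ?_)
      split_ifs with h
      · subst h; rw [h3, hIpos _ _ h1 h2]; norm_num
      · have := (hTI e w).2; omega
    rw [Finset.sum_sub_distrib, ← Finset.mul_sum, Finset.sum_ite_eq' Finset.univ e0] at this
    simpa [hnl] using this
  have hB3 : ∀ w e1, (∀ e, 0 < T e w → e = e1) → D w ≤ 2 := by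
    intro w e1 h
    have : D w ≤ ∑ e, (if e = e1 then 2 else 0) := by
      rw [hD]
      refine Finset.sum_le_sum (fun e _ => ?_)
      split_ifs with h'
      · have h1 := (hTI e w).2
        have h2 : I e w ≤ 1 := by
          rw [hI]; dsimp only; split_ifs with a b c <;> first | exact absurd (b.trans c.symm) a | norm_num
        omega
      · by_contra hc
        exact h' (h e (by omega))
    rw [Finset.sum_ite_eq' Finset.univ e1] at this
    simpa using this
  -- pair inequalities
  have hpairA : ∀ w w', p (Sum.inl w) = Sum.inl w' → w ≠ w' →
      D w + D w' ≤ 4 + 2 * P w + 2 * P w' := by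
    intro w w' hp hne
    have hp' : p (Sum.inl w') = Sum.inl w := by rw [← hp, hinv]
    have hpw : p (Sum.inl w) ≠ Sum.inl w := by
      rw [hp]; intro h; exact hne (Sum.inl.inj h).symm
    have hpw' : p (Sum.inl w') ≠ Sum.inl w' := by
      rw [hp']; intro h; exact hne (Sum.inl.inj h)
    have h := hadj _ hpw
    rw [hp] at h
    obtain ⟨-, hw, hw', e0, he0, hends⟩ := h
    have hl0 : f e0 ≠ s e0 := by
      rcases hends with ⟨h1, h2⟩ | ⟨h1, h2⟩ <;> rw [h1, h2]
      exacts [hne, hne.symm]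
    have hT0 : ∀ x y, ((f e0 = x ∧ s e0 = y) ∨ (f e0 = y ∧ s e0 = x)) →
        p (Sum.inl y) ≠ Sum.inl y → T e0 x = 0 := by
      intro x y hxy hy
      by_contra hc
      have := (hTI e0 x).1
      obtain ⟨-, ⟨h1, -⟩ | ⟨-, z, h2, h3, -⟩⟩ := hTpos e0 x (by omega)
      · omega
      · have : z = y := by
          rcases hxy with ⟨a1, a2⟩ | ⟨a1, a2⟩ <;> rcases h2 with ⟨b1, b2⟩ | ⟨b1, b2⟩
          · exact b2.symm.trans a2
          · exact absurd (a1.trans b2.symm) hl0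
          · exact absurd (b1.trans a2.symm) hl0
          · exact b1.symm.trans a1
        subst this
        exact hy ((hα1 z).1 h3).1
    have d1 := hB2 w e0 hl0 (by tauto) (hT0 w w' hends hpw')
    have d2 := hB2 w' e0 hl0 (by tauto) (hT0 w' w hends.symm hpw)
    have n1 := hnOL w hw
    have n2 := hnOL w' hw'
    by_cases z1 : D w = 0
    · omega
    by_cases z2 : D w' = 0
    · omega
    obtain ⟨e1, he1⟩ := hDpos w z1
    obtain ⟨e2, he2⟩ := hDpos w' z2
    have key : ∀ e1 e2, 0 < T e1 w → 0 < T e2 w' → e1 = e2 := by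
      intro e1 e2 h1 h2
      obtain ⟨t1, a1, a2, a3, a4, a5⟩ := hnb e1 w h1 hw
      obtain ⟨t2, b1, b2, b3, b4, b5⟩ := hnb e2 w' h2 hw'
      have ht : t1 = t2 := hmax2 (Sum.inl w) t1 t2 hpw a1 b1 a2 (by rw [hp]; exact b2)
      subst ht
      rcases a5 with rfl | ⟨z, rfl, hz, hzw, hze⟩
      · rcases b5 with h | ⟨z, h, -⟩
        · exact Sum.inr.inj h
        · cases h
      · rcases b5 with h | ⟨z', h, hz', hzw', hze'⟩
        · cases h
        · obtain rfl := Sum.inl.inj h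
          exact huniq z e1 e2 hz a3 b3 hze hze'
    have c1 := hB3 w e2 (fun e he => key e e2 he he2)
    have c2 := hB3 w' e1 (fun e he => (key e1 e he1 he).symm)
    have := hP0 w; have := hP0 w'
    omega
  obtain ⟨DE, hDE⟩ : ∃ DE : E → ℤ, DE = fun e => α (f e) * (2 + 2 * P (f e)) + α (s e) * (2 + 2 * P (s e)) := ⟨_, rfl⟩
  have hpairB : ∀ w e0, p (Sum.inl w) = Sum.inr e0 → D w + DE e0 ≤ 4 + 2 * P w := by
    intro w e0 hp
    have hp' : p (Sum.inr e0) = Sum.inl w := by rw [← hp, hinv]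
    have hpw : p (Sum.inl w) ≠ Sum.inl w := by rw [hp]; simp
    have h := hadj _ hpw
    rw [hp] at h
    obtain ⟨hw, hodd, hl0, hends⟩ := h
    have hαw : α w = 0 := by
      rcases hα01 w with h | h
      · exact h
      · exact absurd ((hα1 w).1 h).1 hpw
    have hT0 : T e0 w = 0 := by
      by_contra hc
      have := (hTI e0 w).1
      obtain ⟨-, ⟨-, h1, -⟩ | ⟨h1, -⟩⟩ := hTpos e0 w (by omega)
      · have := ((hβ1 e0).1 h1).1
        rw [hp'] at this
        cases this
      · omega
    have d1 := hB2 w e0 hl0 hends hT0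
    have n1 := hnOL w hw
    obtain ⟨z, hz, hDEz⟩ : ∃ z, (f e0 = z ∨ s e0 = z) ∧ DE e0 = α z * (2 + 2 * P z) := by
      rw [hDE]; dsimp only
      rcases hends with h | h
      · exact ⟨s e0, Or.inr rfl, by rw [h, hαw]; ring⟩
      · exact ⟨f e0, Or.inl rfl, by rw [h, hαw]; ring⟩
    rcases hα01 z with h | h
    · rw [hDEz, h]; omega
    · have hzz := (hα1 z).1 h
      have hDw : D w = 0 := by
        by_contra hc
        obtain ⟨e1, he1⟩ := hDpos w hc
        obtain ⟨t1, a1, a2, a3, a4, a5⟩ := hnb e1 w he1 hw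
        have ht : t1 = Sum.inl z := hmax2 (Sum.inl w) t1 (Sum.inl z) hpw a1 hzz.1 a2
          (by rw [hp]; exact ⟨hzz.2, hodd, hl0, hz⟩)
        subst ht
        rcases a5 with h | ⟨z', h, hz', -, hze⟩
        · cases h
        · obtain rfl := Sum.inl.inj h
          have := huniq z e1 e0 hz' a3 hl0 hze hz
          subst this
          omega
      rw [hDEz, h, hDw]
      have := hnOL z hzz.2
      omega
  -- global pair sum
  obtain ⟨ii, hii⟩ : ∃ ii : V → ℤ, ii = fun v => if ∃ v', p (Sum.inl v) = Sum.inl v' ∧ v ≠ v' then 1 else 0 := ⟨_, rfl⟩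
  obtain ⟨C, hC⟩ : ∃ C : V ⊕ E → ℤ, C = fun x => if p x = x then 0 else
    Sum.elim (fun v => D v - (1 + 2 * P v + ii v)) (fun e => DE e - 3) x := ⟨_, rfl⟩
  have hCp : ∀ x, C x + C (p x) ≤ 0 := by
    intro x
    by_cases hx : p x = x
    · rw [hC]; simp [hx]
    have hx' : ¬ p (p x) = p x := by rw [hinv]; exact fun h => hx h.symm
    have e1 : C x = Sum.elim (fun v => D v - (1 + 2 * P v + ii v)) (fun e => DE e - 3) x := by
      rw [hC]; dsimp only; rw [if_neg hx]
    have e2 : C (p x) = Sum.elim (fun v => D v - (1 + 2 * P v + ii v)) (fun e => DE e - 3) (p x) := by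
      rw [hC]; dsimp only; rw [if_neg hx']
    have hi0 : ∀ v, 0 ≤ ii v := by intro v; rw [hii]; dsimp only; split_ifs <;> norm_num
    rw [e1, e2]
    rcases x with w | e
    · rcases hpx : p (Sum.inl w) with w' | e0
      · have hne : w ≠ w' := by rintro rfl; exact hx hpx
        have := hpairA w w' hpx hne
        have i1 : ii w = 1 := by rw [hii]; exact if_pos ⟨w', hpx, hne⟩
        have i2 : ii w' = 1 := by
          rw [hii]; exact if_pos ⟨w, by rw [← hpx, hinv], hne.symm⟩
        simp only [Sum.elim_inl]; omega
      · have := hpairB w e0 hpx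
        have := hi0 w
        simp only [Sum.elim_inl, Sum.elim_inr]; omega
    · rcases hpx : p (Sum.inr e) with w | e0
      · have := hpairB w e (by rw [← hpx, hinv])
        have := hi0 w
        simp only [Sum.elim_inl, Sum.elim_inr]; omega
      · have := hadj _ hx
        rw [hpx] at this
        exact absurd this (by simp [HAdj])
  have hCsum : ∑ v, C (Sum.inl v) + ∑ e, C (Sum.inr e) ≤ 0 := by
    have h1 : ∑ x, C (p x) = ∑ x, C x :=
      Equiv.sum_comp (Function.Involutive.toPerm p hinv) C
    have h2 : ∑ x, (C x + C (p x)) ≤ 0 := Finset.sum_nonpos (fun x _ => hCp x)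
    rw [Finset.sum_add_distrib, h1, Fintype.sum_sum_type] at h2
    omega
  have hOLfix : ∀ v, OL f s k v → p (Sum.inl v) = Sum.inl v := by
    intro v hv
    by_contra hc
    have h := hadj _ hc
    rcases hpx : p (Sum.inl v) with w | e
    · rw [hpx] at h; exact h.2.1 hv
    · rw [hpx] at h; exact h.1 hv
  -- vertex inequality
  have hvert : ∀ v, 7 * α v + D v ≤ 1 + (2 * P v + Q v) + α v * (2 + 2 * P v) * nl v + ii v + C (Sum.inl v) := by
    intro v
    have hi0 : 0 ≤ ii v := by rw [hii]; dsimp only; split_ifs <;> norm_num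
    by_cases hfix : p (Sum.inl v) = Sum.inl v
    · have hC0 : C (Sum.inl v) = 0 := by rw [hC]; simp [hfix]
      by_cases hOL : OL f s k v
      · have a0 : α v = 0 := by
          rcases hα01 v with h | h
          · exact h
          · exact absurd hOL ((hα1 v).1 h).2
        have := hOLQ v hOL
        have := hB1 v
        rw [a0, hC0]; omega
      · have a1 : α v = 1 := (hα1 v).2 ⟨hfix, hOL⟩
        have d0 : D v = 0 := by
          by_contra hc
          obtain ⟨e, he⟩ := hDpos v hc
          obtain ⟨t, ht1, ht2, -⟩ := hnb e v he hOL
          exact hmax1 _ _ ht1 hfix ht2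
        obtain ⟨q0, ⟨h1, h2⟩ | ⟨h1, h2⟩⟩ := hnOL v hOL <;> rw [a1, d0, hC0, h1, h2, q0] <;> omega
    · have a0 : α v = 0 := by
        rcases hα01 v with h | h
        · exact h
        · exact absurd ((hα1 v).1 h).1 hfix
      have hC0 : C (Sum.inl v) = D v - (1 + 2 * P v + ii v) := by rw [hC]; simp [hfix]
      have := hQ0 v
      rw [a0, hC0]; simp only [zero_mul, mul_zero]; omega
  -- edge inequality
  obtain ⟨u, hu⟩ : ∃ u : E → ℤ, u = fun e => if U e then 1 else 0 := ⟨_, rfl⟩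
  obtain ⟨l, hl⟩ : ∃ l : E → ℤ, l = fun e => if f e = s e then (if k e % 2 = 0 then 2 else 1) else 0 := ⟨_, rfl⟩
  obtain ⟨R, hR⟩ : ∃ R : E → ℤ, R = fun e => if f e = s e then 0 else DE e := ⟨_, rfl⟩
  have hedge : ∀ e, R e + 7 * β e + 2 * u e + l e ≤ k e + (δ e (s e) + δ e (f e)) + C (Sum.inr e) := by
    intro e
    have hk := hk1 e
    by_cases hloop : f e = s e
    · have b0 : β e = 0 := by
        rcases hβ01 e with h | h
        · exact h
        · exact absurd hloop ((hβ1 e).1 h).2.2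
      have u0 : u e = 0 := by
        rw [hu]; exact if_neg (fun h => (hU1 e h).2.1 hloop)
      have r0 : R e = 0 := by rw [hR]; exact if_pos hloop
      have c0 : C (Sum.inr e) = 0 := by
        rw [hC]; refine if_pos ?_
        by_contra hc
        have h := hadj _ hc
        rcases hpx : p (Sum.inr e) with w | e'
        · rw [hpx] at h; exact h.2.2.1 hloop
        · rw [hpx] at h; exact h
      have l0 : l e ≤ k e := by
        rw [hl]; dsimp only; rw [if_pos hloop]; split_ifs <;> omega
      rw [b0, u0, r0, c0, hδl e _ hloop, hδl e _ hloop]; omega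
    have hk' := hk2 e hloop
    have r0 : R e = DE e := by rw [hR]; exact if_neg hloop
    have l0 : l e = 0 := by rw [hl]; exact if_neg hloop
    rcases Nat.mod_two_eq_zero_or_one (k e) with hpar | hpar
    · have b0 : β e = 0 := by
        rcases hβ01 e with h | h
        · exact h
        · have := ((hβ1 e).1 h).2.1; omega
      have c0 : C (Sum.inr e) = 0 := by
        rw [hC]; refine if_pos ?_
        by_contra hc
        have h := hadj _ hc
        rcases hpx : p (Sum.inr e) with w | e'
        · rw [hpx] at h; have := h.2.1; omega
        · rw [hpx] at h; exact h
      have dd : ∀ z, δ e z = 2 * (α z * P z) := by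
        intro z; rw [hδ]; dsimp only; rw [if_neg hloop, if_neg (by omega)]
      have hsum : α (f e) + α (s e) + u e ≤ 1 := by
        by_cases hUe : U e
        · have h := (hU1 e hUe).2.2
          have a1 : α (f e) = 0 := by
            rcases hα01 (f e) with h' | h'
            · exact h'
            · have := ((hα1 _).1 h').1
              rw [h] at this
              exact absurd (Sum.inl.inj this).symm hloop
          have a2 : α (s e) = 0 := by
            rcases hα01 (s e) with h' | h'
            · exact h'
            · have := ((hα1 _).1 h').1
              rw [← h, hinv, h] at this
              exact absurd (Sum.inl.inj this) hloop
          have : u e = 1 := by rw [hu]; exact if_pos hUe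
          omega
        · have u0 : u e = 0 := by rw [hu]; exact if_neg hUe
          have : ¬ (α (f e) = 1 ∧ α (s e) = 1) := by
            rintro ⟨h1, h2⟩
            have g1 := (hα1 _).1 h1
            have g2 := (hα1 _).1 h2
            exact hmax1 _ _ g1.1 g2.1 ⟨hloop, g1.2, g2.2, e, hpar, Or.inl ⟨rfl, rfl⟩⟩
          have := hα01 (f e); have := hα01 (s e)
          omega
      rw [r0, hDE, b0, l0, c0, dd, dd]; dsimp only
      have : (2:ℤ) ≤ k e := by exact_mod_cast hk'
      nlinarith
    · have u0 : u e = 0 := by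
        rw [hu]; refine if_neg (fun h => ?_)
        have := (hU1 e h).1; omega
      have dd : ∀ z, δ e z = 2 * β e := by
        intro z; rw [hδ]; dsimp only; rw [if_neg hloop, if_pos hpar]
      rw [r0, u0, l0, dd, dd]
      by_cases hfix : p (Sum.inr e) = Sum.inr e
      · have b1 : β e = 1 := (hβ1 e).2 ⟨hfix, hpar, hloop⟩
        have c0 : C (Sum.inr e) = 0 := by rw [hC]; exact if_pos hfix
        have aa : ∀ z, (f e = z ∨ s e = z) → α z = 0 := by
          intro z hz
          rcases hα01 z with h | h
          · exact h
          · have g := (hα1 _).1 h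
            exact absurd ⟨g.2, hpar, hloop, hz⟩ (hmax1 (Sum.inl z) (Sum.inr e) g.1 hfix)
        rw [hDE]; dsimp only
        rw [aa _ (Or.inl rfl), aa _ (Or.inr rfl), b1, c0]; omega
      · have b0 : β e = 0 := by
          rcases hβ01 e with h | h
          · exact h
          · exact absurd ((hβ1 e).1 h).1 hfix
        have c0 : C (Sum.inr e) = DE e - 3 := by rw [hC]; dsimp only; rw [if_neg hfix]; rfl
        rw [b0, c0]; omega
  -- double counting
  have hS1 : ∑ v, D v = ∑ e, (δ e (s e) + δ e (f e)) := by
    rw [hD]; dsimp only; rw [Finset.sum_comm]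
    refine Finset.sum_congr rfl (fun e _ => ?_)
    rw [hT]; simp [Finset.sum_add_distrib]
  have hS2 : ∑ v, α v * (2 + 2 * P v) * nl v = ∑ e, R e := by
    rw [hnl]; dsimp only; simp only [Finset.mul_sum]; rw [Finset.sum_comm]
    refine Finset.sum_congr rfl (fun e _ => ?_)
    rw [hI, hR, hDE]; dsimp only
    by_cases hloop : f e = s e
    · simp [hloop]
    · simp only [if_neg hloop, mul_add (_ * _), Finset.sum_add_distrib]; simp
  have hS3 : ∑ v, (2 * P v + Q v) = ∑ e, l e := by
    rw [hP, hQ]; dsimp only; simp only [Finset.mul_sum, ← Finset.sum_add_distrib]; rw [Finset.sum_comm]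
    refine Finset.sum_congr rfl (fun e _ => ?_)
    rw [hl]; dsimp only
    by_cases hloop : f e = s e
    · rcases Nat.mod_two_eq_zero_or_one (k e) with hpar | hpar <;> simp [hloop, hpar]
    · simp [hloop]
  have hS4 : ∑ v, ii v ≤ ∑ e, 2 * u e := by
    have h1 : ∀ v, ii v ≤ ∑ e, ((if f e = v then u e else 0) + (if s e = v then u e else 0)) := by
      intro v
      have hnn : ∀ e ∈ Finset.univ, 0 ≤ ((if f e = v then u e else 0) + (if s e = v then u e else 0)) := by
        intro e _
        rw [hu]; dsimp only; split_ifs <;> norm_num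
      rw [hii]; dsimp only
      split_ifs with h
      · obtain ⟨v', hp, hne⟩ := h
        obtain ⟨e, hUe, he⟩ := hU2 v v' hp hne
        refine le_trans ?_ (Finset.single_le_sum hnn (Finset.mem_univ e))
        have u1 : u e = 1 := by rw [hu]; exact if_pos hUe
        rw [u1]
        rcases he with he | he
        · rw [if_pos he.1]; split_ifs <;> norm_num
        · rw [if_pos he.2]; split_ifs <;> norm_num
      · exact Finset.sum_nonneg hnn
    refine le_trans (Finset.sum_le_sum (fun v _ => h1 v)) ?_
    rw [Finset.sum_comm]
    refine Finset.sum_le_sum (fun e _ => ?_)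
    simp [Finset.sum_add_distrib]; omega
  have hdef : 7 * (∑ v, α v + ∑ e, β e) ≤ Fintype.card V + ∑ e, (k e : ℤ) := by
    have g1 := Finset.sum_le_sum (fun v (_ : v ∈ Finset.univ) => hvert v)
    have g2 := Finset.sum_le_sum (fun e (_ : e ∈ Finset.univ) => hedge e)
    rw [← Finset.mul_sum] at hS4
    simp only [Finset.sum_add_distrib, ← Finset.mul_sum, Finset.sum_const, Finset.card_univ, nsmul_eq_mul, mul_one] at g1 g2 hS1 hS3
    linarith
  -- the used half-edges
  obtain ⟨a, ha⟩ : ∃ a : E → Bool, ∀ e, a e = true ↔ ((f e = s e ∧ k e % 2 = 1) ∨ U e ∨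
      (k e % 2 = 1 ∧ f e ≠ s e ∧ p (Sum.inr e) = Sum.inl (f e))) :=
    ⟨fun e => decide _, fun e => by simp only [decide_eq_true_eq]; rfl⟩
  obtain ⟨b, hb⟩ : ∃ b : E → Bool, ∀ e, b e = true ↔ (U e ∨
      (k e % 2 = 1 ∧ f e ≠ s e ∧ p (Sum.inr e) = Sum.inl (s e))) :=
    ⟨fun e => decide _, fun e => by simp only [decide_eq_true_eq]; rfl⟩
  -- what a used half-edge at `v` looks like
  have hcode : ∀ e e' x y x' y', ((f e = x ∧ s e = y) ∨ (f e = y ∧ s e = x)) →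
      ((f e' = x' ∧ s e' = y') ∨ (f e' = y' ∧ s e' = x')) → x = x' →
      (U e ∨ (k e % 2 = 1 ∧ f e ≠ s e ∧ p (Sum.inr e) = Sum.inl x)) →
      (U e' ∨ (k e' % 2 = 1 ∧ f e' ≠ s e' ∧ p (Sum.inr e') = Sum.inl x')) →
      e = e' ∧ y = y' := by
    intro e e' x y x' y' h1 h2 hx h3 h4
    subst hx
    have conv : ∀ e y, ((f e = x ∧ s e = y) ∨ (f e = y ∧ s e = x)) → U e →
        p (Sum.inl x) = Sum.inl y := by
      intro e y h hUe
      have := (hU1 e hUe).2.2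
      rcases h with ⟨a, b⟩ | ⟨a, b⟩ <;> rw [a, b] at this
      · exact this
      · rw [← this, hinv]
    have same : ∀ y y', e = e' → ((f e = x ∧ s e = y) ∨ (f e = y ∧ s e = x)) →
        ((f e' = x ∧ s e' = y') ∨ (f e' = y' ∧ s e' = x)) → f e ≠ s e → y = y' := by
      rintro y y' rfl (⟨a1, a2⟩ | ⟨a1, a2⟩) (⟨b1, b2⟩ | ⟨b1, b2⟩) hne
      · exact a2.symm.trans b2
      · exact absurd (a1.trans b2.symm) hne
      · exact absurd (b1.trans a2.symm) hne
      · exact a1.symm.trans b1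
    rcases h3 with h3 | ⟨-, hn, h3⟩ <;> rcases h4 with h4 | ⟨-, hn', h4⟩
    · have c1 := conv e y h1 h3
      have c2 := conv e' y' h2 h4
      have hy : y = y' := Sum.inl.inj (c1.symm.trans c2)
      subst hy
      refine ⟨hU3 e e' h3 h4 ?_, rfl⟩
      rw [Sym2.eq_iff.2 h1, Sym2.eq_iff.2 h2]
    · have c1 := conv e y h1 h3
      rw [← h4, hinv] at c1
      cases c1
    · have c1 := conv e' y' h2 h4
      rw [← h3, hinv] at c1
      cases c1
    · have : p (p (Sum.inr e)) = p (p (Sum.inr e')) := by rw [h3, h4]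
      rw [hinv, hinv] at this
      have he := Sum.inr.inj this
      exact ⟨he, same y y' he h1 h2 hn⟩
  have hnotOL : ∀ e x y, ((f e = x ∧ s e = y) ∨ (f e = y ∧ s e = x)) →
      (U e ∨ (k e % 2 = 1 ∧ f e ≠ s e ∧ p (Sum.inr e) = Sum.inl x)) → ¬ OL f s k x := by
    intro e x y h1 h2 h3
    have hfx := hOLfix x h3
    rcases h2 with h2 | ⟨-, -, h2⟩
    · have g := hU1 e h2
      rcases h1 with ⟨a, b⟩ | ⟨a, b⟩
      · rw [a, hfx] at g
        exact g.2.1 (Sum.inl.inj g.2.2)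
      · rw [a, b] at g
        have := g.2.2
        rw [← hfx] at this
        have h' : p (p (Sum.inl y)) = p (p (Sum.inl x)) := by rw [this]
        rw [hinv, hinv] at h'
        exact g.2.1 (Sum.inl.inj h')
    · rw [← h2, hinv, h2] at hfx
      cases hfx
  have hloopu : ∀ v e e', f e = s e → f e = v → f e' = s e' → f e' = v → e = e' := by
    intro v e e' h1 h2 h3 h4
    by_contra hne
    have hle : ∑ x ∈ ({e, e'} : Finset E), ((if f x = v then (1:ℤ) else 0) + (if s x = v then 1 else 0))
        ≤ ∑ x, ((if f x = v then (1:ℤ) else 0) + (if s x = v then 1 else 0)) :=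
      Finset.sum_le_sum_of_subset_of_nonneg (Finset.subset_univ _)
        (fun x _ _ => by split_ifs <;> norm_num)
    rw [Finset.sum_pair hne, hdeg v, if_pos h2, if_pos (h1.symm.trans h2), if_pos h4,
      if_pos (h3.symm.trans h4)] at hle
    norm_num at hle
  have hne_of : ∀ e x, (U e ∨ (k e % 2 = 1 ∧ f e ≠ s e ∧ p (Sum.inr e) = Sum.inl x)) →
      f e ≠ s e := by
    rintro e x (h | h)
    · exact (hU1 e h).2.1
    · exact h.2.1
  refine ⟨a, b, ?_, ?_, ?_, ?_⟩
  · intro e e' h1 h2 h3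
    rcases (ha e).1 h1 with g1 | g1 <;> rcases (ha e').1 h2 with g2 | g2
    · exact hloopu (f e) e e' g1.1 rfl g2.1 h3.symm
    · exact absurd ⟨e, g1.1, h3, g1.2⟩ (hnotOL e' (f e') (s e') (Or.inl ⟨rfl, rfl⟩) g2)
    · exact absurd ⟨e', g2.1, h3.symm, g2.2⟩ (hnotOL e (f e) (s e) (Or.inl ⟨rfl, rfl⟩) g1)
    · exact (hcode e e' (f e) (s e) (f e') (s e') (Or.inl ⟨rfl, rfl⟩) (Or.inl ⟨rfl, rfl⟩) h3 g1 g2).1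
  · intro e e' h1 h2 h3
    exact (hcode e e' (s e) (f e) (s e') (f e') (Or.inr ⟨rfl, rfl⟩) (Or.inr ⟨rfl, rfl⟩) h3
      ((hb e).1 h1) ((hb e').1 h2)).1
  · intro e e' h1 h2 h3
    have g2 := (hb e').1 h2
    rcases (ha e).1 h1 with g1 | g1
    · exact hnotOL e' (s e') (f e') (Or.inr ⟨rfl, rfl⟩) g2 ⟨e, g1.1, h3, g1.2⟩
    · have := hcode e e' (f e) (s e) (s e') (f e') (Or.inl ⟨rfl, rfl⟩) (Or.inr ⟨rfl, rfl⟩) h3 g1 g2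
      obtain ⟨rfl, -⟩ := this
      exact hne_of e _ g1 h3
  · -- counting
    have hcov : ∀ v, 1 - α v ≤ ∑ e, ((if f e = v then ((a e).toNat : ℤ) else 0) +
        (if s e = v then ((b e).toNat : ℤ) else 0)) := by
      intro v
      have hnn : ∀ e ∈ Finset.univ, (0:ℤ) ≤ ((if f e = v then ((a e).toNat : ℤ) else 0) +
          (if s e = v then ((b e).toNat : ℤ) else 0)) := by
        intro e _
        split_ifs <;> positivity
      rcases hα01 v with h0 | h1
      · have hex : ∃ e, (f e = v ∧ a e = true) ∨ (s e = v ∧ b e = true) := by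
          by_cases hOL : OL f s k v
          · obtain ⟨e, g1, g2, g3⟩ := hOL
            exact ⟨e, Or.inl ⟨g2, (ha e).2 (Or.inl ⟨g1, g3⟩)⟩⟩
          · have hnf : p (Sum.inl v) ≠ Sum.inl v := by
              intro h
              have := (hα1 v).2 ⟨h, hOL⟩
              omega
            rcases hpx : p (Sum.inl v) with w | e
            · obtain ⟨e, hUe, he⟩ := hU2 v w hpx (by rintro rfl; exact hnf hpx)
              rcases he with he | he
              · exact ⟨e, Or.inl ⟨he.1, (ha e).2 (Or.inr (Or.inl hUe))⟩⟩
              · exact ⟨e, Or.inr ⟨he.2, (hb e).2 (Or.inl hUe)⟩⟩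
            · have h := hadj _ hnf
              rw [hpx] at h
              obtain ⟨-, q1, q2, q3⟩ := h
              have hpe : p (Sum.inr e) = Sum.inl v := by rw [← hpx, hinv]
              rcases q3 with q3 | q3
              · exact ⟨e, Or.inl ⟨q3, (ha e).2 (Or.inr (Or.inr ⟨q1, q2, by rw [hpe, q3]⟩))⟩⟩
              · exact ⟨e, Or.inr ⟨q3, (hb e).2 (Or.inr ⟨q1, q2, by rw [hpe, q3]⟩)⟩⟩
        obtain ⟨e, he⟩ := hex
        refine le_trans ?_ (Finset.single_le_sum hnn (Finset.mem_univ e))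
        rw [h0]
        rcases he with ⟨he1, he2⟩ | ⟨he1, he2⟩
        · rw [if_pos he1, he2]; split_ifs <;> simp
        · rw [if_pos he1, he2]; split_ifs <;> simp
      · rw [h1]
        exact Finset.sum_nonneg hnn
    have hcov2 : (Fintype.card V : ℤ) - ∑ v, α v ≤ ∑ e, (((a e).toNat : ℤ) + ((b e).toNat : ℤ)) := by
      have h1 := Finset.sum_le_sum (fun v (_ : v ∈ Finset.univ) => hcov v)
      rw [Finset.sum_comm] at h1
      simpa [Finset.sum_add_distrib, Finset.sum_sub_distrib] using h1
    have hedge2 : ∀ e, (k e : ℤ) + (((a e).toNat : ℤ) + ((b e).toNat : ℤ)) - β e ≤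
        2 * (((k e + (a e).toNat + (b e).toNat) / 2 : ℕ) : ℤ) := by
      intro e
      have hodd : k e % 2 = 0 → f e = s e → a e = false ∧ b e = false := by
        intro h1 h2
        constructor
        · rw [← Bool.not_eq_true, ha]
          rintro (h | h | h)
          · omega
          · exact (hU1 e h).2.1 h2
          · exact h.2.1 h2
        · rw [← Bool.not_eq_true, hb]
          rintro (h | h)
          · exact (hU1 e h).2.1 h2
          · exact h.2.1 h2
      rcases Nat.mod_two_eq_zero_or_one (k e) with hpar | hpar
      · have hab : a e = b e := by
          rw [Bool.eq_iff_iff, ha, hb]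
          constructor
          · rintro (h | h | h)
            · omega
            · exact Or.inl h
            · omega
          · rintro (h | h)
            · exact Or.inr (Or.inl h)
            · omega
        have hb0 := hβ01 e
        rw [hab]
        cases b e <;> simp only [Bool.toNat_true, Bool.toNat_false] <;> omega
      · have hnU : ¬ U e := fun h => by have := (hU1 e h).1; omega
        by_cases hloop : f e = s e
        · have a1 : a e = true := (ha e).2 (Or.inl ⟨hloop, hpar⟩)
          have b1 : b e = false := by
            rw [← Bool.not_eq_true, hb]
            rintro (h | h)
            · exact hnU h
            · exact h.2.1 hloop
          have hb0 := hβ01 e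
          rw [a1, b1]; simp only [Bool.toNat_true, Bool.toNat_false]; omega
        · by_cases hfix : p (Sum.inr e) = Sum.inr e
          · have b1 : β e = 1 := (hβ1 e).2 ⟨hfix, hpar, hloop⟩
            rw [b1]
            omega
          · have h := hadj _ hfix
            have hb0 := hβ01 e
            rcases hpx : p (Sum.inr e) with w | e'
            · rw [hpx] at h
              rcases h.2.2.2 with q | q
              · have a1 : a e = true := (ha e).2 (Or.inr (Or.inr ⟨hpar, hloop, by rw [hpx, q]⟩))
                have b1 : b e = false := by
                  rw [← Bool.not_eq_true, hb]
                  rintro (h | h)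
                  · exact hnU h
                  · have := h.2.2
                    rw [hpx, ← q] at this
                    exact hloop (Sum.inl.inj this)
                rw [a1, b1]; simp only [Bool.toNat_true, Bool.toNat_false]; omega
              · have a1 : b e = true := (hb e).2 (Or.inr ⟨hpar, hloop, by rw [hpx, q]⟩)
                have b1 : a e = false := by
                  rw [← Bool.not_eq_true, ha]
                  rintro (h | h | h)
                  · exact hloop h.1
                  · exact hnU h
                  · have := h.2.2
                    rw [hpx, ← q] at this
                    exact hloop (Sum.inl.inj this).symm
                rw [a1, b1]; simp only [Bool.toNat_true, Bool.toNat_false]; omega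
            · rw [hpx] at h
              exact absurd h (by simp [HAdj])
    have hfin := Finset.sum_le_sum (fun e (_ : e ∈ Finset.univ) => hedge2 e)
    rw [Finset.sum_sub_distrib, Finset.sum_add_distrib, ← Finset.mul_sum] at hfin
    zify
    push_cast at hfin ⊢
    linarith

end SubdivAux

namespace SubdivAux
open Multigraph

theorem nu1_ge (G : Multigraph) (f s : G.E → G.V) (k : G.E → ℕ) (hk : ∀ e, 1 ≤ k e)
    (a b : G.E → Bool)
    (haa : ∀ e e', a e = true → a e' = true → f e = f e' → e = e')
    (hbb : ∀ e e', b e = true → b e' = true → s e = s e' → e = e')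
    (hab : ∀ e e', a e = true → b e' = true → f e ≠ s e') :
    ∑ e, (k e + (a e).toNat + (b e).toNat) / 2 ≤ (G.subdivide f s k).nu1 := by
  classical
  let M : Finset (Σ e : G.E, Fin (k e + 1)) := Finset.univ.sigma (fun e =>
    Finset.univ.filter (fun i : Fin (k e+1) =>
      (i.val % 2 = if a e then 0 else 1) ∧ (b e = true ∨ i.val ≠ k e)))
  have hcard : M.card = ∑ e, (k e + (a e).toNat + (b e).toNat) / 2 := by
    simp only [M, Finset.card_sigma, card_path _ _ _ (hk _)]
  have hmem : ∀ x : (Σ e : G.E, Fin (k e + 1)), x ∈ M ↔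
      ((x.2.val % 2 = if a x.1 then 0 else 1) ∧ (b x.1 = true ∨ x.2.val ≠ k x.1)) := by
    intro x; simp [M]
  have hM : (G.subdivide f s k).IsMatching M := by
    constructor
    · rintro ⟨e, i⟩ hx hl
      have := hk e
      simp only [IsLoop, subdivide, Sym2.mk_isDiag_iff] at hl
      split_ifs at hl with h1 h2
      · omega
      · simp only [Sum.inr.injEq, Sigma.mk.injEq, heq_eq_eq, Fin.mk.injEq, true_and] at hl
        omega
    · rintro ⟨e, i⟩ hx ⟨e', j⟩ hy hne v hv hv'
      erw [hmem] at hx hy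
      have := hk e
      have := hk e'
      have hi := i.isLt
      have hj := j.isLt
      simp only [subdivide] at hv hv' hx hy
      replace hv := Sym2.mem_iff.mp hv
      replace hv' := Sym2.mem_iff.mp hv'
      rcases v with v | ⟨e0, t⟩
      · have q1 : (a e = true ∧ v = f e ∧ i.val = 0) ∨ (b e = true ∧ v = s e ∧ i.val = k e) := by
          rcases hv with hv | hv
          · split_ifs at hv with h
            · left
              refine ⟨?_, by simpa using hv, h⟩
              by_contra hc
              simp [hc, h] at hx
          · split_ifs at hv with h
            · right
              exact ⟨by rcases hx.2 with h' | h'; exacts [h', absurd h h'], by simpa using hv, h⟩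
        have q2 : (a e' = true ∧ v = f e' ∧ j.val = 0) ∨ (b e' = true ∧ v = s e' ∧ j.val = k e') := by
          rcases hv' with hv | hv
          · split_ifs at hv with h
            · left
              refine ⟨?_, by simpa using hv, h⟩
              by_contra hc
              simp [hc, h] at hy
          · split_ifs at hv with h
            · right
              exact ⟨by rcases hy.2 with h' | h'; exacts [h', absurd h h'], by simpa using hv, h⟩
        rcases q1 with ⟨x1, x2, x3⟩ | ⟨x1, x2, x3⟩ <;> rcases q2 with ⟨y1, y2, y3⟩ | ⟨y1, y2, y3⟩
        · obtain rfl := haa e e' x1 y1 (x2.symm.trans y2)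
          exact hne (by congr 1; exact Fin.ext (x3.trans y3.symm))
        · exact hab e e' x1 y1 (x2.symm.trans y2)
        · exact hab e' e y1 x1 (y2.symm.trans x2)
        · obtain rfl := hbb e e' x1 y1 (x2.symm.trans y2)
          exact hne (by congr 1; exact Fin.ext (x3.trans y3.symm))
      · have q1 : e0 = e ∧ (t.val + 1 = i.val ∨ t.val = i.val) := by
          rcases hv with hv | hv
          · split_ifs at hv with h
            simp only [Sum.inr.injEq, Sigma.mk.injEq] at hv
            obtain ⟨rfl, hv⟩ := hv
            simp only [heq_eq_eq] at hv
            subst hv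
            simp only [true_and]; omega
          · split_ifs at hv with h
            simp only [Sum.inr.injEq, Sigma.mk.injEq] at hv
            obtain ⟨rfl, hv⟩ := hv
            simp only [heq_eq_eq] at hv
            subst hv
            exact ⟨rfl, Or.inr rfl⟩
        have q2 : e0 = e' ∧ (t.val + 1 = j.val ∨ t.val = j.val) := by
          rcases hv' with hv | hv
          · split_ifs at hv with h
            simp only [Sum.inr.injEq, Sigma.mk.injEq] at hv
            obtain ⟨rfl, hv⟩ := hv
            simp only [heq_eq_eq] at hv
            subst hv
            simp only [true_and]; omega
          · split_ifs at hv with h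
            simp only [Sum.inr.injEq, Sigma.mk.injEq] at hv
            obtain ⟨rfl, hv⟩ := hv
            simp only [heq_eq_eq] at hv
            subst hv
            exact ⟨rfl, Or.inr rfl⟩
        obtain ⟨rfl, q1⟩ := q1
        obtain ⟨rfl, q2⟩ := q2
        apply hne
        congr 1
        apply Fin.ext
        have h1 := hx.1
        have h2 := hy.1
        omega
  rw [← hcard]
  apply le_csSup
  · refine ⟨Fintype.card (Σ e : G.E, Fin (k e + 1)), ?_⟩
    rintro m ⟨M', -, rfl⟩
    exact Finset.card_le_univ (α := Σ e : G.E, Fin (k e + 1)) M'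
  · exact ⟨M, hM, rfl⟩

end SubdivAux

namespace Multigraph

/-- If G is obtained from a connected cubic pseudo-graph G₀ by subdividing
each edge e exactly k(e) times, with k(e) ≥ 1 for loops and k(e) ≥ 2 for non-loop edges,
then ν₁(G) ≥ (3/7)·|V(G)|. -/
theorem nu1_subdivide_ge_three_sevenths
    (G₀ : Multigraph) (fst snd : G₀.E → G₀.V)
    (hends : ∀ e : G₀.E, G₀.ends e = s(fst e, snd e))
    (hconn : G₀.Connected) (hcubic : ∀ v : G₀.V, G₀.deg v = 3)
    (k : G₀.E → ℕ)
    (hkloop : ∀ e : G₀.E, G₀.IsLoop e → 1 ≤ k e)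
    (hknonloop : ∀ e : G₀.E, ¬ G₀.IsLoop e → 2 ≤ k e) :
    7 * (G₀.subdivide fst snd k).nu1 ≥ 3 * Fintype.card (G₀.subdivide fst snd k).V := by
  classical
  have hloop : ∀ e, G₀.IsLoop e ↔ fst e = snd e := by
    intro e
    rw [IsLoop, hends e, Sym2.mk_isDiag_iff]
  have hk1 : ∀ e, 1 ≤ k e := by
    intro e
    by_cases h : G₀.IsLoop e
    · exact hkloop e h
    · have := hknonloop e h; omega
  have hdeg : ∀ v, ∑ e, ((if fst e = v then (1:ℤ) else 0) + (if snd e = v then 1 else 0)) = 3 := by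
    intro v
    have h := hcubic v
    rw [deg] at h
    have h' : ((∑ e : G₀.E, (if G₀.ends e = Sym2.diag v then 2 else if v ∈ G₀.ends e then 1 else 0) : ℕ) : ℤ) = 3 := by
      rw [h]; rfl
    rw [← h', Nat.cast_sum]
    refine Finset.sum_congr rfl (fun e _ => ?_)
    rw [hends e]
    simp only [Sym2.diag, Sym2.eq_iff, Sym2.mem_iff, or_self]
    simp only [eq_comm (a := v) (b := fst e), eq_comm (a := v) (b := snd e)]
    by_cases h1 : fst e = v <;> by_cases h2 : snd e = v <;> simp [h1, h2]
  obtain ⟨a, b, haa, hbb, hab, hcount⟩ := SubdivAux.core fst snd k hdeg hk1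
    (fun e he => hknonloop e (fun h => he ((hloop e).1 h)))
  have hnu := SubdivAux.nu1_ge G₀ fst snd k hk1 a b haa hbb hab
  have hcard : Fintype.card (G₀.subdivide fst snd k).V = Fintype.card G₀.V + ∑ e, k e := by
    change Fintype.card (G₀.V ⊕ (Σ e : G₀.E, Fin (k e))) = _
    simp [Fintype.card_sum, Fintype.card_sigma]
  rw [hcard]
  omega

end Multigraph
end

section
/- Every cubic graph G satisfies ν₂(G) ≥ (4/5)·|V(G)|, i.e., at least (4/5)|V(G)| edges of G can be covered by two disjoint matchings. -/
namespace Multigraph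

/-- Proper partial edge-colouring with two colours. -/
def Prp (G : Multigraph) (c : G.E → Option Bool) : Prop :=
  ∀ e f a v, c e = some a → c f = some a → v ∈ G.ends e → v ∈ G.ends f → e = f

/-- Vertex `v` sees colour `a`. -/
def Has (G : Multigraph) (c : G.E → Option Bool) (v : G.V) (a : Bool) : Prop :=
  ∃ e, c e = some a ∧ v ∈ G.ends e

/-- Vertex `v` misses some colour. -/
def Low (G : Multigraph) (c : G.E → Option Bool) (v : G.V) : Prop := ∃ a, ¬ G.Has c v a

/-- Number of coloured edges. -/
def csize (G : Multigraph) (c : G.E → Option Bool) : ℕ :=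
  (Finset.univ.filter (fun e : G.E => (c e).isSome = true)).card

/-- Edge `e` is one of the parallel edges of a triangle with one doubled edge. -/
def Fat (G : Multigraph) (e : G.E) : Prop :=
  ∃ f g h a b x, e ≠ f ∧ G.ends e = s(a, b) ∧ G.ends f = s(a, b) ∧
    G.ends g = s(a, x) ∧ G.ends h = s(b, x)

/-- Proper colourings that colour all fat edges. -/
def Good (G : Multigraph) (c : G.E → Option Bool) : Prop :=
  G.Prp c ∧ ∀ e, G.Fat e → c e ≠ none

/-- Good colourings of maximum size. -/
def Opt (G : Multigraph) (c : G.E → Option Bool) : Prop :=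
  G.Good c ∧ ∀ c', G.Good c' → G.csize c' ≤ G.csize c

/-- The simple graph of coloured edges. -/
def CG (G : Multigraph) (c : G.E → Option Bool) : SimpleGraph G.V where
  Adj u v := u ≠ v ∧ ∃ e, c e ≠ none ∧ G.ends e = s(u, v)
  symm := ⟨fun u v h => ⟨h.1.symm, by
    obtain ⟨e, h1, h2⟩ := h.2
    exact ⟨e, h1, by rw [h2, Sym2.eq_swap]⟩⟩⟩
  loopless := ⟨fun u h => h.1 rfl⟩

theorem ne_of_ends {G : Multigraph} (hl : G.Loopless) {e : G.E} {u v : G.V}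
    (h : G.ends e = s(u, v)) : u ≠ v := by
  intro huv
  apply hl e
  unfold IsLoop
  rw [h, huv]
  simp

theorem three_edges {G : Multigraph} (hl : G.Loopless) (hc : ∀ v : G.V, G.deg v = 3) (v : G.V) :
    ∃ e₁ e₂ e₃ : G.E, e₁ ≠ e₂ ∧ e₁ ≠ e₃ ∧ e₂ ≠ e₃ ∧
      ∀ e, v ∈ G.ends e ↔ e = e₁ ∨ e = e₂ ∨ e = e₃ := by
  classical
  have h := hc v
  unfold deg at h
  have h2 : ∀ e : G.E, (if G.ends e = Sym2.diag v then 2 else if v ∈ G.ends e then 1 else 0)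
      = if v ∈ G.ends e then 1 else 0 := by
    intro e
    rw [if_neg]
    intro h3
    apply hl e
    unfold IsLoop
    rw [h3]
    exact Sym2.diag_isDiag v
  rw [Finset.sum_congr rfl (fun e _ => h2 e), ← Finset.card_filter, Finset.card_eq_three] at h
  obtain ⟨x, y, z, h1, h2, h3, h4⟩ := h
  refine ⟨x, y, z, h1, h2, h3, fun e => ?_⟩
  have := Finset.ext_iff.1 h4 e
  simpa using this

theorem low_iff {G : Multigraph} {c : G.E → Option Bool} (hp : G.Prp c) (v : G.V) :
    G.Low c v ↔ ∀ e f, c e ≠ none → c f ≠ none → v ∈ G.ends e → v ∈ G.ends f → e = f := by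
  constructor
  · rintro ⟨a, ha⟩ e f he hf hve hvf
    obtain ⟨x, hx⟩ := Option.ne_none_iff_exists'.1 he
    obtain ⟨y, hy⟩ := Option.ne_none_iff_exists'.1 hf
    have h1 : x ≠ a := by rintro rfl; exact ha ⟨e, hx, hve⟩
    have h2 : y ≠ a := by rintro rfl; exact ha ⟨f, hy, hvf⟩
    have h3 : x = y := by cases x <;> cases y <;> cases a <;> simp_all
    subst h3
    exact hp e f x v hx hy hve hvf
  · intro h
    by_contra hlow
    unfold Low at hlow
    push Not at hlow
    obtain ⟨e, he, hve⟩ := hlow true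
    obtain ⟨f, hf, hvf⟩ := hlow false
    have := h e f (by simp [he]) (by simp [hf]) hve hvf
    subst this
    simp [he] at hf

/-- At a vertex seeing both colours there is exactly one uncoloured edge. -/
theorem high_unc {G : Multigraph} (hl : G.Loopless) (hc : ∀ v : G.V, G.deg v = 3)
    {c : G.E → Option Bool} (hp : G.Prp c) {v : G.V} (hv : ¬ G.Low c v) :
    ∃ g, c g = none ∧ v ∈ G.ends g ∧ ∀ g', c g' = none → v ∈ G.ends g' → g' = g := by
  obtain ⟨x, y, z, h1, h2, h3, h4⟩ := three_edges hl hc v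
  unfold Low at hv
  push Not at hv
  obtain ⟨e, he, hve⟩ := hv true
  obtain ⟨f, hf, hvf⟩ := hv false
  have key : ∀ g, v ∈ G.ends g → c g ≠ none → g = e ∨ g = f := by
    intro g hg hcg
    obtain ⟨a, ha⟩ := Option.ne_none_iff_exists'.1 hcg
    cases a
    · right; exact hp g f false v ha hf hg hvf
    · left; exact hp g e true v ha he hg hve
  have hx := (h4 x).2 (by simp)
  have hy := (h4 y).2 (by simp)
  have hz := (h4 z).2 (by simp)
  have he' := (h4 e).1 hve
  have hf' := (h4 f).1 hvf
  have := key x hx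
  have := key y hy
  have := key z hz
  have hef : e ≠ f := by rintro rfl; simp [he] at hf
  have : ∃ g, g ≠ e ∧ g ≠ f ∧ (g = x ∨ g = y ∨ g = z) := by
    clear key h4 hx hy hz hp hv hl hc
    by_cases q1 : x = e ∨ x = f
    · by_cases q2 : y = e ∨ y = f
      · exact ⟨z, by grind, by grind, by simp⟩
      · exact ⟨y, by grind, by grind, by simp⟩
    · exact ⟨x, by grind, by grind, by simp⟩
  obtain ⟨g, hg1, hg2, hg3⟩ := this
  refine ⟨g, ?_, (h4 g).2 hg3, ?_⟩
  · by_contra hne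
    have := key g ((h4 g).2 hg3) hne
    exact this.elim hg1 hg2
  · intro g' hg' hv'
    have := (h4 g').1 hv'
    have hge : g' ≠ e := by rintro rfl; simp [he] at hg'
    have hgf : g' ≠ f := by rintro rfl; simp [hf] at hg'
    clear key h4 hx hy hz hp hv hl hc hv' hve hvf
    grind

theorem csize_update_some {G : Multigraph} {c : G.E → Option Bool} {e : G.E} (a : Bool)
    (he : c e = none) : G.csize (Function.update c e (some a)) = G.csize c + 1 := by
  classical
  unfold csize
  rw [← Finset.card_insert_of_notMem (a := e) (s := Finset.univ.filter (fun e : G.E => (c e).isSome = true))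
    (by simp [he])]
  congr 1
  ext x
  by_cases hx : x = e <;> simp [Function.update_apply, hx]

theorem csize_update_none {G : Multigraph} {c : G.E → Option Bool} {e : G.E}
    (he : c e ≠ none) : G.csize (Function.update c e none) + 1 = G.csize c := by
  obtain ⟨a, ha⟩ := Option.ne_none_iff_exists'.1 he
  have := csize_update_some (G := G) (c := Function.update c e none) (e := e) a (by simp)
  rw [← this]
  congr 1
  rw [Function.update_idem, ← ha, Function.update_eq_self]

/-- Colouring an edge whose ends both miss colour `a`. -/
theorem good_add {G : Multigraph} {c : G.E → Option Bool} (hg : G.Good c) {e : G.E} {u w : G.V}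
    (he : G.ends e = s(u, w)) {a : Bool} (hu : ¬ G.Has c u a) (hw : ¬ G.Has c w a) :
    G.Good (Function.update c e (some a)) := by
  have key : ∀ v, v ∈ G.ends e → ∀ f, c f = some a → v ∉ G.ends f := by
    intro v hv f hf hvf
    rw [he, Sym2.mem_iff] at hv
    rcases hv with rfl | rfl
    · exact hu ⟨f, hf, hvf⟩
    · exact hw ⟨f, hf, hvf⟩
  refine ⟨?_, ?_⟩
  · intro x y b v hx hy hvx hvy
    have := hg.1 x y b v
    simp only [Function.update_apply] at hx hy
    grind
  · intro x hx
    have := hg.2 x hx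
    simp only [Function.update_apply]
    grind

theorem good_remove {G : Multigraph} {c : G.E → Option Bool} (hg : G.Good c) {e : G.E}
    (he : ¬ G.Fat e) : G.Good (Function.update c e none) := by
  refine ⟨?_, ?_⟩
  · intro x y b v hx hy hvx hvy
    have := hg.1 x y b v
    simp only [Function.update_apply] at hx hy
    grind
  · intro x hx
    have := hg.2 x hx
    simp only [Function.update_apply]
    grind

theorem opt_add {G : Multigraph} {c : G.E → Option Bool} (hg : G.Opt c) {e : G.E} {u w : G.V}
    (hn : c e = none)
    (he : G.ends e = s(u, w)) {a : Bool} (hu : ¬ G.Has c u a) : G.Has c w a := by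
  by_contra hw
  have := hg.2 _ (good_add hg.1 he hu hw)
  rw [csize_update_some a hn] at this
  omega

open Classical in
/-- Kempe swap on a set of vertices. -/
noncomputable def kswap (G : Multigraph) (c : G.E → Option Bool) (S : Set G.V) : G.E → Option Bool :=
  fun e => if ∃ v ∈ G.ends e, v ∈ S then (c e).map not else c e

theorem kswap_none {G : Multigraph} {c : G.E → Option Bool} {S : Set G.V} (e : G.E) :
    G.kswap c S e = none ↔ c e = none := by
  unfold kswap
  split_ifs <;> simp

theorem kswap_in {G : Multigraph} {c : G.E → Option Bool} {S : Set G.V} {e : G.E} {v : G.V}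
    (hv : v ∈ G.ends e) (hS : v ∈ S) (a : Bool) :
    G.kswap c S e = some a ↔ c e = some (!a) := by
  unfold kswap
  rw [if_pos ⟨v, hv, hS⟩]
  cases c e with
  | none => simp
  | some b => cases a <;> cases b <;> simp

theorem kswap_out {G : Multigraph} {c : G.E → Option Bool} {S : Set G.V}
    (hS : ∀ e, c e ≠ none → ∀ v ∈ G.ends e, v ∈ S → ∀ w ∈ G.ends e, w ∈ S)
    {e : G.E} {v : G.V}
    (hv : v ∈ G.ends e) (hvS : v ∉ S) :
    G.kswap c S e = c e := by
  unfold kswap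
  split_ifs with h
  · obtain ⟨w, hw, hwS⟩ := h
    by_cases hn : c e = none
    · simp [hn]
    · exact absurd (hS e hn w hw hwS v hv) hvS
  · rfl

theorem opt_kswap {G : Multigraph} {c : G.E → Option Bool} {S : Set G.V}
    (hS : ∀ e, c e ≠ none → ∀ v ∈ G.ends e, v ∈ S → ∀ w ∈ G.ends e, w ∈ S)
    (ho : G.Opt c) : G.Opt (G.kswap c S) := by
  have hsz : G.csize (G.kswap c S) = G.csize c := by
    unfold csize
    congr 1
    ext e
    have := kswap_none (c := c) (S := S) e
    simp only [Finset.mem_filter, Finset.mem_univ, true_and, Option.isSome_iff_ne_none, ne_eq, this]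
  refine ⟨⟨?_, ?_⟩, ?_⟩
  · intro e f a v he hf hve hvf
    by_cases hv : v ∈ S
    · rw [kswap_in hve hv] at he
      rw [kswap_in hvf hv] at hf
      exact ho.1.1 e f _ v he hf hve hvf
    · rw [kswap_out hS hve hv] at he
      rw [kswap_out hS hvf hv] at hf
      exact ho.1.1 e f _ v he hf hve hvf
  · intro e he
    rw [ne_eq, kswap_none]
    exact ho.1.2 e he
  · intro c' hc'
    rw [hsz]
    exact ho.2 c' hc'

theorem cg_step {G : Multigraph} {c : G.E → Option Bool} {e : G.E} (he : c e ≠ none) {v w : G.V}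
    (hv : v ∈ G.ends e) (hw : w ∈ G.ends e) : (G.CG c).Reachable v w := by
  by_cases h : v = w
  · subst h; exact SimpleGraph.Reachable.refl _
  · apply SimpleGraph.Adj.reachable
    exact ⟨h, e, he, ((Sym2.mem_and_mem_iff h).1 ⟨hv, hw⟩)⟩

/-- An uncoloured edge between two low vertices: they miss different colours and lie in the same
component. -/
theorem adj_low {G : Multigraph} {c : G.E → Option Bool} (ho : G.Opt c) {e : G.E} {u w : G.V}
    (hn : c e = none) (he : G.ends e = s(u, w)) (hu : G.Low c u) (hw : G.Low c w) :
    (G.CG c).Reachable u w := by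
  by_contra hr
  obtain ⟨a, ha⟩ := hu
  obtain ⟨b, hb⟩ := hw
  have hab : b = !a := by
    have := opt_add ho hn he ha
    cases a <;> cases b <;> simp_all
  subst hab
  let S : Set G.V := {v | (G.CG c).Reachable u v}
  have hS : ∀ e, c e ≠ none → ∀ v ∈ G.ends e, v ∈ S → ∀ w ∈ G.ends e, w ∈ S := by
    intro e he v hv hvS w hw
    exact SimpleGraph.Reachable.trans hvS (cg_step he hv hw)
  have h1 := opt_kswap hS ho
  have hwS : w ∉ S := hr
  have huS : u ∈ S := SimpleGraph.Reachable.refl _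
  have h2 := opt_add h1 (e := e) (u := u) (w := w) (a := !a) (by rw [kswap_none]; exact hn) he (by
    rintro ⟨f, hf, huf⟩
    rw [kswap_in huf huS] at hf
    exact ha ⟨f, by simpa using hf, huf⟩)
  obtain ⟨f, hf, hwf⟩ := h2
  rw [kswap_out hS hwf hwS] at hf
  exact hb ⟨f, hf, hwf⟩

/-- A component contains at most two low vertices. -/
theorem comp_low {G : Multigraph} {c : G.E → Option Bool} (hp : G.Prp c)
    {x y z : G.V} (hx : G.Low c x) (hy : G.Low c y) (hz : G.Low c z)
    (hxy : x ≠ y) (hxz : x ≠ z) (hyz : y ≠ z)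
    (rxy : (G.CG c).Reachable x y) (rxz : (G.CG c).Reachable x z) : False := by
  classical
  let K := (G.CG c).connectedComponentMk x
  let Γ := K.toSimpleGraph
  have hconn : Γ.Connected := K.connected_toSimpleGraph
  have h1 := hconn.card_vert_le_card_edgeSet_add_one
  have h2 := Γ.sum_degrees_eq_twice_card_edges
  have mem : ∀ v, (G.CG c).Reachable x v → v ∈ K := by
    intro v hv
    exact SimpleGraph.ConnectedComponent.sound hv.symm
  let X : K := ⟨x, mem x (SimpleGraph.Reachable.refl _)⟩
  let Y : K := ⟨y, mem y rxy⟩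
  let Z : K := ⟨z, mem z rxz⟩
  have hedge : ∀ v w : K, Γ.Adj v w → ∃ a e, c e = some a ∧ G.ends e = s(v.1, w.1) := by
    intro v w hvw
    have : (G.CG c).Adj v.1 w.1 := hvw
    obtain ⟨_, e, he, hee⟩ := this
    obtain ⟨a, ha⟩ := Option.ne_none_iff_exists'.1 he
    exact ⟨a, e, ha, hee⟩
  have : Nonempty G.E := by
    obtain ⟨p⟩ := rxy
    cases p with
    | nil => exact absurd rfl hxy
    | cons h _ => exact ⟨h.2.choose⟩
  choose! col edg hcol hends using hedge
  have hinj : ∀ v : K, Set.InjOn (col v) (Γ.neighborFinset v : Set K) := by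
    intro v w hw w' hw' hww
    have a1 : Γ.Adj v w := by simpa using hw
    have a2 : Γ.Adj v w' := by simpa using hw'
    have e1 := hp (edg v w) (edg v w') (col v w) v.1 (hcol v w a1) (by rw [hww]; exact hcol v w' a2)
      (by rw [hends v w a1]; simp) (by rw [hends v w' a2]; simp)
    have := hends v w a1
    rw [e1, hends v w' a2] at this
    have := Sym2.congr_right.1 this
    exact Subtype.ext this.symm
  have hdeg : ∀ v : K, Γ.degree v ≤ 2 := by
    intro v
    rw [← SimpleGraph.card_neighborFinset_eq_degree, ← Finset.card_image_of_injOn (hinj v)]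
    exact (Finset.card_le_univ _).trans (by simp)
  have hdegl : ∀ v : K, G.Low c v.1 → Γ.degree v ≤ 1 := by
    rintro v ⟨a, ha⟩
    rw [← SimpleGraph.card_neighborFinset_eq_degree, ← Finset.card_image_of_injOn (hinj v)]
    have : (Γ.neighborFinset v).image (col v) ⊆ {!a} := by
      intro b hb
      rw [Finset.mem_image] at hb
      obtain ⟨w, hw, rfl⟩ := hb
      have a1 : Γ.Adj v w := by simpa using hw
      rw [Finset.mem_singleton]
      have : col v w ≠ a := by
        intro h
        exact ha ⟨edg v w, by rw [hcol v w a1, h], by rw [hends v w a1]; simp⟩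
      cases h : col v w <;> cases a <;> simp_all
    simpa using Finset.card_le_card this
  have hXYZ : ({X, Y, Z} : Finset K).card = 3 := by
    rw [Finset.card_eq_three]
    exact ⟨X, Y, Z, by simp [X, Y, hxy], by simp [X, Z, hxz], by simp [Y, Z, hyz], rfl⟩
  have h3 : ∑ v, (Γ.degree v + if v ∈ ({X, Y, Z} : Finset K) then 1 else 0) ≤ ∑ _v : K, 2 := by
    apply Finset.sum_le_sum
    intro v _
    split_ifs with h
    · have : G.Low c v.1 := by
        simp only [Finset.mem_insert, Finset.mem_singleton] at h
        rcases h with rfl | rfl | rfl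
        · exact hx
        · exact hy
        · exact hz
      have := hdegl v this
      omega
    · have := hdeg v
      omega
  rw [Finset.sum_add_distrib, h2, ← Finset.card_filter] at h3
  have h4 : (Finset.univ.filter (fun v => v ∈ ({X, Y, Z} : Finset K))) = {X, Y, Z} := by
    ext v; simp
  rw [h4, hXYZ] at h3
  simp only [Finset.sum_const, Finset.card_univ, smul_eq_mul] at h3
  rw [Nat.card_eq_fintype_card, Nat.card_eq_fintype_card, ← SimpleGraph.edgeFinset_card] at h1
  omega


theorem opt_of_size {G : Multigraph} {c c' : G.E → Option Bool} (ho : G.Opt c) (hg : G.Good c')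
    (h : G.csize c' = G.csize c) : G.Opt c' :=
  ⟨hg, fun d hd => h ▸ ho.2 d hd⟩

/-- One end of an uncoloured edge lying on a fat edge sees both colours. -/
theorem fat_high {G : Multigraph} {c : G.E → Option Bool} (hg : G.Good c) {e : G.E}
    (he : G.Fat e) {v : G.V} (hv : v ∈ G.ends e) : ¬ G.Low c v := by
  obtain ⟨f, g, h, a, b, x, hef, h1, h2, h3, h4⟩ := he
  intro hl
  rw [low_iff hg.1] at hl
  apply hef
  apply hl e f (hg.2 e ⟨f, g, h, a, b, x, hef, h1, h2, h3, h4⟩)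
    (hg.2 f ⟨e, g, h, a, b, x, hef.symm, h2, h1, h3, h4⟩) hv
  rw [h2, ← h1]
  exact hv

/-- Rotation step. -/
theorem rot_step {G : Multigraph} {c : G.E → Option Bool} (ho : G.Opt c) {f f' : G.E} {x y : G.V}
    (hn : c f = none) (hf : G.ends f = s(x, y)) (hx : G.Low c x) (hy : G.Low c y)
    (hf' : c f' ≠ none) (hxf : x ∈ G.ends f') :
    ∃ c', G.Opt c' ∧ ∀ e, c' e ≠ none ↔ ((c e ≠ none ∨ e = f) ∧ e ≠ f') := by
  obtain ⟨a, ha⟩ := Option.ne_none_iff_exists'.1 hf'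
  have hff : f ≠ f' := by rintro rfl; exact hf' hn
  have hxa : ¬ G.Has c x (!a) := by
    obtain ⟨b, hb⟩ := hx
    have : b ≠ a := by rintro rfl; exact hb ⟨f', ha, hxf⟩
    have : b = !a := by cases a <;> cases b <;> simp_all
    exact this ▸ hb
  have hya : ¬ G.Has c y a := by
    have h1 := opt_add ho hn hf hxa
    obtain ⟨b, hb⟩ := hy
    have : b ≠ !a := by rintro rfl; exact hb h1
    have : b = a := by cases a <;> cases b <;> simp_all
    exact this ▸ hb
  have hfat : ¬ G.Fat f' := fun h => fat_high ho.1 h hxf hx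
  have g1 := good_remove ho.1 hfat
  have g2 : G.Good (Function.update (Function.update c f' none) f (some a)) := by
    apply good_add g1 hf
    · rintro ⟨e, he, hxe⟩
      by_cases h : e = f'
      · subst h; simp at he
      · rw [Function.update_of_ne h] at he
        exact h (ho.1.1 e f' a x he ha hxe hxf)
    · rintro ⟨e, he, hxe⟩
      by_cases h : e = f'
      · subst h; simp at he
      · rw [Function.update_of_ne h] at he
        exact hya ⟨e, he, hxe⟩
  refine ⟨_, opt_of_size ho g2 ?_, ?_⟩
  · rw [csize_update_some, csize_update_none hf']
    rw [Function.update_of_ne hff]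
    exact hn
  · intro e
    by_cases h1 : e = f
    · subst h1; simp [hff]
    · by_cases h2 : e = f'
      · subst h2; simp [h1]
      · simp [h1, h2]

theorem rot_low {G : Multigraph} {c c' : G.E → Option Bool} (hp : G.Prp c) (hp' : G.Prp c')
    {e f : G.E} {u w : G.V} (hn : c e = none)
    (he : G.ends e = s(u, w)) (hu : G.Low c u) (hw : G.Low c w)
    (hf : c f ≠ none ∨ f = e)
    (h : ∀ x, c' x ≠ none ↔ ((c x ≠ none ∨ x = e) ∧ x ≠ f)) {m : G.V} (hm : m ∈ G.ends f) :
    G.Low c' m := by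
  rw [low_iff hp']
  intro p q h1 h2 h3 h4
  rw [h] at h1 h2
  by_contra hpq
  by_cases hme : m ∈ G.ends e
  · have hml : G.Low c m := by
      rw [he, Sym2.mem_iff] at hme
      rcases hme with rfl | rfl
      · exact hu
      · exact hw
    rw [low_iff hp] at hml
    rcases h1 with ⟨h1 | h1, h1'⟩ <;> rcases h2 with ⟨h2 | h2, h2'⟩ <;> rcases hf with hf | hf
    · exact hpq (hml p q h1 h2 h3 h4)
    · exact hpq (hml p q h1 h2 h3 h4)
    · exact h1' (hml p f h1 hf h3 hm)
    · exact h2' (h2.trans hf.symm)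
    · exact h2' (hml q f h2 hf h4 hm)
    · exact h1' (h1.trans hf.symm)
    · exact hpq (h1.trans h2.symm)
    · exact hpq (h1.trans h2.symm)
  · have k : ∀ z, (c z ≠ none ∨ z = e) → m ∈ G.ends z → c z ≠ none := by
      rintro z (hz | rfl) hmz
      · exact hz
      · exact absurd hmz hme
    obtain ⟨a, ha⟩ := Option.ne_none_iff_exists'.1 (k p h1.1 h3)
    obtain ⟨b, hb⟩ := Option.ne_none_iff_exists'.1 (k q h2.1 h4)
    obtain ⟨d, hd⟩ := Option.ne_none_iff_exists'.1 (k f hf hm)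
    have k1 : a ≠ b := by rintro rfl; exact hpq (hp p q a m ha hb h3 h4)
    have k2 : a ≠ d := by rintro rfl; exact h1.2 (hp p f a m ha hd h3 hm)
    have k3 : b ≠ d := by rintro rfl; exact h2.2 (hp q f b m hb hd h4 hm)
    cases a <;> cases b <;> cases d <;> simp_all

theorem rot {G : Multigraph} {c : G.E → Option Bool} (ho : G.Opt c)
    {e : G.E} {u w : G.V} (hn : c e = none)
    (he : G.ends e = s(u, w)) (hu : G.Low c u) (hw : G.Low c w) {m : G.V}
    (hm : (G.CG c).Reachable u m) :
    ∃ c' f, G.Opt c' ∧ m ∈ G.ends f ∧ (c f ≠ none ∨ f = e) ∧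
      ∀ x, c' x ≠ none ↔ ((c x ≠ none ∨ x = e) ∧ x ≠ f) := by
  rw [SimpleGraph.reachable_iff_reflTransGen] at hm
  induction hm with
  | refl =>
    refine ⟨c, e, ho, by rw [he]; simp, Or.inr rfl, ?_⟩
    intro x
    constructor
    · intro h
      exact ⟨Or.inl h, by rintro rfl; exact h hn⟩
    · rintro ⟨h | h, h'⟩
      · exact h
      · exact absurd h h'
  | tail _ hyz ih =>
    obtain ⟨c', f, ho', hmf, hf, hcol⟩ := ih
    obtain ⟨_, h, hh, hends⟩ := hyz
    by_cases hhf : h = f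
    · exact ⟨c', f, ho', by rw [← hhf, hends]; simp, hf, hcol⟩
    · obtain ⟨y, hy⟩ := hmf
      have l1 := rot_low ho.1.1 ho'.1.1 hn he hu hw hf hcol (m := y) (by rw [hy]; simp)
      have l2 := rot_low ho.1.1 ho'.1.1 hn he hu hw hf hcol ⟨y, hy⟩
      have nf : c' f = none := by
        by_contra hne
        exact ((hcol f).1 hne).2 rfl
      obtain ⟨c'', o, hc''⟩ := rot_step ho' nf hy l2 l1 ((hcol h).2 ⟨Or.inl hh, hhf⟩)
        (by rw [hends]; simp)
      refine ⟨c'', h, o, by rw [hends]; simp, Or.inl hh, ?_⟩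
      intro x
      rw [hc'', hcol]
      by_cases hx : x = f
      · subst hx; simp [hf]
      · simp [hx]

/-- Vertices of a closed component have no low neighbours outside via uncoloured edges. -/
theorem closed_nbr {G : Multigraph} {c : G.E → Option Bool} (ho : G.Opt c)
    {e : G.E} {u w : G.V} (hn : c e = none)
    (he : G.ends e = s(u, w)) (hu : G.Low c u) (hw : G.Low c w) {m q : G.V}
    (hm : (G.CG c).Reachable u m) {g : G.E} (hg : c g = none) (hgm : G.ends g = s(m, q))
    (hq : G.Low c q) : (G.CG c).Reachable u q := by
  have huw := adj_low ho hn he hu hw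
  by_cases hqe : q ∈ G.ends e
  · rw [he, Sym2.mem_iff] at hqe
    rcases hqe with rfl | rfl
    · exact SimpleGraph.Reachable.refl _
    · exact huw
  obtain ⟨c', f, ho', hmf, hf, hcol⟩ := rot ho hn he hu hw hm
  have hge : g ≠ e := by
    rintro rfl
    apply hqe
    rw [hgm]
    simp
  have hg' : c' g = none := by
    by_contra hne
    rcases ((hcol g).1 hne).1 with h | h
    · exact h hg
    · exact hge h
  have lm := rot_low ho.1.1 ho'.1.1 hn he hu hw hf hcol hmf
  have lq : G.Low c' q := by
    rw [low_iff ho'.1.1]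
    rw [low_iff ho.1.1] at hq
    have k : ∀ z, c' z ≠ none → q ∈ G.ends z → c z ≠ none := by
      intro z hz hqz
      rcases ((hcol z).1 hz).1 with h | rfl
      · exact h
      · exact absurd hqz hqe
    intro p r hp hr hqp hqr
    exact hq p r (k p hp hqp) (k r hr hqr) hqp hqr
  have hr := adj_low ho' hg' hgm lm lq
  refine hm.trans ?_
  rw [SimpleGraph.reachable_iff_reflTransGen] at hr
  clear lq hq hqe hgm hg hge hg'
  induction hr with
  | refl => exact SimpleGraph.Reachable.refl _
  | tail _ h ih =>
    refine ih.trans ?_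
    obtain ⟨_, p, hp, hends⟩ := h
    rcases ((hcol p).1 hp).1 with h | rfl
    · exact cg_step h (by rw [hends]; simp) (by rw [hends]; simp)
    · have := hends.symm.trans he
      rw [Sym2.eq_iff] at this
      rcases this with ⟨rfl, rfl⟩ | ⟨rfl, rfl⟩
      · exact huw
      · exact huw.symm


/-- Vertex `v` is not touched by any coloured edge. -/
def Iso (G : Multigraph) (c : G.E → Option Bool) (v : G.V) : Prop := ∀ a, ¬ G.Has c v a

/-- `u` is an end of a path whose two ends are joined by an uncoloured edge. -/
def Clo (G : Multigraph) (c : G.E → Option Bool) (u : G.V) : Prop :=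
  ∃ e w, c e = none ∧ G.ends e = s(u, w) ∧ G.Low c u ∧ G.Low c w

/-- All other vertices seeing exactly one colour. -/
def Opn (G : Multigraph) (c : G.E → Option Bool) (u : G.V) : Prop :=
  G.Low c u ∧ ¬ G.Iso c u ∧ ¬ G.Clo c u

open Classical in
/-- Number of isolated vertices. -/
noncomputable def niso (G : Multigraph) (c : G.E → Option Bool) : ℕ :=
  (Finset.univ.filter (fun v : G.V => G.Iso c v)).card

/-- Optimal colourings with fewest isolated vertices. -/
def Opt2 (G : Multigraph) (c : G.E → Option Bool) : Prop :=
  G.Opt c ∧ ∀ c', G.Opt c' → G.niso c ≤ G.niso c'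

theorem two_col {G : Multigraph} {c : G.E → Option Bool} (hp : G.Prp c) {p q r : G.E} {v : G.V}
    (hpq : p ≠ q) (cp : c p ≠ none) (cq : c q ≠ none) (cr : c r ≠ none)
    (vp : v ∈ G.ends p) (vq : v ∈ G.ends q) (vr : v ∈ G.ends r) : r = p ∨ r = q := by
  obtain ⟨a, ha⟩ := Option.ne_none_iff_exists'.1 cp
  obtain ⟨b, hb⟩ := Option.ne_none_iff_exists'.1 cq
  obtain ⟨d, hd⟩ := Option.ne_none_iff_exists'.1 cr
  have k1 : a ≠ b := by rintro rfl; exact hpq (hp p q a v ha hb vp vq)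
  by_cases k2 : d = a
  · subst k2; left; exact hp r p d v hd ha vr vp
  · have : d = b := by cases a <;> cases b <;> cases d <;> simp_all
    subst this; right; exact hp r q d v hd hb vr vq

theorem high_of_two {G : Multigraph} {c : G.E → Option Bool} (hp : G.Prp c) {p q : G.E} {v : G.V}
    (hpq : p ≠ q) (cp : c p ≠ none) (cq : c q ≠ none)
    (vp : v ∈ G.ends p) (vq : v ∈ G.ends q) : ¬ G.Low c v := by
  intro h
  rw [low_iff hp] at h
  exact hpq (h p q cp cq vp vq)

theorem unc_unique {G : Multigraph} (hl : G.Loopless) (hc : ∀ v : G.V, G.deg v = 3)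
    {c : G.E → Option Bool} (hp : G.Prp c) {v : G.V} (hv : ¬ G.Low c v) {g g' : G.E}
    (h1 : c g = none) (h2 : c g' = none) (v1 : v ∈ G.ends g) (v2 : v ∈ G.ends g') : g = g' := by
  obtain ⟨x, _, _, h⟩ := high_unc hl hc hp hv
  rw [h g h1 v1, h g' h2 v2]

theorem fat_partner {G : Multigraph} (hl : G.Loopless) (hc : ∀ v : G.V, G.deg v = 3)
    {c : G.E → Option Bool} (hg : G.Good c) {v x : G.V} {g e : G.E} (hn : c g = none)
    (hgx : G.ends g = s(v, x)) (he : G.Fat e) (hx : x ∈ G.ends e) :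
    ∃ h b f, e ≠ f ∧ c e ≠ none ∧ c f ≠ none ∧ G.ends e = s(x, b) ∧ G.ends f = s(x, b) ∧
      G.ends h = s(v, b) := by
  have main : ∀ (f g' h : G.E) (b z : G.V), e ≠ f → G.ends e = s(x, b) → G.ends f = s(x, b) →
      G.ends g' = s(x, z) → G.ends h = s(b, z) → ∃ h b f, e ≠ f ∧ c e ≠ none ∧ c f ≠ none ∧
      G.ends e = s(x, b) ∧ G.ends f = s(x, b) ∧ G.ends h = s(v, b) := by
    intro f g' h b z hef h1 h2 h3 h4
    have ce := hg.2 e he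
    have cf := hg.2 f ⟨e, g', h, x, b, z, hef.symm, h2, h1, h3, h4⟩
    have hx1 : x ∈ G.ends e := by rw [h1]; simp
    have hx2 : x ∈ G.ends f := by rw [h2]; simp
    have hx3 : x ∈ G.ends g' := by rw [h3]; simp
    have hzb : b ≠ z := ne_of_ends hl h4
    have ne1 : g' ≠ e := by
      rintro rfl
      exact hzb (Sym2.congr_right.1 (h1.symm.trans h3))
    have ne2 : g' ≠ f := by
      rintro rfl
      exact hzb (Sym2.congr_right.1 (h2.symm.trans h3))
    have cg' : c g' = none := by
      by_contra hne
      rcases two_col hg.1 hef ce cf hne hx1 hx2 hx3 with h | h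
      · exact ne1 h
      · exact ne2 h
    have := unc_unique hl hc hg.1 (high_of_two hg.1 hef ce cf hx1 hx2) hn cg'
      (by rw [hgx]; simp) hx3
    subst this
    rw [hgx, Sym2.eq_swap] at h3
    have := Sym2.congr_right.1 h3
    subst this
    exact ⟨h, b, f, hef, ce, cf, h1, h2, by rw [h4, Sym2.eq_swap]⟩
  obtain ⟨f, g', h, a, b, z, hef, h1, h2, h3, h4⟩ := id he
  have hx' := hx
  rw [h1, Sym2.mem_iff] at hx'
  rcases hx' with rfl | rfl
  · exact main f g' h b z hef h1 h2 h3 h4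
  · exact main f h g' a z hef (by rw [h1, Sym2.eq_swap]) (by rw [h2, Sym2.eq_swap]) h4 h3

/-- An isolated vertex has a neighbour not on a fat edge. -/
theorem iso_nonfat {G : Multigraph} (hl : G.Loopless) (hc : ∀ v : G.V, G.deg v = 3)
    {c : G.E → Option Bool} (hg : G.Good c) {v : G.V} (hv : G.Iso c v) :
    ∃ g x, G.ends g = s(v, x) ∧ ∀ e, x ∈ G.ends e → ¬ G.Fat e := by
  by_contra hcon
  push Not at hcon
  have vn : ∀ g, v ∈ G.ends g → c g = none := by
    intro g hg
    by_contra hne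
    obtain ⟨a, ha⟩ := Option.ne_none_iff_exists'.1 hne
    exact hv a ⟨g, ha, hg⟩
  let Pr : G.E → G.E → Prop := fun g h => ∃ x b e f, e ≠ f ∧ c e ≠ none ∧ c f ≠ none ∧
    G.ends e = s(x, b) ∧ G.ends f = s(x, b) ∧ G.ends g = s(v, x) ∧ G.ends h = s(v, b)
  have hPr : ∀ g, v ∈ G.ends g → ∃ h, v ∈ G.ends h ∧ Pr g h := by
    rintro g ⟨x, hx⟩
    obtain ⟨e, hxe, hfe⟩ := hcon g x hx
    obtain ⟨h, b, f, h1, h2, h3, h4, h5, h6⟩ :=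
      fat_partner hl hc hg (vn g (by rw [hx]; simp)) hx hfe hxe
    exact ⟨h, by rw [h6]; simp, x, b, e, f, h1, h2, h3, h4, h5, hx, h6⟩
  have hsymm : ∀ g h, Pr g h → Pr h g := by
    rintro g h ⟨x, b, e, f, h1, h2, h3, h4, h5, h6, h7⟩
    exact ⟨b, x, e, f, h1, h2, h3, by rw [h4, Sym2.eq_swap], by rw [h5, Sym2.eq_swap], h7, h6⟩
  have hirr : ∀ g, ¬ Pr g g := by
    rintro g ⟨x, b, e, f, h1, h2, h3, h4, h5, h6, h7⟩
    have := Sym2.congr_right.1 (h6.symm.trans h7)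
    exact ne_of_ends hl h4 this
  have huni : ∀ g g' h, Pr g h → Pr g' h → g = g' := by
    rintro g g' h ⟨x, b, e, f, h1, h2, h3, h4, h5, h6, h7⟩ ⟨x', b', e', f', k1, k2, k3, k4, k5, k6, k7⟩
    have := Sym2.congr_right.1 (h7.symm.trans k7)
    subst this
    have hxx : x = x' := by
      rcases two_col hg.1 h1 h2 h3 k2 (v := b) (by rw [h4]; simp) (by rw [h5]; simp)
        (by rw [k4]; simp) with h | h
      · subst h
        exact Sym2.congr_left.1 (h4.symm.trans k4)
      · subst h
        exact Sym2.congr_left.1 (h5.symm.trans k4)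
    subst hxx
    exact unc_unique hl hc hg.1 (high_of_two hg.1 h1 h2 h3 (v := x) (by rw [h4]; simp)
      (by rw [h5]; simp)) (vn g (by rw [h6]; simp)) (vn g' (by rw [k6]; simp)) (by rw [h6]; simp)
      (by rw [k6]; simp)
  obtain ⟨g₁, g₂, g₃, h12, h13, h23, hall⟩ := three_edges hl hc v
  obtain ⟨a, ha, pa⟩ := hPr g₁ ((hall g₁).2 (by simp))
  obtain ⟨b, hb, pb⟩ := hPr g₂ ((hall g₂).2 (by simp))
  obtain ⟨d, hd, pd⟩ := hPr g₃ ((hall g₃).2 (by simp))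
  rcases (hall a).1 ha with rfl | rfl | rfl
  · exact hirr _ pa
  · rcases (hall d).1 hd with rfl | rfl | rfl
    · exact h23 (huni _ _ _ (hsymm _ _ pa) pd)
    · exact h13 (huni _ _ _ pa pd)
    · exact hirr _ pd
  · rcases (hall b).1 hb with rfl | rfl | rfl
    · exact h23 (huni _ _ _ pb (hsymm _ _ pa))
    · exact hirr _ pb
    · exact h12 (huni _ _ _ pa pb)

theorem low_has {G : Multigraph} {c : G.E → Option Bool} {v : G.V} (h : G.Low c v) {a b : Bool}
    (ha : G.Has c v a) (hb : G.Has c v b) : a = b := by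
  obtain ⟨d, hd⟩ := h
  have h1 : a ≠ d := by rintro rfl; exact hd ha
  have h2 : b ≠ d := by rintro rfl; exact hd hb
  cases a <;> cases b <;> cases d <;> simp_all

theorem iso_low {G : Multigraph} {c : G.E → Option Bool} {v : G.V} (h : G.Iso c v) : G.Low c v :=
  ⟨true, h true⟩

theorem iso_nbr_high {G : Multigraph} {c : G.E → Option Bool} (ho : G.Opt c) {v x : G.V}
    (h : G.Iso c v) {g : G.E} (hg : G.ends g = s(v, x)) : c g = none ∧ ¬ G.Low c x := by
  have hn : c g = none := by
    by_contra hne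
    obtain ⟨a, ha⟩ := Option.ne_none_iff_exists'.1 hne
    exact h a ⟨g, ha, by rw [hg]; simp⟩
  refine ⟨hn, ?_⟩
  rintro ⟨a, ha⟩
  exact ha (opt_add ho hn hg (h a))

theorem iso_struct {G : Multigraph} (hl : G.Loopless) (hc : ∀ v : G.V, G.deg v = 3)
    {c : G.E → Option Bool} (ho : G.Opt2 c) {v : G.V} (hv : G.Iso c v) :
    ∃ g x, ∃ f : Bool → G.E, ∃ y : Bool → G.V, G.ends g = s(v, x) ∧
      ∀ a, c (f a) = some a ∧ G.ends (f a) = s(x, y a) ∧ G.Opn c (y a) := by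
  classical
  obtain ⟨g, x, hgx, hfat⟩ := iso_nonfat hl hc ho.1.1 hv
  obtain ⟨hn, hx⟩ := iso_nbr_high ho.1 hv hgx
  have hp := ho.1.1.1
  have hx' := hx
  unfold Low at hx'
  push Not at hx'
  choose f hf hxf using hx'
  choose y hy using hxf
  have hfn : ∀ a, c (f a) ≠ none := fun a => by simp [hf a]
  have hgf : ∀ a, g ≠ f a := by
    intro a h
    apply hfn a
    rw [← h, hn]
  have hvx : v ≠ x := ne_of_ends hl hgx
  have hxa : ∀ a, ¬ G.Has (Function.update c (f a) none) x a := by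
    rintro a ⟨e, he, hxe⟩
    by_cases h : e = f a
    · subst h; simp at he
    · rw [Function.update_of_ne h] at he
      exact h (hp e (f a) a x he (hf a) hxe (by rw [hy]; simp))
  have hva : ∀ a b, ¬ G.Has (Function.update c (f a) none) v b := by
    rintro a b ⟨e, he, hxe⟩
    by_cases h : e = f a
    · subst h; simp at he
    · rw [Function.update_of_ne h] at he
      exact hv b ⟨e, he, hxe⟩
  have hnfat : ∀ a, ¬ G.Fat (f a) := fun a => hfat (f a) (by rw [hy]; simp)
  have hgood : ∀ a, G.Good (Function.update (Function.update c (f a) none) g (some a)) := by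
    intro a
    exact good_add (good_remove ho.1.1 (hnfat a)) hgx (hva a a) (hxa a)
  have hlow : ∀ a, G.Low c (y a) := by
    intro a
    by_contra hnl
    have hopt := opt_of_size ho.1 (hgood a) (by
      rw [csize_update_some, csize_update_none (hfn a)]
      rw [Function.update_of_ne (hgf a)]
      exact hn)
    have hle := ho.2 _ hopt
    apply absurd hle
    rw [not_le]
    unfold niso
    apply Finset.card_lt_card
    rw [Finset.ssubset_iff_of_subset]
    · refine ⟨v, by simpa using hv, ?_⟩
      simp only [Finset.mem_filter, Finset.mem_univ, true_and]
      intro h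
      exact h a ⟨g, by simp, by rw [hgx]; simp⟩
    · intro z hz
      simp only [Finset.mem_filter, Finset.mem_univ, true_and] at hz ⊢
      rintro b ⟨e, he, hze⟩
      have key : ∀ e', c e' ≠ none → z ∈ G.ends e' → e' = f a := by
        intro e' he' hze'
        by_contra hne
        obtain ⟨d, hd⟩ := Option.ne_none_iff_exists'.1 he'
        refine hz d ⟨e', ?_, hze'⟩
        rw [Function.update_of_ne, Function.update_of_ne hne, hd]
        rintro rfl
        exact he' hn
      have := key e (by simp [he]) hze
      subst this
      rw [hy, Sym2.mem_iff] at hze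
      rcases hze with rfl | rfl
      · exact hz a ⟨g, by simp, by rw [hgx]; simp⟩
      · unfold Low at hnl
        push Not at hnl
        obtain ⟨e', he', hze'⟩ := hnl (!a)
        have := key e' (by simp [he']) hze'
        subst this
        rw [hf] at he'
        simp at he'
  refine ⟨g, x, f, y, hgx, fun a => ⟨hf a, hy a, hlow a, ?_, ?_⟩⟩
  · intro h
    exact h a ⟨f a, hf a, by rw [hy]; simp⟩
  · rintro ⟨e, w, hen, he, _, hw⟩
    have hya : ∀ b, G.Has c (y b) b := fun b => ⟨f b, hf b, by rw [hy]; simp⟩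
    have hne : y a ≠ y (!a) := by
      intro h
      have h1 := hya (!a)
      rw [← h] at h1
      have := low_has (hlow a) (hya a) h1
      cases a <;> simp at this
    have hwe : y a ≠ w := ne_of_ends hl he
    have r1 : (G.CG c).Reachable (y a) w := adj_low ho.1 hen he (hlow a) hw
    have r2 : (G.CG c).Reachable (y a) (y (!a)) :=
      (cg_step (hfn a) (w := x) (by rw [hy]; simp) (by rw [hy]; simp)).trans
        (cg_step (hfn (!a)) (by rw [hy]; simp) (by rw [hy]; simp))
    have hwy : y (!a) = w := by
      by_contra hne2
      exact comp_low hp (hlow a) (hlow (!a)) hw hne hwe hne2 r2 r1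
    subst hwy
    obtain ⟨c1, hc1⟩ : ∃ c1, c1 = Function.update (Function.update c (f a) none) g (some a) :=
      ⟨_, rfl⟩
    have hg1 : G.Good c1 := by rw [hc1]; exact hgood a
    have hgxa : y a ≠ x := (ne_of_ends hl (hy a)).symm
    have hgxb : y (!a) ≠ x := (ne_of_ends hl (hy (!a))).symm
    have hgva : ∀ b, y b ≠ v := by
      intro b h
      apply hv b
      rw [← h]
      exact hya b
    have hyg : ∀ b, y b ∉ G.ends g := by
      intro b hb
      rw [hgx, Sym2.mem_iff] at hb
      rcases hb with h | h
      · exact hgva b h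
      · exact (ne_of_ends hl (hy b)).symm h
    have no1 : ∀ b, ¬ G.Has c1 (y b) a := by
      rintro b ⟨e', he', hye'⟩
      rw [hc1, Function.update_of_ne (by rintro rfl; exact hyg b hye')] at he'
      by_cases h : e' = f a
      · subst h; simp at he'
      · rw [Function.update_of_ne h] at he'
        have hba : b = a := low_has (hlow b) (hya b) ⟨e', he', hye'⟩
        subst hba
        exact h (hp e' (f b) b _ he' (hf b) hye' (by rw [hy]; simp))
    have hfe : e ≠ f a := by rintro rfl; exact hfn a hen
    have hge : e ≠ g := by
      rintro rfl
      exact hyg a (by rw [he]; simp)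
    have := ho.1.2 _ (good_add hg1 he (no1 a) (no1 (!a)))
    rw [csize_update_some, hc1, csize_update_some, csize_update_none (hfn a)] at this
    · omega
    · rw [Function.update_of_ne (hgf a)]
      exact hn
    · rw [hc1, Function.update_of_ne hge, Function.update_of_ne hfe, hen]

open Classical in
theorem count_one {G : Multigraph} (hl : G.Loopless) (hc : ∀ v : G.V, G.deg v = 3)
    {c : G.E → Option Bool} (ho : G.Opt2 c) :
    2 * (Finset.univ.filter (fun v : G.V => G.Iso c v)).card ≤
      (Finset.univ.filter (fun v : G.V => G.Opn c v)).card := by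
  have key : ∀ v : G.V, ∃ y : Bool → G.V, G.Iso c v → ∃ g x, ∃ f : Bool → G.E, 
      G.ends g = s(v, x) ∧
      ∀ a, c (f a) = some a ∧ G.ends (f a) = s(x, y a) ∧ G.Opn c (y a) := by
    intro v
    by_cases hv : G.Iso c v
    · obtain ⟨g, x, f, y, h⟩ := iso_struct hl hc ho hv
      exact ⟨y, fun _ => ⟨g, x, f, h⟩⟩
    · exact ⟨fun _ => v, fun h => absurd h hv⟩
  choose y hy using key
  have hp := ho.1.1.1
  have := Finset.card_le_card_of_injOn
    (s := (Finset.univ.filter (fun v : G.V => G.Iso c v)) ×ˢ (Finset.univ : Finset Bool))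
    (t := Finset.univ.filter (fun v : G.V => G.Opn c v)) (fun p => y p.1 p.2) (by
      intro p hp
      simp only [Finset.coe_product, Set.mem_prod, Finset.coe_filter, Finset.mem_univ, true_and,
        Set.mem_setOf_eq] at hp ⊢
      obtain ⟨g, x, f, _, h⟩ := hy p.1 hp.1
      exact (h p.2).2.2) (by
      rintro ⟨v, a⟩ hv ⟨v', a'⟩ hv' heq
      simp only [Finset.coe_product, Set.mem_prod, Finset.coe_filter, Finset.mem_univ, true_and,
        Set.mem_setOf_eq] at hv hv' heq
      obtain ⟨g, x, f, hg, h⟩ := hy v hv.1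
      obtain ⟨g', x', f', hg', h'⟩ := hy v' hv'.1
      have e1 := h a
      have e2 := h' a'
      rw [← heq] at e2
      have haa : a = a' := low_has e1.2.2.1 ⟨f a, e1.1, by rw [e1.2.1]; simp⟩
        ⟨f' a', e2.1, by rw [e2.2.1]; simp⟩
      subst haa
      have hff := hp _ _ a (y v a) e1.1 e2.1 (by rw [e1.2.1]; simp) (by rw [e2.2.1]; simp)
      have hxx : x = x' := by
        have := e1.2.1
        rw [hff, e2.2.1] at this
        exact (Sym2.congr_left.1 this).symm
      subst hxx
      obtain ⟨n1, n2⟩ := iso_nbr_high ho.1 hv.1 hg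
      obtain ⟨n3, n4⟩ := iso_nbr_high ho.1 hv'.1 hg'
      have := unc_unique hl hc hp n2 n1 n3 (by rw [hg]; simp) (by rw [hg']; simp)
      subst this
      rw [hg] at hg'
      have := Sym2.congr_left.1 hg'
      subst this
      rfl)
  rw [Finset.card_product] at this
  simpa [mul_comm] using this


theorem clo_not_iso {G : Multigraph} {c : G.E → Option Bool} (ho : G.Opt c) {u : G.V}
    (h : G.Clo c u) : ¬ G.Iso c u := by
  obtain ⟨e, w, hn, he, _, a, ha⟩ := h
  intro hi
  exact ha (opt_add ho hn he (hi a))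

theorem clo_symm {G : Multigraph} {c : G.E → Option Bool} {e : G.E} {u w : G.V}
    (hn : c e = none) (he : G.ends e = s(u, w)) (hu : G.Low c u) (hw : G.Low c w) : G.Clo c w :=
  ⟨e, u, hn, by rw [he, Sym2.eq_swap], hw, hu⟩

theorem two_unc {G : Multigraph} (hl : G.Loopless) (hc : ∀ v : G.V, G.deg v = 3)
    {c : G.E → Option Bool} (hp : G.Prp c) {v : G.V} (hv : G.Low c v) :
    ∃ g g', g ≠ g' ∧ c g = none ∧ c g' = none ∧ v ∈ G.ends g ∧ v ∈ G.ends g' := by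
  obtain ⟨x, y, z, h1, h2, h3, h4⟩ := three_edges hl hc v
  rw [low_iff hp] at hv
  have hx := (h4 x).2 (by simp)
  have hy := (h4 y).2 (by simp)
  have hz := (h4 z).2 (by simp)
  by_cases cx : c x = none
  · by_cases cy : c y = none
    · exact ⟨x, y, h1, cx, cy, hx, hy⟩
    · refine ⟨x, z, h2, cx, ?_, hx, hz⟩
      by_contra cz
      exact h3 (hv y z cy cz hy hz)
  · refine ⟨y, z, h3, ?_, ?_, hy, hz⟩
    · by_contra cy
      exact h1 (hv x y cx cy hx hy)
    · by_contra cz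
      exact h2 (hv x z cx cz hx hz)

open Classical in
theorem count_clo {G : Multigraph} (hl : G.Loopless) (hc : ∀ v : G.V, G.deg v = 3)
    {c : G.E → Option Bool} (ho : G.Opt c) (t : G.V → G.V)
    (ht : ∀ m, ¬ G.Low c m → ∃ g, c g = none ∧ G.ends g = s(m, t m)) :
    (Finset.univ.filter (fun v : G.V => G.Clo c v)).card * 3 ≤
      (Finset.univ.filter (fun m : G.V => ¬ G.Low c m ∧ ¬ G.Iso c (t m) ∧ ¬ G.Opn c (t m))).card * 2
      := by
  have hp := ho.1.1
  have tuniq : ∀ m g q, ¬ G.Low c m → c g = none → G.ends g = s(m, q) → t m = q := by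
    intro m g q hm hg hgq
    obtain ⟨g', h1, h2⟩ := ht m hm
    have := unc_unique hl hc hp hm hg h1 (by rw [hgq]; simp) (by rw [h2]; simp)
    subst this
    exact (Sym2.congr_right.1 (hgq.symm.trans h2)).symm
  apply Finset.card_mul_le_card_mul
    (fun u m => (G.CG c).Reachable u m ∨ (G.Low c (t m) ∧ (G.CG c).Reachable u (t m)))
  · intro u hu
    simp only [Finset.mem_filter, Finset.mem_univ, true_and] at hu
    have huc := hu
    obtain ⟨e, w, hn, he, lu, lw⟩ := hu
    have hwc : G.Clo c w := clo_symm hn he lu lw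
    have ruw := adj_low ho hn he lu lw
    have huw : u ≠ w := ne_of_ends hl he
    have honly : ∀ q, G.Low c q → (G.CG c).Reachable u q → q = u ∨ q = w := by
      intro q hq hr
      by_contra hcon
      push Not at hcon
      exact comp_low hp lu lw hq huw hcon.1.symm hcon.2.symm ruw hr
    have hcloP : ∀ q, G.Clo c q → ¬ G.Iso c q ∧ ¬ G.Opn c q := by
      intro q hq
      exact ⟨clo_not_iso ho hq, fun h => h.2.2 hq⟩
    -- membership in the target set
    have memM : ∀ m, (G.CG c).Reachable u m → ¬ G.Low c m →
        ¬ G.Low c m ∧ ¬ G.Iso c (t m) ∧ ¬ G.Opn c (t m) := by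
      intro m hm hml
      refine ⟨hml, ?_⟩
      by_cases hq : G.Low c (t m)
      · obtain ⟨g, h1, h2⟩ := ht m hml
        have := closed_nbr ho hn he lu lw hm h1 h2 hq
        apply hcloP
        rcases honly _ hq this with h | h
        · rw [h]; exact huc
        · rw [h]; exact hwc
      · exact ⟨fun h => hq (iso_low h), fun h => hq h.1⟩
    rw [show (3 : ℕ) = 2 + 1 from rfl, Nat.succ_le_iff, Finset.two_lt_card]
    simp only [Finset.mem_bipartiteAbove, Finset.mem_filter, Finset.mem_univ, true_and]
    -- colour at u
    have : ∃ a, G.Has c u a := by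
      have := clo_not_iso ho huc
      unfold Iso at this
      push Not at this
      exact this
    obtain ⟨a, f, hf, hfu⟩ := this
    have hua : G.Has c u a := ⟨f, hf, hfu⟩
    have huna : ¬ G.Has c u (!a) := by
      intro h
      have := low_has lu hua h
      cases a <;> simp at this
    have hwb : G.Has c w (!a) := opt_add ho hn he huna
    have hwa : ¬ G.Has c w a := by
      intro h
      have := low_has lw h hwb
      cases a <;> simp at this
    obtain ⟨u1, hfu1⟩ := hfu
    have fn : c f ≠ none := by simp [hf]
    have r1 : (G.CG c).Reachable u u1 := cg_step fn (by rw [hfu1]; simp) (by rw [hfu1]; simp)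
    have hu1a : G.Has c u1 a := ⟨f, hf, by rw [hfu1]; simp⟩
    have u1u : u ≠ u1 := ne_of_ends hl hfu1
    have u1w : u1 ≠ w := by
      rintro rfl
      exact hwa hu1a
    have high1 : ¬ G.Low c u1 := by
      intro h
      rcases honly u1 h r1 with h | h
      · exact u1u h.symm
      · exact u1w h
    have : G.Has c u1 (!a) := by
      unfold Low at high1
      push Not at high1
      exact high1 _
    obtain ⟨f2, hf2, u2, hfu2⟩ := this
    have fn2 : c f2 ≠ none := by simp [hf2]
    have r2 : (G.CG c).Reachable u u2 :=
      r1.trans (cg_step fn2 (by rw [hfu2]; simp) (by rw [hfu2]; simp))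
    have u12 : u1 ≠ u2 := ne_of_ends hl hfu2
    have u2u : u2 ≠ u := by
      rintro rfl
      exact huna ⟨f2, hf2, by rw [hfu2]; simp⟩
    have ff2 : f ≠ f2 := by
      rintro rfl
      rw [hf] at hf2
      cases a <;> simp at hf2
    by_cases h2w : u2 = w
    · -- triangle
      subst h2w
      have third : ∀ v, G.Low c v → v ∈ G.ends e → ∃ g x, g ≠ e ∧ c g = none ∧ G.ends g = s(v, x) := by
        intro v hv hve
        obtain ⟨g, g', h1, h2, h3, h4, h5⟩ := two_unc hl hc hp hv
        by_cases h : g = e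
        · obtain ⟨x, hx⟩ := h5
          exact ⟨g', x, by rw [← h]; exact h1.symm, h3, hx⟩
        · obtain ⟨x, hx⟩ := h4
          exact ⟨g, x, h, h2, hx⟩
      obtain ⟨g, x, hge, hgn, hgx⟩ := third u lu (by rw [he]; simp)
      obtain ⟨g', x', hge', hgn', hgx'⟩ := third u2 lw (by rw [he]; simp)
      have xw : x ≠ u2 := by
        rintro rfl
        exact ho.1.2 e ⟨g, f, f2, u, x, u1, hge.symm, he, hgx, hfu1, by rw [hfu2, Sym2.eq_swap]⟩ hn
      have xu1 : x ≠ u1 := by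
        rintro rfl
        exact ho.1.2 g ⟨f, e, f2, u, x, u2, by rintro rfl; exact fn hgn, hgx, hfu1, he, hfu2⟩ hgn
      have x'u : x' ≠ u := by
        rintro rfl
        exact ho.1.2 e ⟨g', f, f2, x', u2, u1, hge'.symm, he, by rw [hgx', Sym2.eq_swap], hfu1,
          by rw [hfu2, Sym2.eq_swap]⟩ hn
      have x'u1 : x' ≠ u1 := by
        rintro rfl
        exact ho.1.2 g' ⟨f2, e, f, u2, x', u, by rintro rfl; exact fn2 hgn', hgx',
          by rw [hfu2, Sym2.eq_swap], by rw [he, Sym2.eq_swap], by rw [hfu1, Sym2.eq_swap]⟩ hgn'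
      have hx : ¬ G.Low c x := by
        intro h
        rcases honly x h (adj_low ho hgn hgx lu h) with h | h
        · exact ne_of_ends hl hgx h.symm
        · exact xw h
      have hx' : ¬ G.Low c x' := by
        intro h
        rcases honly x' h (ruw.trans (adj_low ho hgn' hgx' lw h)) with h | h
        · exact x'u h
        · exact ne_of_ends hl hgx' h.symm
      have tx : t x = u := tuniq x g u hx hgn (by rw [hgx, Sym2.eq_swap])
      have tx' : t x' = u2 := tuniq x' g' u2 hx' hgn' (by rw [hgx', Sym2.eq_swap])
      have xx' : x ≠ x' := by
        rintro rfl
        exact huw (tx.symm.trans tx')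
      refine ⟨u1, ⟨memM u1 r1 high1, Or.inl r1⟩, x, ⟨⟨hx, ?_⟩, Or.inr ?_⟩, x', ⟨⟨hx', ?_⟩, Or.inr ?_⟩,
        xu1.symm, x'u1.symm, xx'⟩
      · rw [tx]; exact hcloP _ huc
      · rw [tx]; exact ⟨lu, SimpleGraph.Reachable.refl _⟩
      · rw [tx']; exact hcloP _ hwc
      · rw [tx']; exact ⟨lw, ruw⟩
    · have high2 : ¬ G.Low c u2 := by
        intro h
        rcases honly u2 h r2 with h | h
        · exact u2u h
        · exact h2w h
      have : G.Has c u2 a := by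
        unfold Low at high2
        push Not at high2
        exact high2 _
      obtain ⟨f3, hf3, u3, hfu3⟩ := this
      have fn3 : c f3 ≠ none := by simp [hf3]
      have r3 : (G.CG c).Reachable u u3 :=
        r2.trans (cg_step fn3 (by rw [hfu3]; simp) (by rw [hfu3]; simp))
      have u23 : u2 ≠ u3 := ne_of_ends hl hfu3
      have f3f : f3 ≠ f := by
        rintro rfl
        have : u2 ∈ G.ends f3 := by rw [hfu3]; simp
        rw [hfu1, Sym2.mem_iff] at this
        rcases this with h | h
        · exact u2u h
        · exact u12 h.symm
      have u3u : u3 ≠ u := by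
        rintro rfl
        exact f3f (hp f3 f a u3 hf3 hf (by rw [hfu3]; simp) (by rw [hfu1]; simp))
      have u31 : u1 ≠ u3 := by
        rintro rfl
        exact f3f (hp f3 f a u1 hf3 hf (by rw [hfu3]; simp) (by rw [hfu1]; simp))
      have u3w : u3 ≠ w := by
        rintro rfl
        exact hwa ⟨f3, hf3, by rw [hfu3]; simp⟩
      have high3 : ¬ G.Low c u3 := by
        intro h
        rcases honly u3 h r3 with h | h
        · exact u3u h
        · exact u3w h
      exact ⟨u1, ⟨memM u1 r1 high1, Or.inl r1⟩, u2, ⟨memM u2 r2 high2, Or.inl r2⟩,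
        u3, ⟨memM u3 r3 high3, Or.inl r3⟩, u12, u31, u23⟩
  · intro m hm
    simp only [Finset.mem_filter, Finset.mem_univ, true_and] at hm
    by_contra hcon
    rw [not_le, Finset.two_lt_card] at hcon
    simp only [Finset.mem_bipartiteBelow, Finset.mem_filter, Finset.mem_univ, true_and] at hcon
    obtain ⟨x, hx, y, hy, z, hz, hxy, hxz, hyz⟩ := hcon
    have key : ∀ u v, G.Clo c u → G.Clo c v →
      ((G.CG c).Reachable u m ∨ (G.Low c (t m) ∧ (G.CG c).Reachable u (t m))) →
      ((G.CG c).Reachable v m ∨ (G.Low c (t m) ∧ (G.CG c).Reachable v (t m))) →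
      (G.CG c).Reachable u v := by
      obtain ⟨g, hg1, hg2⟩ := ht m hm.1
      have k : ∀ u, G.Clo c u → (G.CG c).Reachable u m → G.Low c (t m) →
          (G.CG c).Reachable u (t m) := by
        rintro u ⟨e, w, hn, he, lu, lw⟩ hr hlow
        exact closed_nbr ho hn he lu lw hr hg1 hg2 hlow
      rintro u v hu hv (h1 | ⟨h1, h1'⟩) (h2 | ⟨h2, h2'⟩)
      · exact h1.trans h2.symm
      · exact (k u hu h1 h2).trans h2'.symm
      · exact h1'.trans (k v hv h2 h1).symm
      · exact h1'.trans h2'.symm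
    have lowc : ∀ u, G.Clo c u → G.Low c u := by
      rintro u ⟨e, w, hn, he, lu, lw⟩
      exact lu
    exact comp_low hp (lowc _ hx.1) (lowc _ hy.1) (lowc _ hz.1) hxy hxz hyz
      (key _ _ hx.1 hy.1 hx.2 hy.2) (key _ _ hx.1 hz.1 hx.2 hz.2)

open Classical in
theorem count_iso {G : Multigraph} (hl : G.Loopless) (hc : ∀ v : G.V, G.deg v = 3)
    {c : G.E → Option Bool} (ho : G.Opt c) (t : G.V → G.V)
    (ht : ∀ m, ¬ G.Low c m → ∃ g, c g = none ∧ G.ends g = s(m, t m)) :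
    (Finset.univ.filter (fun v : G.V => G.Iso c v)).card * 3 ≤
      (Finset.univ.filter (fun m : G.V => ¬ G.Low c m ∧ G.Iso c (t m))).card * 1 := by
  have hp := ho.1.1
  have tuniq : ∀ m g q, ¬ G.Low c m → c g = none → G.ends g = s(m, q) → t m = q := by
    intro m g q hm hg hgq
    obtain ⟨g', h1, h2⟩ := ht m hm
    have := unc_unique hl hc hp hm hg h1 (by rw [hgq]; simp) (by rw [h2]; simp)
    subst this
    exact (Sym2.congr_right.1 (hgq.symm.trans h2)).symm
  apply Finset.card_mul_le_card_mul (fun v m => t m = v)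
  · intro v hv
    simp only [Finset.mem_filter, Finset.mem_univ, true_and] at hv
    rw [show (3 : ℕ) = 2 + 1 from rfl, Nat.succ_le_iff, Finset.two_lt_card]
    simp only [Finset.mem_bipartiteAbove, Finset.mem_filter, Finset.mem_univ, true_and]
    obtain ⟨x, y, z, h1, h2, h3, h4⟩ := three_edges hl hc v
    obtain ⟨x', hx⟩ := (h4 x).2 (by simp)
    obtain ⟨y', hy⟩ := (h4 y).2 (by simp)
    obtain ⟨z', hz⟩ := (h4 z).2 (by simp)
    obtain ⟨nx, lx⟩ := iso_nbr_high ho hv hx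
    obtain ⟨ny, ly⟩ := iso_nbr_high ho hv hy
    obtain ⟨nz, lz⟩ := iso_nbr_high ho hv hz
    have tx := tuniq x' x v lx nx (by rw [hx, Sym2.eq_swap])
    have ty := tuniq y' y v ly ny (by rw [hy, Sym2.eq_swap])
    have tz := tuniq z' z v lz nz (by rw [hz, Sym2.eq_swap])
    refine ⟨x', ⟨⟨lx, by rw [tx]; exact hv⟩, tx⟩, y', ⟨⟨ly, by rw [ty]; exact hv⟩, ty⟩,
      z', ⟨⟨lz, by rw [tz]; exact hv⟩, tz⟩, ?_, ?_, ?_⟩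
    · rintro rfl
      exact h1 (unc_unique hl hc hp lx nx ny (by rw [hx]; simp) (by rw [hy]; simp))
    · rintro rfl
      exact h2 (unc_unique hl hc hp lx nx nz (by rw [hx]; simp) (by rw [hz]; simp))
    · rintro rfl
      exact h3 (unc_unique hl hc hp ly ny nz (by rw [hy]; simp) (by rw [hz]; simp))
  · intro m _
    rw [Finset.card_le_one]
    simp only [Finset.mem_bipartiteBelow]
    rintro a ⟨_, rfl⟩ b ⟨_, rfl⟩
    rfl

open Classical in
theorem count_opn {G : Multigraph} (hl : G.Loopless) (hc : ∀ v : G.V, G.deg v = 3)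
    {c : G.E → Option Bool} (ho : G.Opt c) (t : G.V → G.V)
    (ht : ∀ m, ¬ G.Low c m → ∃ g, c g = none ∧ G.ends g = s(m, t m)) :
    (Finset.univ.filter (fun v : G.V => G.Opn c v)).card * 2 ≤
      (Finset.univ.filter (fun m : G.V => ¬ G.Low c m ∧ G.Opn c (t m))).card * 1 := by
  have hp := ho.1.1
  have tuniq : ∀ m g q, ¬ G.Low c m → c g = none → G.ends g = s(m, q) → t m = q := by
    intro m g q hm hg hgq
    obtain ⟨g', h1, h2⟩ := ht m hm
    have := unc_unique hl hc hp hm hg h1 (by rw [hgq]; simp) (by rw [h2]; simp)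
    subst this
    exact (Sym2.congr_right.1 (hgq.symm.trans h2)).symm
  apply Finset.card_mul_le_card_mul (fun v m => t m = v)
  · intro v hv
    simp only [Finset.mem_filter, Finset.mem_univ, true_and] at hv
    rw [show (2 : ℕ) = 1 + 1 from rfl, Nat.succ_le_iff, Finset.one_lt_card]
    simp only [Finset.mem_bipartiteAbove, Finset.mem_filter, Finset.mem_univ, true_and]
    obtain ⟨x, y, h1, nx, ny, ⟨x', hx⟩, ⟨y', hy⟩⟩ := two_unc hl hc hp hv.1
    have lx : ¬ G.Low c x' := fun h => hv.2.2 ⟨x, x', nx, hx, hv.1, h⟩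
    have ly : ¬ G.Low c y' := fun h => hv.2.2 ⟨y, y', ny, hy, hv.1, h⟩
    have tx := tuniq x' x v lx nx (by rw [hx, Sym2.eq_swap])
    have ty := tuniq y' y v ly ny (by rw [hy, Sym2.eq_swap])
    refine ⟨x', ⟨⟨lx, by rw [tx]; exact hv⟩, tx⟩, y', ⟨⟨ly, by rw [ty]; exact hv⟩, ty⟩, ?_⟩
    rintro rfl
    exact h1 (unc_unique hl hc hp lx nx ny (by rw [hx]; simp) (by rw [hy]; simp))
  · intro m _
    rw [Finset.card_le_one]
    simp only [Finset.mem_bipartiteBelow]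
    rintro a ⟨_, rfl⟩ b ⟨_, rfl⟩
    rfl


theorem fat_at {G : Multigraph} (hl : G.Loopless) (hc : ∀ v : G.V, G.deg v = 3) {e : G.E}
    (he : G.Fat e) {v : G.V} (hv : v ∈ G.ends e) :
    ∃ e' g, e ≠ e' ∧ G.ends e' = G.ends e ∧ G.ends g ≠ G.ends e ∧
      ∀ f, v ∈ G.ends f → f = e ∨ f = e' ∨ f = g := by
  have main : ∀ (e' g : G.E), e ≠ e' → G.ends e' = G.ends e → v ∈ G.ends g →
      G.ends g ≠ G.ends e → ∀ f, v ∈ G.ends f → f = e ∨ f = e' ∨ f = g := by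
    intro e' g h1 h2 h3 h4 f hf
    obtain ⟨x, y, z, _, _, _, hall⟩ := three_edges hl hc v
    have a1 := (hall e).1 hv
    have a2 := (hall e').1 (by rw [h2]; exact hv)
    have a3 := (hall g).1 h3
    have a4 := (hall f).1 hf
    have b1 : g ≠ e := by rintro rfl; exact h4 rfl
    have b2 : g ≠ e' := by rintro rfl; exact h4 h2
    clear hall
    grind
  obtain ⟨f, g, h, a, b, x, hef, h1, h2, h3, h4⟩ := he
  have hbx : b ≠ x := ne_of_ends hl h4
  have hax : a ≠ x := ne_of_ends hl h3
  have hv' := hv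
  rw [h1, Sym2.mem_iff] at hv'
  have h21 : G.ends f = G.ends e := by rw [h1, h2]
  rcases hv' with rfl | rfl
  · have k : G.ends g ≠ G.ends e := by
      rw [h1, h3]
      intro h
      exact hbx (Sym2.congr_right.1 h).symm
    exact ⟨f, g, hef, h21, k, main f g hef h21 (by rw [h3]; simp) k⟩
  · have k : G.ends h ≠ G.ends e := by
      rw [h1, h4, Sym2.eq_swap]
      intro h
      exact hax (Sym2.congr_left.1 h).symm
    exact ⟨f, h, hef, h21, k, main f h hef h21 (by rw [h4]; simp) k⟩

theorem exists_good {G : Multigraph} (hl : G.Loopless) (hc : ∀ v : G.V, G.deg v = 3) :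
    ∃ c, G.Good c := by
  classical
  let idx := Fintype.equivFin G.E
  refine ⟨fun e => if G.Fat e then some (decide (∃ f, G.ends f = G.ends e ∧ idx f < idx e))
    else none, ?_, ?_⟩
  · intro e f a v he hf hve hvf
    have fe : G.Fat e := by
      by_contra h
      simp [h] at he
    have ff : G.Fat f := by
      by_contra h
      simp [h] at hf
    simp only [fe, ff, if_true, Option.some.injEq] at he hf
    by_contra hne
    obtain ⟨e', g, h1, h2, h3, h4⟩ := fat_at hl hc fe hve
    have hpar : G.ends f = G.ends e := by
      rcases h4 f hvf with h | h | h
      · exact absurd h.symm hne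
      · rw [h, h2]
      · obtain ⟨f', g', k1, k2, k3, k4⟩ := fat_at hl hc ff hvf
        rcases h4 f' (by rw [k2]; exact hvf) with h' | h' | h'
        · rw [← h', k2]
        · rw [← k2, h', h2]
        · exact absurd (h.trans h'.symm) k1
    have hfe' : f = e' := by
      rcases h4 f hvf with h | h | h
      · exact absurd h.symm hne
      · exact h
      · rw [h] at hpar; exact absurd hpar h3
    have hcl : ∀ p, G.ends p = G.ends e → p = e ∨ p = f := by
      intro p hp
      rcases h4 p (by rw [hp]; exact hve) with h | h | h
      · exact Or.inl h
      · exact Or.inr (h.trans hfe'.symm)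
      · rw [h] at hp; exact absurd hp h3
    have heq := he.trans hf.symm
    rw [decide_eq_decide] at heq
    rcases lt_trichotomy (idx e) (idx f) with hlt | hlt | hlt
    · obtain ⟨p, hp1, hp2⟩ := heq.2 ⟨e, hpar.symm, hlt⟩
      rcases hcl p hp1 with rfl | rfl
      · exact lt_irrefl _ hp2
      · exact lt_asymm hp2 hlt
    · exact hne (idx.injective hlt)
    · obtain ⟨p, hp1, hp2⟩ := heq.1 ⟨f, hpar, hlt⟩
      rcases hcl p (hp1.trans hpar) with rfl | rfl
      · exact lt_asymm hp2 hlt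
      · exact lt_irrefl _ hp2
  · intro e he
    simp [he]

theorem exists_opt2 {G : Multigraph} (hl : G.Loopless) (hc : ∀ v : G.V, G.deg v = 3) :
    ∃ c, G.Opt2 c := by
  classical
  obtain ⟨c0, h0⟩ := exists_good hl hc
  obtain ⟨c1, h1, h1'⟩ := Finset.exists_max_image
    (Finset.univ.filter (fun c : G.E → Option Bool => G.Good c)) G.csize ⟨c0, by simpa using h0⟩
  have ho : G.Opt c1 := ⟨by simpa using h1, fun c' hc' => h1' c' (by simpa using hc')⟩
  obtain ⟨c2, h2, h2'⟩ := Finset.exists_min_image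
    (Finset.univ.filter (fun c : G.E → Option Bool => G.Opt c)) G.niso ⟨c1, by simpa using ho⟩
  exact ⟨c2, by simpa using h2, fun c' hc' => h2' c' (by simpa using hc')⟩

open Classical in
theorem has_count {G : Multigraph} (c : G.E → Option Bool) (a : Bool) :
    (Finset.univ.filter (fun v : G.V => G.Has c v a)).card ≤
      (Finset.univ.filter (fun e : G.E => c e = some a)).card * 2 := by
  have := Finset.card_mul_le_card_mul (m := 1) (n := 2)
    (s := Finset.univ.filter (fun v : G.V => G.Has c v a))
    (t := Finset.univ.filter (fun e : G.E => c e = some a)) (fun v e => v ∈ G.ends e) (by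
      intro v hv
      simp only [Finset.mem_filter, Finset.mem_univ, true_and] at hv
      obtain ⟨e, he, hve⟩ := hv
      rw [Nat.succ_le_iff, Finset.card_pos]
      exact ⟨e, by simp [Finset.mem_bipartiteAbove, he, hve]⟩) (by
      intro e _
      obtain ⟨x, y, hxy⟩ : ∃ x y, G.ends e = s(x, y) := by
        induction h : G.ends e with
        | _ x y => exact ⟨x, y, rfl⟩
      refine (Finset.card_le_card (t := {x, y}) ?_).trans Finset.card_le_two
      intro v hv
      rw [Finset.mem_bipartiteBelow, hxy, Sym2.mem_iff] at hv
      simpa using hv.2)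
  simpa using this

theorem le_nu2 {G : Multigraph} (hl : G.Loopless) {c : G.E → Option Bool} (hp : G.Prp c) :
    (Finset.univ.filter (fun e : G.E => c e = some true)).card +
      (Finset.univ.filter (fun e : G.E => c e = some false)).card ≤ G.nu2 := by
  unfold nu2
  apply le_csSup
  · refine ⟨Fintype.card G.E + Fintype.card G.E, ?_⟩
    rintro m ⟨H, H', _, _, _, rfl⟩
    exact Nat.add_le_add (Finset.card_le_univ _) (Finset.card_le_univ _)
  · have hm : ∀ a, G.IsMatching (Finset.univ.filter (fun e : G.E => c e = some a)) := by
      intro a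
      refine ⟨fun e _ => hl e, ?_⟩
      intro e he f hf hef v hve hvf
      simp only [Finset.mem_filter, Finset.mem_univ, true_and] at he hf
      exact hef (hp e f a v he hf hve hvf)
    refine ⟨_, _, hm true, hm false, ?_, rfl⟩
    rw [Finset.disjoint_filter]
    intro e _ h1 h2
    rw [h1] at h2
    simp at h2


/-- Every cubic graph G satisfies ν₂(G) ≥ (4/5)·|V(G)|. -/
theorem cubic_nu2_ge
    (G : Multigraph) (hloopless : G.Loopless) (hcubic : ∀ v : G.V, G.deg v = 3) :
    5 * G.nu2 ≥ 4 * Fintype.card G.V := by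
  classical
  obtain ⟨c, ho⟩ := exists_opt2 hloopless hcubic
  have hp := ho.1.1.1
  have hex : ∀ m : G.V, ∃ q, ¬ G.Low c m → ∃ g, c g = none ∧ G.ends g = s(m, q) := by
    intro m
    by_cases h : G.Low c m
    · exact ⟨m, fun h' => absurd h h'⟩
    · obtain ⟨g, h1, ⟨q, h2⟩, _⟩ := high_unc hloopless hcubic hp h
      exact ⟨q, fun _ => ⟨g, h1, h2⟩⟩
  choose t ht using hex
  have k1 := count_one hloopless hcubic ho
  have k2 := count_iso hloopless hcubic ho.1 t ht
  have k3 := count_opn hloopless hcubic ho.1 t ht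
  have k4 := count_clo hloopless hcubic ho.1 t ht
  have k5 := has_count c true
  have k6 := has_count c false
  have k7 := le_nu2 hloopless hp
  have s1 : ∑ v : G.V, 2 ≤ ∑ v : G.V, ((if G.Has c v true then 1 else 0) +
      (if G.Has c v false then 1 else 0) + 2 * (if G.Iso c v then 1 else 0) +
      (if G.Opn c v then 1 else 0) + (if G.Clo c v then 1 else 0)) := by
    apply Finset.sum_le_sum
    intro v _
    by_cases h1 : G.Has c v true <;> by_cases h2 : G.Has c v false
    · simp only [h1, h2, if_true]; omega
    · have hlow : G.Low c v := ⟨false, h2⟩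
      have hiso : ¬ G.Iso c v := fun h => h true h1
      by_cases h3 : G.Clo c v
      · simp only [h1, h3, if_true]; omega
      · have : G.Opn c v := ⟨hlow, hiso, h3⟩
        simp only [h1, this, if_true]; omega
    · have hlow : G.Low c v := ⟨true, h1⟩
      have hiso : ¬ G.Iso c v := fun h => h false h2
      by_cases h3 : G.Clo c v
      · simp only [h2, h3, if_true]; omega
      · have : G.Opn c v := ⟨hlow, hiso, h3⟩
        simp only [h2, this, if_true]; omega
    · have hiso : G.Iso c v := by
        intro a
        cases a
        · exact h2
        · exact h1
      simp only [hiso, if_true]; omega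
  have s2 : ∑ v : G.V, ((if G.Iso c v then 1 else 0) + (if G.Opn c v then 1 else 0) +
      (if G.Clo c v then 1 else 0) + (if ¬ G.Low c v ∧ G.Iso c (t v) then 1 else 0) +
      (if ¬ G.Low c v ∧ G.Opn c (t v) then 1 else 0) +
      (if ¬ G.Low c v ∧ ¬ G.Iso c (t v) ∧ ¬ G.Opn c (t v) then 1 else 0)) ≤ ∑ v : G.V, 1 := by
    apply Finset.sum_le_sum
    intro v _
    by_cases hlow : G.Low c v
    · simp only [hlow, not_true, false_and, if_false, add_zero]
      by_cases h1 : G.Iso c v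
      · have h2 : ¬ G.Clo c v := fun h => clo_not_iso ho.1 h h1
        have h3 : ¬ G.Opn c v := fun h => h.2.1 h1
        simp [h1, h2, h3]
      · by_cases h2 : G.Clo c v
        · have h3 : ¬ G.Opn c v := fun h => h.2.2 h2
          simp [h1, h2, h3]
        · simp only [h1, h2, if_false]
          split_ifs <;> simp
    · have h1 : ¬ G.Iso c v := fun h => hlow (iso_low h)
      have h2 : ¬ G.Opn c v := fun h => hlow h.1
      have h3 : ¬ G.Clo c v := by
        rintro ⟨_, _, _, _, h, _⟩
        exact hlow h
      simp only [hlow, h1, h2, h3, if_false, not_false_eq_true, true_and, zero_add]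
      by_cases h4 : G.Iso c (t v)
      · have h5 : ¬ G.Opn c (t v) := fun h => h.2.1 h4
        simp [h4, h5]
      · by_cases h5 : G.Opn c (t v) <;> simp [h4, h5]
  simp only [Finset.sum_add_distrib, ← Finset.mul_sum, ← Finset.card_filter, Finset.sum_const,
    Finset.card_univ, smul_eq_mul] at s1 s2
  omega


end Multigraph
end

section
/- Every cubic graph G satisfies ν₃(G) ≥ (7/6)·|V(G)|, i.e., at least (7/6)|V(G)| edges of G can be covered by three pairwise disjoint matchings. -/
namespace Multigraph

section Helpers

variable {G : Multigraph}

/-- A proper partial 3-edge-colouring. -/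
def PropCol (G : Multigraph) (c : G.E → Option (Fin 3)) : Prop :=
  ∀ e f, e ≠ f → ∀ v, v ∈ G.ends e → v ∈ G.ends f → c e = c f → c e = none

/-- Set of uncoloured edges. -/
def unc (G : Multigraph) (c : G.E → Option (Fin 3)) : Finset G.E :=
  Finset.univ.filter (fun e => c e = none)

/-- Proper colouring with the fewest uncoloured edges. -/
def OptCol (G : Multigraph) (c : G.E → Option (Fin 3)) : Prop :=
  PropCol G c ∧ ∀ c', PropCol G c' → (unc G c).card ≤ (unc G c').card

/-- Colour `a` is missing at `v`. -/
def Miss (G : Multigraph) (c : G.E → Option (Fin 3)) (v : G.V) (a : Fin 3) : Prop :=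
  ∀ e, v ∈ G.ends e → c e ≠ some a

lemma no_common {c : G.E → Option (Fin 3)} (hc : OptCol G c) {e : G.E} {u v : G.V}
    (he : G.ends e = s(u, v)) (h0 : c e = none) (a : Fin 3)
    (hu : Miss G c u a) (hv : Miss G c v a) : False := by
  have hp : PropCol G (Function.update c e (some a)) := by
    have key : ∀ f, f ≠ e → ∀ x, x ∈ G.ends e → x ∈ G.ends f → c f ≠ some a := by
      intro f hf x hx hxf
      rw [he, Sym2.mem_iff] at hx
      rcases hx with rfl | rfl
      · exact hu f hxf
      · exact hv f hxf
    intro f g hfg x hxf hxg hEq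
    by_cases hf : f = e
    · subst hf
      have hg : g ≠ f := fun h => hfg h.symm
      rw [Function.update_self, Function.update_of_ne hg] at hEq
      exact absurd hEq.symm (key g hg x hxf hxg)
    · by_cases hg : g = e
      · subst hg
        rw [Function.update_self, Function.update_of_ne hf] at hEq
        exact absurd hEq (key f hf x hxg hxf)
      · rw [Function.update_of_ne hf, Function.update_of_ne hg] at hEq
        rw [Function.update_of_ne hf]
        exact hc.1 f g hfg x hxf hxg hEq
  have h1 := hc.2 _ hp
  have h2 : unc G (Function.update c e (some a)) ⊂ unc G c := by
    rw [Finset.ssubset_iff_of_subset]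
    · exact ⟨e, by simp [unc, h0], by simp [unc]⟩
    · intro f
      simp only [unc, Finset.mem_filter, Finset.mem_univ, true_and]
      by_cases hf : f = e
      · subst hf; simp
      · rw [Function.update_of_ne hf]; exact id
  have := Finset.card_lt_card h2
  omega

/-- Edges at `v`. -/
def inc (G : Multigraph) (v : G.V) : Finset G.E := Finset.univ.filter (fun e => v ∈ G.ends e)

lemma inc_card (hl : G.Loopless) (hcub : ∀ v : G.V, G.deg v = 3) (v : G.V) :
    (inc G v).card = 3 := by
  rw [← hcub v, deg, inc, Finset.card_filter]
  refine Finset.sum_congr rfl fun e _ => ?_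
  have : G.ends e ≠ Sym2.diag v := by
    intro h
    exact hl e (by rw [IsLoop, h]; exact Sym2.diag_isDiag v)
  rw [if_neg this]

open Classical in
lemma miss_card (hl : G.Loopless) (hcub : ∀ v : G.V, G.deg v = 3)
    {c : G.E → Option (Fin 3)} (v : G.V) (S : Finset G.E)
    (hS : ∀ e ∈ S, v ∈ G.ends e ∧ c e = none) :
    S.card ≤ (Finset.univ.filter (fun a => Miss G c v a)).card := by
  have h3 := inc_card hl hcub v
  have hsub : S ⊆ inc G v := fun e he => by simp [inc, (hS e he).1]
  have h4 := Finset.card_sdiff_add_card_eq_card hsub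
  have h5 : (Finset.univ.filter (fun a => ¬ Miss G c v a)).card ≤ (inc G v \ S).card := by
    have : ∀ a ∈ Finset.univ.filter (fun a => ¬ Miss G c v a),
        ∃ e, e ∈ inc G v \ S ∧ c e = some a := by
      intro a ha
      rw [Finset.mem_filter] at ha
      replace ha := ha.2
      unfold Miss at ha
      push Not at ha
      obtain ⟨e, he, hce⟩ := ha
      refine ⟨e, ?_, hce⟩
      simp only [Finset.mem_sdiff, inc, Finset.mem_filter, Finset.mem_univ, true_and]
      refine ⟨he, fun h => ?_⟩
      rw [(hS e h).2] at hce
      cases hce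
    have hne : Nonempty G.E := by
      obtain ⟨e, _⟩ := Finset.card_pos.1 (h3 ▸ (by norm_num : 0 < 3))
      exact ⟨e⟩
    choose! f hf using this
    refine Finset.card_le_card_of_injOn f (fun a ha => (hf a ha).1) ?_
    intro a ha b hb hab
    have h1 := (hf a ha).2
    have h2 := (hf b hb).2
    rw [hab, h2] at h1
    exact (Option.some.inj h1).symm
  have h6 := Finset.card_filter_add_card_filter_not (s := (Finset.univ : Finset (Fin 3)))
    (fun a => Miss G c v a)
  simp only [Finset.card_univ, Fintype.card_fin] at h6
  omega

open Classical in
/-- three vertices of degree at most one in a graph of maximum degree two are not all connected -/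
lemma three_ends {V : Type} [Fintype V] (H : SimpleGraph V)
    (h2 : ∀ x, H.degree x ≤ 2) {u v w : V} (huv : u ≠ v) (huw : u ≠ w) (hvw : v ≠ w)
    (hu : H.degree u ≤ 1) (hv : H.degree v ≤ 1) (hw : H.degree w ≤ 1)
    (h1 : H.Reachable v u) (h1' : H.Reachable w u) : False := by
  let C := H.connectedComponentMk u
  let K := C.toSimpleGraph
  have hK : K.Connected := C.connected_toSimpleGraph
  have hcard := hK.card_vert_le_card_edgeSet_add_one
  have hdeg : ∀ x : C, K.degree x ≤ H.degree x.1 := by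
    intro x
    rw [← SimpleGraph.card_neighborFinset_eq_degree, ← SimpleGraph.card_neighborFinset_eq_degree]
    refine Finset.card_le_card_of_injOn (fun y => y.1) ?_ ?_
    · intro y hy
      simp only [Finset.mem_coe, SimpleGraph.mem_neighborFinset] at hy ⊢
      exact hy
    · intro a _ b _ h
      exact Subtype.ext h
  have hsum := K.sum_degrees_eq_twice_card_edges
  have hu' : u ∈ C.supp := rfl
  have hv' : v ∈ C.supp := SimpleGraph.ConnectedComponent.sound h1
  have hw' : w ∈ C.supp := SimpleGraph.ConnectedComponent.sound h1'
  let T : Finset C := {⟨u, hu'⟩, ⟨v, hv'⟩, ⟨w, hw'⟩}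
  have hT : T.card = 3 := by
    apply Finset.card_eq_three.2
    exact ⟨_, _, _, by simpa using huv, by simpa using huw, by simpa using hvw, rfl⟩
  have hle : ∑ x : C, (K.degree x + if x ∈ T then 1 else 0) ≤ ∑ x : C, 2 := by
    refine Finset.sum_le_sum fun x _ => ?_
    have ha := hdeg x
    have hb := h2 x.1
    split_ifs with hx
    · simp only [T, Finset.mem_insert, Finset.mem_singleton] at hx
      rcases hx with rfl | rfl | rfl
      · have := ha.trans hu; omega
      · have := ha.trans hv; omega
      · have := ha.trans hw; omega
    · omega
  rw [Finset.sum_add_distrib, hsum] at hle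
  simp only [Finset.sum_boole, Finset.sum_const, smul_eq_mul, Finset.card_univ] at hle
  rw [Finset.filter_mem_eq_inter, Finset.univ_inter, hT] at hle
  rw [Nat.card_eq_fintype_card, Nat.card_eq_fintype_card, ← SimpleGraph.edgeFinset_card] at hcard
  simp only [Nat.cast_id] at hle
  omega

/-- The graph spanned by the edges of colours `a`, `b`. -/
def kempe (G : Multigraph) (c : G.E → Option (Fin 3)) (a b : Fin 3) : SimpleGraph G.V where
  Adj x y := x ≠ y ∧ ∃ g, G.ends g = s(x, y) ∧ (c g = some a ∨ c g = some b)
  symm := ⟨by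
    rintro x y ⟨h, g, hg, hc⟩
    exact ⟨h.symm, g, by rw [hg, Sym2.eq_swap], hc⟩⟩
  loopless := ⟨fun x h => h.1 rfl⟩

open Classical in
lemma kempe_degree {c : G.E → Option (Fin 3)} (hc : PropCol G c) (a b : Fin 3) (x : G.V)
    (P : Finset (Fin 3)) (hP : ∀ g, x ∈ G.ends g → ∀ d, c g = some d → d = a ∨ d = b → d ∈ P) :
    (kempe G c a b).degree x ≤ P.card := by
  rw [← SimpleGraph.card_neighborFinset_eq_degree]
  have : ∀ y ∈ (kempe G c a b).neighborFinset x, ∃ d ∈ P, ∃ g, G.ends g = s(x, y) ∧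
      c g = some d := by
    intro y hy
    rw [SimpleGraph.mem_neighborFinset] at hy
    obtain ⟨_, g, hg, h⟩ := hy
    have hx : x ∈ G.ends g := by rw [hg]; simp
    rcases h with h | h
    · exact ⟨a, hP g hx a h (Or.inl rfl), g, hg, h⟩
    · exact ⟨b, hP g hx b h (Or.inr rfl), g, hg, h⟩
  choose! d hd hg using this
  refine Finset.card_le_card_of_injOn d (fun y hy => hd y hy) ?_
  intro y hy z hz hyz
  obtain ⟨g, hg1, h1⟩ := hg y hy
  obtain ⟨k, hk1, h2⟩ := hg z hz
  by_cases hgg : g = k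
  · rw [hgg, hk1] at hg1
    exact (Sym2.congr_right.1 hg1).symm
  · have := hc _ _ hgg x (by rw [hg1]; simp) (by rw [hk1]; simp) (by rw [h1, h2, hyz])
    rw [h1] at this
    cases this

lemma kempe_swap {c : G.E → Option (Fin 3)} (hc : OptCol G c) {e : G.E} {u v : G.V}
    (he : G.ends e = s(u, v)) (h0 : c e = none) (a b : Fin 3)
    (hu : Miss G c u a) (hv : Miss G c v b) : (kempe G c a b).Reachable v u := by
  classical
  by_contra hnr
  let S : Set G.V := {x | (kempe G c a b).Reachable v x}
  let c' : G.E → Option (Fin 3) := fun g =>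
    if ∃ x ∈ G.ends g, x ∈ S then (c g).map (Equiv.swap a b) else c g
  have hin : ∀ g x, x ∈ G.ends g → x ∈ S → c' g = (c g).map (Equiv.swap a b) := by
    intro g x hx hS
    exact if_pos ⟨x, hx, hS⟩
  have hout : ∀ g x, x ∈ G.ends g → x ∉ S → c' g = c g := by
    intro g x hx hS
    by_cases h : ∃ y ∈ G.ends g, y ∈ S
    · obtain ⟨y, hy, hyS⟩ := h
      rw [hin g y hy hyS]
      have hxy : y ≠ x := by rintro rfl; exact hS hyS
      have hends : G.ends g = s(y, x) := (Sym2.mem_and_mem_iff hxy).1 ⟨hy, hx⟩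
      have hna : ¬ (c g = some a ∨ c g = some b) := by
        intro h
        apply hS
        have : (kempe G c a b).Adj y x := ⟨hxy, g, hends, h⟩
        exact SimpleGraph.Reachable.trans hyS this.reachable
      cases hcg : c g with
      | none => rfl
      | some d =>
        rw [hcg] at hna
        simp only [Option.some.injEq, not_or] at hna
        simp [Equiv.swap_apply_of_ne_of_ne hna.1 hna.2]
    · exact if_neg h
  have hnone : ∀ g, c' g = none ↔ c g = none := by
    intro g
    simp only [c']
    split_ifs <;> simp
  have hunc : unc G c' = unc G c := by
    ext g; simp [unc, hnone]
  have hp : PropCol G c' := by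
    intro f g hfg x hxf hxg hEq
    rw [hnone]
    apply hc.1 f g hfg x hxf hxg
    by_cases hx : x ∈ S
    · rw [hin f x hxf hx, hin g x hxg hx] at hEq
      exact Option.map_injective (Equiv.injective _) hEq
    · rw [hout f x hxf hx, hout g x hxg hx] at hEq
      exact hEq
  have ho : OptCol G c' := ⟨hp, by rw [hunc]; exact hc.2⟩
  refine no_common ho he ((hnone e).2 h0) a ?_ ?_
  · intro g hg
    rw [hout g u hg hnr]
    exact hu g hg
  · intro g hg h
    rw [hin g v hg (SimpleGraph.Reachable.refl v)] at h
    rw [Option.map_eq_some_iff] at h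
    obtain ⟨d, hd, hda⟩ := h
    have : d = b := by
      apply (Equiv.swap a b).injective
      rw [hda, Equiv.swap_apply_right]
    exact hv g hg (this ▸ hd)

lemma unc_matching (hl : G.Loopless) (hcub : ∀ v : G.V, G.deg v = 3)
    {c : G.E → Option (Fin 3)} (hc : OptCol G c) {e f : G.E} (hef : e ≠ f)
    (he0 : c e = none) (hf0 : c f = none) {u : G.V} (hue : u ∈ G.ends e) (huf : u ∈ G.ends f) :
    False := by
  classical
  obtain ⟨v, he⟩ := hue
  obtain ⟨w, hf⟩ := huf
  have huv : u ≠ v := by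
    rintro rfl; exact hl e (by rw [IsLoop, he]; simp)
  have huw : u ≠ w := by
    rintro rfl; exact hl f (by rw [IsLoop, hf]; simp)
  let M : G.V → Finset (Fin 3) := fun x => Finset.univ.filter (fun a => Miss G c x a)
  have hM : ∀ x a, a ∈ M x ↔ Miss G c x a := by intro x a; simp [M]
  have hMu : 2 ≤ (M u).card := by
    have := miss_card hl hcub (c := c) u {e, f} (by
      intro g hg
      simp only [Finset.mem_insert, Finset.mem_singleton] at hg
      rcases hg with rfl | rfl
      · exact ⟨by rw [he]; simp, he0⟩
      · exact ⟨by rw [hf]; simp, hf0⟩)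
    rwa [Finset.card_pair hef] at this
  have hMv : 1 ≤ (M v).card := by
    have := miss_card hl hcub (c := c) v {e} (by
      intro g hg
      rw [Finset.mem_singleton] at hg
      subst hg
      exact ⟨by rw [he]; simp, he0⟩)
    rwa [Finset.card_singleton] at this
  have hMw : 1 ≤ (M w).card := by
    have := miss_card hl hcub (c := c) w {f} (by
      intro g hg
      rw [Finset.mem_singleton] at hg
      subst hg
      exact ⟨by rw [hf]; simp, hf0⟩)
    rwa [Finset.card_singleton] at this
  have hduv : Disjoint (M u) (M v) := by
    rw [Finset.disjoint_left]
    intro a ha hb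
    exact no_common hc he he0 a ((hM _ _).1 ha) ((hM _ _).1 hb)
  have hduw : Disjoint (M u) (M w) := by
    rw [Finset.disjoint_left]
    intro a ha hb
    exact no_common hc hf hf0 a ((hM _ _).1 ha) ((hM _ _).1 hb)
  have hcuv : (M u).card + (M v).card ≤ 3 := by
    rw [← Finset.card_union_of_disjoint hduv]
    exact (Finset.card_le_univ _).trans (by simp)
  have hvw : v ≠ w := by
    rintro rfl
    have := miss_card hl hcub (c := c) v {e, f} (by
      intro g hg
      simp only [Finset.mem_insert, Finset.mem_singleton] at hg
      rcases hg with rfl | rfl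
      · exact ⟨by rw [he]; simp, he0⟩
      · exact ⟨by rw [hf]; simp, hf0⟩)
    rw [Finset.card_pair hef] at this
    have h' : 2 ≤ (M v).card := this
    omega
  obtain ⟨b, hb⟩ := Finset.card_pos.1 hMv
  obtain ⟨b', hb'⟩ := Finset.card_pos.1 hMw
  have hbb : b' = b := by
    by_contra hne
    have h1 : M u ⊆ Finset.univ \ {b, b'} := by
      intro x hx
      simp only [Finset.mem_sdiff, Finset.mem_univ, true_and, Finset.mem_insert,
        Finset.mem_singleton, not_or]
      constructor
      · rintro rfl; exact Finset.disjoint_left.1 hduv hx hb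
      · rintro rfl; exact Finset.disjoint_left.1 hduw hx hb'
    have h2 := Finset.card_le_card h1
    rw [Finset.card_sdiff_of_subset (Finset.subset_univ _),
      Finset.card_pair (Ne.symm hne)] at h2
    simp at h2
    omega
  subst hbb
  obtain ⟨a, ha⟩ : (M u).Nonempty := Finset.card_pos.1 (by omega)
  rw [hM] at ha hb hb'
  refine three_ends (kempe G c a b') ?_ huv huw hvw ?_ ?_ ?_ (kempe_swap hc he he0 a b' ha hb)
    (kempe_swap hc hf hf0 a b' ha hb')
  · intro x
    refine (kempe_degree hc.1 a b' x {a, b'} ?_).trans Finset.card_le_two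
    intro g _ d _ h
    simpa using h
  · refine (kempe_degree hc.1 a b' u {b'} ?_).trans (by simp)
    intro g hg d hd h
    rcases h with rfl | rfl
    · exact absurd hd (ha g hg)
    · simp
  · refine (kempe_degree hc.1 a b' v {a} ?_).trans (by simp)
    intro g hg d hd h
    rcases h with rfl | rfl
    · simp
    · exact absurd hd (hb g hg)
  · refine (kempe_degree hc.1 a b' w {a} ?_).trans (by simp)
    intro g hg d hd h
    rcases h with rfl | rfl
    · simp
    · exact absurd hd (hb' g hg)

/-- Data for rotating the uncoloured edge `e` to `g`. -/
structure Rot (G : Multigraph) (c : G.E → Option (Fin 3)) (e : G.E) (u v x : G.V) (g : G.E)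
    (b : Fin 3) : Prop where
  he : G.ends e = s(u, v)
  h0 : c e = none
  hv : Miss G c v b
  hg : G.ends g = s(u, x)
  hb : c g = some b

/-- The rotated colouring. -/
def rotate (c : G.E → Option (Fin 3)) (e g : G.E) (b : Fin 3) : G.E → Option (Fin 3) :=
  fun f => if f = g then none else if f = e then some b else c f

lemma rot_opt {c : G.E → Option (Fin 3)} (hc : OptCol G c) {e g : G.E} {u v x : G.V} {b : Fin 3}
    (h : Rot G c e u v x g b) : OptCol G (rotate c e g b) := by
  have heg : e ≠ g := by
    rintro rfl
    have := h.h0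
    rw [h.hb] at this
    cases this
  have key : ∀ f, f ≠ e → f ≠ g → ∀ y, y ∈ G.ends e → y ∈ G.ends f → c f ≠ some b := by
    intro f hfe hfg y hy hyf hcf
    rw [h.he, Sym2.mem_iff] at hy
    rcases hy with rfl | rfl
    · have := hc.1 f g hfg y hyf (by rw [h.hg]; simp) (by rw [hcf, h.hb])
      rw [hcf] at this
      cases this
    · exact h.hv f hyf hcf
  refine ⟨?_, ?_⟩
  · intro f k hfk y hyf hyk hEq
    unfold rotate at hEq ⊢
    by_cases hfg : f = g
    · simp [hfg]
    by_cases hkg : k = g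
    · rw [hEq]; simp [hkg]
    rw [if_neg hfg, if_neg hkg] at hEq
    rw [if_neg hfg]
    by_cases hfe : f = e
    · subst hfe
      have hke : k ≠ f := fun h => hfk h.symm
      rw [if_pos rfl, if_neg hke] at hEq
      exact absurd hEq.symm (key k hke hkg y hyf hyk)
    · by_cases hke : k = e
      · subst hke
        rw [if_pos rfl, if_neg hfe] at hEq
        exact absurd hEq (key f hfe hfg y hyk hyf)
      · rw [if_neg hfe, if_neg hke] at hEq
        rw [if_neg hfe]
        exact hc.1 f k hfk y hyf hyk hEq
  · have hcard : (unc G (rotate c e g b)).card = (unc G c).card := by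
      have he' : e ∈ unc G c := by simp [unc, h.h0]
      have hg' : g ∉ (unc G c).erase e := by simp [unc, h.hb]
      have : unc G (rotate c e g b) = insert g ((unc G c).erase e) := by
        ext f
        simp only [unc, rotate, Finset.mem_filter, Finset.mem_univ, true_and, Finset.mem_insert,
          Finset.mem_erase]
        by_cases hfg : f = g
        · simp [hfg]
        · by_cases hfe : f = e
          · simp [hfe, heg]
          · simp [hfg, hfe]
      rw [this, Finset.card_insert_of_notMem hg', Finset.card_erase_of_mem he']
      have := Finset.card_pos.2 ⟨e, he'⟩
      omega
    rw [hcard]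
    exact hc.2

lemma rot_ne {c : G.E → Option (Fin 3)} {e g : G.E} {u v x : G.V}
    {b : Fin 3} (hl : G.Loopless) (h : Rot G c e u v x g b) : x ∉ G.ends e := by
  rw [h.he, Sym2.mem_iff, not_or]
  constructor
  · rintro rfl
    exact hl g (by rw [IsLoop, h.hg]; simp)
  · rintro rfl
    exact h.hv g (by rw [h.hg]; simp) h.hb

lemma rot_free (hl : G.Loopless) (hcub : ∀ v : G.V, G.deg v = 3)
    {c : G.E → Option (Fin 3)} (hc : OptCol G c) {e g : G.E} {u v x : G.V} {b : Fin 3}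
    (h : Rot G c e u v x g b) {f : G.E} (hf : c f = none) : x ∉ G.ends f := by
  intro hx
  have hfe : f ≠ e := by
    rintro rfl
    exact rot_ne hl h hx
  have hfg : f ≠ g := by
    rintro rfl
    rw [h.hb] at hf
    cases hf
  refine unc_matching hl hcub (rot_opt hc h) hfg ?_ ?_ hx (by rw [h.hg]; simp)
  · simp [rotate, hfe, hfg, hf]
  · simp [rotate]

lemma rot_inj (hl : G.Loopless) (hcub : ∀ v : G.V, G.deg v = 3)
    {c : G.E → Option (Fin 3)} (hc : OptCol G c) {e g : G.E} {u v x : G.V} {b : Fin 3}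
    (h : Rot G c e u v x g b) {e' g' : G.E} {u' v' : G.V} {b' : Fin 3}
    (h' : Rot G c e' u' v' x g' b') : e = e' := by
  by_contra hne
  have hdis : ∀ y, y ∈ G.ends e → y ∈ G.ends e' → False :=
    fun y hy hy' => unc_matching hl hcub hc hne h.h0 h'.h0 hy hy'
  have hgg : g ≠ g' := by
    rintro rfl
    have := h.hg
    rw [h'.hg] at this
    have := Sym2.congr_left.1 this
    subst this
    exact hdis u' (by rw [h.he]; simp) (by rw [h'.he]; simp)
  have hge : g' ≠ e := by
    rintro rfl
    have := h.h0
    rw [h'.hb] at this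
    cases this
  have hge' : e' ≠ g := by
    rintro rfl
    have := h'.h0
    rw [h.hb] at this
    cases this
  have hr : Rot G (rotate c e g b) e' u' v' x g' b' := by
    refine ⟨h'.he, ?_, ?_, h'.hg, ?_⟩
    · simp [rotate, hge', Ne.symm hne, h'.h0]
    · intro k hk
      unfold rotate
      split_ifs with h1 h2
      · simp
      · subst h2
        exact (hdis v' hk (by rw [h'.he]; simp)).elim
      · exact h'.hv k hk
    · simp [rotate, Ne.symm hgg, hge, h'.hb]
  refine rot_free hl hcub (rot_opt hc h) hr (f := g) (by simp [rotate]) (by rw [h.hg]; simp)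

lemma rot_exists (hl : G.Loopless) (hcub : ∀ v : G.V, G.deg v = 3)
    {c : G.E → Option (Fin 3)} (hc : OptCol G c) (e : G.E) (h0 : c e = none) :
    ∃ u v x g b, Rot G c e u v x g b := by
  classical
  obtain ⟨u, v, he⟩ : ∃ u v, G.ends e = s(u, v) := by
    induction h : G.ends e with
    | _ x y => exact ⟨x, y, rfl⟩
  have h1 := miss_card hl hcub (c := c) v {e} (by
      intro g hg
      rw [Finset.mem_singleton] at hg
      subst hg
      exact ⟨by rw [he]; simp, h0⟩)
  rw [Finset.card_singleton] at h1
  obtain ⟨b, hb⟩ := Finset.card_pos.1 h1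
  simp only [Finset.mem_filter, Finset.mem_univ, true_and] at hb
  have h2 : ¬ Miss G c u b := fun h => no_common hc he h0 b h hb
  unfold Miss at h2
  push Not at h2
  obtain ⟨g, ⟨x, hg⟩, hcg⟩ := h2
  exact ⟨u, v, x, g, b, he, h0, hb, hg, hcg⟩

lemma three_unc (hl : G.Loopless) (hcub : ∀ v : G.V, G.deg v = 3)
    {c : G.E → Option (Fin 3)} (hc : OptCol G c) :
    3 * (unc G c).card ≤ Fintype.card G.V := by
  have hmem : ∀ e, e ∈ unc G c → c e = none := by
    intro e he
    simpa [unc] using he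
  have := fun e (he : e ∈ unc G c) => rot_exists hl hcub hc e (hmem e he)
  by_cases hE : IsEmpty G.V
  · have : unc G c = ∅ := by
      rw [Finset.eq_empty_iff_forall_notMem]
      intro e he
      obtain ⟨u, _⟩ := this e he
      exact hE.elim u
    simp [this]
  rw [not_isEmpty_iff] at hE
  by_cases hE2 : IsEmpty G.E
  · have : unc G c = ∅ := by
      rw [Finset.eq_empty_iff_forall_notMem]
      intro e he
      exact hE2.elim e
    simp [this]
  rw [not_isEmpty_iff] at hE2
  choose! u v x g b h using this
  let T : G.E → Finset G.V := fun e => {u e, v e, x e}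
  have hT : ∀ e ∈ unc G c, (T e).card = 3 := by
    intro e he
    have h1 := rot_ne hl (h e he)
    rw [(h e he).he, Sym2.mem_iff, not_or] at h1
    apply Finset.card_eq_three.2
    refine ⟨_, _, _, ?_, Ne.symm h1.1, Ne.symm h1.2, rfl⟩
    intro huv
    exact hl e (by rw [IsLoop, (h e he).he, huv]; simp)
  have hTm : ∀ e ∈ unc G c, ∀ y ∈ T e, y ∈ G.ends e ∨ y = x e := by
    intro e he y hy
    simp only [T, Finset.mem_insert, Finset.mem_singleton] at hy
    rw [(h e he).he, Sym2.mem_iff]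
    tauto
  have hd : ∀ e ∈ unc G c, ∀ f ∈ unc G c, e ≠ f → Disjoint (T e) (T f) := by
    intro e he f hf hef
    rw [Finset.disjoint_left]
    intro y hy hy'
    rcases hTm e he y hy with h1 | h1 <;> rcases hTm f hf y hy' with h2 | h2
    · exact unc_matching hl hcub hc hef (hmem e he) (hmem f hf) h1 h2
    · subst h2
      exact rot_free hl hcub hc (h f hf) (hmem e he) h1
    · subst h1
      exact rot_free hl hcub hc (h e he) (hmem f hf) h2
    · have h3 := h e he
      rw [← h1, h2] at h3
      exact hef (rot_inj hl hcub hc h3 (h f hf))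
  have h1 := Finset.card_biUnion (s := unc G c) (t := T) (fun e he f hf hef => hd e he f hf hef)
  rw [Finset.sum_congr rfl hT, Finset.sum_const, smul_eq_mul] at h1
  have h2 := Finset.card_le_univ ((unc G c).biUnion T)
  omega

lemma edge_count (hl : G.Loopless) (hcub : ∀ v : G.V, G.deg v = 3) :
    2 * Fintype.card G.E = 3 * Fintype.card G.V := by
  have h1 : ∑ v : G.V, (inc G v).card = ∑ e : G.E, 2 := by
    simp only [inc, Finset.card_filter]
    rw [Finset.sum_comm]
    refine Finset.sum_congr rfl fun e _ => ?_
    obtain ⟨u, v, he⟩ : ∃ u v, G.ends e = s(u, v) := by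
      induction h : G.ends e with
      | _ x y => exact ⟨x, y, rfl⟩
    have huv : u ≠ v := by
      rintro rfl; exact hl e (by rw [IsLoop, he]; simp)
    rw [← Finset.card_filter, ← Finset.card_pair huv]
    congr 1
    ext y
    simp [he]
  rw [Finset.sum_congr rfl (fun v _ => inc_card hl hcub v)] at h1
  simp only [Finset.sum_const, smul_eq_mul, Finset.card_univ] at h1
  omega

lemma nu3_ge_col (hl : G.Loopless) {c : G.E → Option (Fin 3)} (hc : PropCol G c) :
    Fintype.card G.E ≤ G.nu3 + (unc G c).card := by
  let H : Fin 3 → Finset G.E := fun a => Finset.univ.filter (fun e => c e = some a)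
  have hm : ∀ a, G.IsMatching (H a) := by
    intro a
    refine ⟨fun e _ => hl e, ?_⟩
    intro e he f hf hef v hve hvf
    simp only [H, Finset.mem_filter, Finset.mem_univ, true_and] at he hf
    have := hc e f hef v hve hvf (by rw [he, hf])
    rw [he] at this
    cases this
  have hd : ∀ a b, a ≠ b → Disjoint (H a) (H b) := by
    intro a b hab
    rw [Finset.disjoint_left]
    intro e he hf
    simp only [H, Finset.mem_filter, Finset.mem_univ, true_and] at he hf
    rw [he] at hf
    exact hab (Option.some.inj hf)
  have hle : (H 0).card + (H 1).card + (H 2).card ≤ G.nu3 := by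
    unfold nu3
    apply le_csSup
    · refine ⟨3 * Fintype.card G.E, ?_⟩
      rintro m ⟨A, B, C, _, _, _, _, _, _, rfl⟩
      have h1 := Finset.card_le_univ A
      have h2 := Finset.card_le_univ B
      have h3 := Finset.card_le_univ C
      omega
    · exact ⟨H 0, H 1, H 2, hm 0, hm 1, hm 2, hd _ _ (by decide), hd _ _ (by decide),
        hd _ _ (by decide), rfl⟩
  have hcov : (Finset.univ : Finset G.E) ⊆ ((H 0 ∪ H 1) ∪ H 2) ∪ unc G c := by
    intro e _
    simp only [H, unc, Finset.mem_union, Finset.mem_filter, Finset.mem_univ, true_and]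
    cases c e with
    | none => simp
    | some a => fin_cases a <;> simp
  have h1 := Finset.card_le_card hcov
  have h2 := Finset.card_union_le ((H 0 ∪ H 1) ∪ H 2) (unc G c)
  have h3 := Finset.card_union_le (H 0 ∪ H 1) (H 2)
  have h4 := Finset.card_union_le (H 0) (H 1)
  rw [Finset.card_univ] at h1
  omega

lemma opt_exists (G : Multigraph) : ∃ c, OptCol G c := by
  have hne : {c : G.E → Option (Fin 3) | PropCol G c}.Nonempty :=
    ⟨fun _ => none, fun _ _ _ _ _ _ _ => rfl⟩
  obtain ⟨c, hc, hmin⟩ := Set.exists_min_image _ (fun c => (unc G c).card) (Set.toFinite _) hne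
  exact ⟨c, hc, hmin⟩

end Helpers

/-- Every cubic graph G satisfies ν₃(G) ≥ (7/6)·|V(G)|. -/
theorem cubic_nu3_ge
    (G : Multigraph) (hloopless : G.Loopless) (hcubic : ∀ v : G.V, G.deg v = 3) :
    6 * G.nu3 ≥ 7 * Fintype.card G.V := by
  obtain ⟨c, hc⟩ := opt_exists G
  have h1 := three_unc hloopless hcubic hc
  have h2 := edge_count hloopless hcubic
  have h3 := nu3_ge_col hloopless hc.1
  omega

end Multigraph
end
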